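/- Probabilistic tail bound: in the stated setup, let Ω ∈ ℝ^{n×(k+ρ)} have independent standard Gaussian N(0,1) entries with ρ ≥ 2, assume γ_k < 1, fix 0 < δ < 1, and set C_d = (e·√(k+ρ)/(ρ+1))·(2/δ)^{1/(ρ+1)}·(√(n−k) + √(k+ρ) + √(2·log(2/δ))). Then each of the following inequalities holds with probability at least 1−δ for j = 1,…,k: sin θ_j ≤ γ_j^{2q+1}·C_d / √(1 + γ_j^{4q+2}·C_d²) and sin ν_j ≤ γ_j^{2q+2}·C_d / √(1 + γ_j^{4q+4}·C_d²), where θ_j (resp. ν_j) are the canonical angles between the column spaces of U_k and Û (resp. V_k and V̂), arranged increasingly. -/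

import Mathlib

open scoped ENNReal
open Matrix

/-- The `j`-th largest singular value (0-indexed) of a complex matrix,
obtained as the decreasingly sorted square roots of the eigenvalues of `Mᴴ * M`. -/
noncomputable def sval {m n : ℕ} (M : Matrix (Fin m) (Fin n) ℂ) (j : ℕ) : ℝ :=
  (List.insertionSort (· ≥ ·)
    ((List.ofFn (Matrix.isHermitian_conjTranspose_mul_self M).eigenvalues).map Real.sqrt)).getD j 0

/-- The Schatten-`p` norm (`p = ∞` gives the spectral norm). -/
noncomputable def schatten {m n : ℕ} (p : ℝ≥0∞) (M : Matrix (Fin m) (Fin n) ℂ) : ℝ :=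
  if p = ⊤ then sval M 0
  else (∑ j ∈ Finset.range n, sval M j ^ p.toReal) ^ (1 / p.toReal)

/-- Moore–Penrose pseudoinverse of a full-row-rank matrix. -/
noncomputable def rpinv {a b : ℕ} (M : Matrix (Fin a) (Fin b) ℂ) : Matrix (Fin b) (Fin a) ℂ :=
  Mᴴ * (M * Mᴴ)⁻¹

/-- Rectangular diagonal matrix with entries `σ (off), σ (off+1), …` on the diagonal. -/
noncomputable def diagRect (σ : ℕ → ℝ) (off a b : ℕ) : Matrix (Fin a) (Fin b) ℂ :=
  Matrix.of fun i j => if (i : ℕ) = (j : ℕ) then (σ (off + (i : ℕ)) : ℂ) else 0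

/-- The first `b` columns of a matrix with `b + c` columns. -/
def colsL {a b c : ℕ} (M : Matrix (Fin a) (Fin (b + c)) ℂ) : Matrix (Fin a) (Fin b) ℂ :=
  M.submatrix id (Fin.castAdd c)

/-- The last `c` columns of a matrix with `b + c` columns. -/
def colsR {a b c : ℕ} (M : Matrix (Fin a) (Fin (b + c)) ℂ) : Matrix (Fin a) (Fin c) ℂ :=
  M.submatrix id (Fin.natAdd b)

/-- The constant
`C_d = (e·√(k+ρ)/(ρ+1))·(2/δ)^{1/(ρ+1)}·(√(n−k) + √(k+ρ) + √(2·log(2/δ)))`. -/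
noncomputable def Cd (k ρ nk : ℕ) (δ : ℝ) : ℝ :=
  Real.exp 1 * Real.sqrt ((k : ℝ) + ρ) / ((ρ : ℝ) + 1) *
    (2 / δ) ^ ((1 : ℝ) / ((ρ : ℝ) + 1)) *
    (Real.sqrt (nk : ℝ) + Real.sqrt ((k : ℝ) + ρ) + Real.sqrt (2 * Real.log (2 / δ)))

open MeasureTheory ProbabilityTheory

/-- The standard Gaussian measure on `Fin n → ℝ`. -/
noncomputable def stdG (n : ℕ) : Measure (Fin n → ℝ) :=
  Measure.pi fun _ => gaussianReal 0 1

instance (n : ℕ) : IsProbabilityMeasure (stdG n) := by unfold stdG; infer_instance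

theorem measurePreserving_mulVec_stdG {n : ℕ} (O : Matrix (Fin n) (Fin n) ℝ)
    (hO : O * Oᵀ = 1) : MeasurePreserving (fun g => O *ᵥ g) (stdG n) (stdG n) := by
  refine ⟨by fun_prop, ?_⟩
  have hO' : Oᵀ * O = 1 := mul_eq_one_comm.mp hO
  have hU : O ∈ unitary (Matrix (Fin n) (Fin n) ℝ) := by
    rw [Unitary.mem_iff]
    exact ⟨by simpa [star_eq_conjTranspose] using hO', by simpa [star_eq_conjTranspose] using hO⟩
  let f : EuclideanSpace ℝ (Fin n) ≃ₗᵢ[ℝ] EuclideanSpace ℝ (Fin n) :=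
    { toLinearEquiv := LinearEquiv.ofLinearMap (Matrix.toEuclideanLin O) (Matrix.toEuclideanLin Oᵀ)
        (by
          ext1 x
          simp [Matrix.toEuclideanLin, hO, Matrix.toLpLin_apply])
        (by
          ext1 x
          simp [Matrix.toEuclideanLin, hO', Matrix.toLpLin_apply])
      norm_map' := fun x => by
        simp only [LinearEquiv.coe_ofLinearMap]
        rw [← sq_eq_sq₀ (norm_nonneg _) (norm_nonneg _), EuclideanSpace.real_norm_sq_eq,
          EuclideanSpace.real_norm_sq_eq]
        have h : ∀ y : Fin n → ℝ, ∑ i, y i ^ 2 = y ⬝ᵥ y := fun y => by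
          simp [dotProduct, sq]
        rw [h, h]
        simp only [Matrix.toLpLin_apply, Matrix.toEuclideanLin]
        rw [Matrix.dotProduct_mulVec, Matrix.vecMul_mulVec, ← Matrix.mulVec_transpose]
        simp [hO'] }
  have h1 := stdGaussian_map f
  rw [← map_pi_eq_stdGaussian, Measure.map_map (by fun_prop) (by fun_prop)] at h1
  have h2 := congrArg (Measure.map (WithLp.ofLp (p := 2))) h1
  rw [Measure.map_map (by fun_prop) (by fun_prop),
    Measure.map_map (by fun_prop) (by fun_prop)] at h2
  have e1 : ((WithLp.ofLp (p := 2)) ∘ f ∘ (WithLp.toLp 2) : (Fin n → ℝ) → (Fin n → ℝ))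
      = fun g => O *ᵥ g := by
    funext g
    simp [f, Matrix.toEuclideanLin]
  have e2 : ((WithLp.ofLp (p := 2)) ∘ (WithLp.toLp 2) : (Fin n → ℝ) → (Fin n → ℝ)) = id := rfl
  rw [e1, e2, Measure.map_id] at h2
  exact h2

theorem integral_gaussianReal_tilt {l : ℝ} (hl : 0 < l) (f : ℝ → ℝ) :
    ∫ x, f x * Real.exp (-((l - 1) * x ^ 2 / 2)) ∂(gaussianReal 0 1) =
      l ^ (-(1 / 2) : ℝ) * ∫ x, f x ∂(gaussianReal 0 (l⁻¹).toNNReal) := by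
  have hv : (l⁻¹).toNNReal ≠ 0 := by
    simpa using hl
  rw [integral_gaussianReal_eq_integral_smul one_ne_zero,
    integral_gaussianReal_eq_integral_smul hv, ← integral_const_mul]
  congr 1
  funext x
  simp only [gaussianPDFReal, smul_eq_mul, sub_zero, NNReal.coe_one, mul_one,
    Real.coe_toNNReal _ (inv_pos.mpr hl).le]
  have h1 : (√(2 * Real.pi * l⁻¹))⁻¹ = (√(2 * Real.pi))⁻¹ * l ^ ((1 / 2) : ℝ) := by
    rw [Real.sqrt_mul (by positivity), Real.sqrt_inv, mul_inv, inv_inv, Real.sqrt_eq_rpow l]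
  rw [h1, Real.rpow_neg hl.le]
  have h2 : Real.exp (-x ^ 2 / 2) * Real.exp (-((l - 1) * x ^ 2 / 2))
      = Real.exp (-x ^ 2 / (2 * l⁻¹)) := by
    rw [← Real.exp_add]
    congr 1
    field_simp
    ring
  have h3 : l ^ ((1 / 2) : ℝ) ≠ 0 := by positivity
  rw [← h2]
  field_simp

theorem integral_sq_gaussianReal (v : NNReal) : ∫ x, x ^ 2 ∂(gaussianReal 0 v) = v := by
  have := variance_eq_integral (μ := gaussianReal 0 v) (X := id) (by fun_prop)
  simp only [variance_id_gaussianReal, integral_id_gaussianReal, id, sub_zero] at this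
  exact this.symm

theorem integral_exp_diag_stdG {n : ℕ} {l : Fin n → ℝ} (hl : ∀ i, 0 < l i) :
    ∫ g, Real.exp (-((∑ i, (l i - 1) * g i ^ 2) / 2)) ∂(stdG n) =
      (∏ i, l i) ^ (-(1 / 2) : ℝ) := by
  have h : ∀ g : Fin n → ℝ, Real.exp (-((∑ i, (l i - 1) * g i ^ 2) / 2)) =
      ∏ i, Real.exp (-((l i - 1) * g i ^ 2 / 2)) := fun g => by
    rw [← Real.exp_sum, Finset.sum_neg_distrib, Finset.sum_div]
  simp_rw [h]
  rw [stdG, integral_fintype_prod_eq_prod (fun i x => Real.exp (-((l i - 1) * x ^ 2 / 2))),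
    ← Real.finsetProd_rpow _ _ (fun i _ => (hl i).le)]
  refine Finset.prod_congr rfl fun i _ => ?_
  simpa using integral_gaussianReal_tilt (hl i) (fun _ => 1)

theorem integral_mul_exp_diag_stdG {n : ℕ} {l : Fin n → ℝ} (hl : ∀ i, 0 < l i) (a b : Fin n) :
    ∫ g, g a * g b * Real.exp (-((∑ i, (l i - 1) * g i ^ 2) / 2)) ∂(stdG n) =
      (∏ i, l i) ^ (-(1 / 2) : ℝ) * (if a = b then (l a)⁻¹ else 0) := by
  have h : ∀ g : Fin n → ℝ, g a * g b * Real.exp (-((∑ i, (l i - 1) * g i ^ 2) / 2)) =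
      ∏ i, ((if i = a then g i else 1) * (if i = b then g i else 1)) *
        Real.exp (-((l i - 1) * g i ^ 2 / 2)) := fun g => by
    rw [Finset.prod_mul_distrib, Finset.prod_mul_distrib, Finset.prod_ite_eq' Finset.univ a,
      Finset.prod_ite_eq' Finset.univ b, ← Real.exp_sum, Finset.sum_neg_distrib, Finset.sum_div]
    simp
  simp_rw [h]
  rw [stdG, integral_fintype_prod_eq_prod (fun i x =>
    ((if i = a then x else 1) * (if i = b then x else 1)) *
      Real.exp (-((l i - 1) * x ^ 2 / 2))), ← Real.finsetProd_rpow _ _ (fun i _ => (hl i).le)]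
  simp_rw [fun i => integral_gaussianReal_tilt (hl i) (fun x =>
    ((if i = a then x else 1) * (if i = b then x else 1)))]
  rw [Finset.prod_mul_distrib]
  congr 1
  by_cases hab : a = b
  · subst hab
    rw [Finset.prod_eq_single a]
    · have := integral_sq_gaussianReal ((l a)⁻¹).toNNReal
      rw [Real.coe_toNNReal _ (inv_pos.mpr (hl a)).le] at this
      simpa [sq] using this
    · intro i _ hi
      simp [hi]
    · simp
  · rw [if_neg hab]
    refine Finset.prod_eq_zero (Finset.mem_univ a) ?_
    simp [hab]

/-- The spectral theorem in the form `A = U D Uᴴ`. -/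
theorem exists_unitary_diagonal {𝕜 : Type*} [RCLike 𝕜] {n : ℕ} {A : Matrix (Fin n) (Fin n) 𝕜}
    (hA : A.IsHermitian) : ∃ (U : Matrix (Fin n) (Fin n) 𝕜) (l : Fin n → ℝ),
      Uᴴ * U = 1 ∧ U * Uᴴ = 1 ∧ A = U * diagonal (fun i => (l i : 𝕜)) * Uᴴ := by
  refine ⟨hA.eigenvectorUnitary, hA.eigenvalues, ?_, ?_, ?_⟩
  · simpa [star_eq_conjTranspose] using Unitary.coe_star_mul_self hA.eigenvectorUnitary
  · simpa [star_eq_conjTranspose] using Unitary.coe_mul_star_self hA.eigenvectorUnitary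
  · conv_lhs => rw [hA.spectral_theorem]
    rw [Unitary.conjStarAlgAut_apply]
    rfl

theorem exists_orthogonal_diagonal_pos {n : ℕ} {P : Matrix (Fin n) (Fin n) ℝ} (hP : P.PosDef) :
    ∃ (O : Matrix (Fin n) (Fin n) ℝ) (l : Fin n → ℝ), (∀ i, 0 < l i) ∧
      Oᵀ * O = 1 ∧ O * Oᵀ = 1 ∧ P = O * diagonal l * Oᵀ := by
  obtain ⟨O, l, h1, h2, h3⟩ := exists_unitary_diagonal hP.1
  rw [conjTranspose_eq_transpose_of_trivial] at h1 h2 h3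
  refine ⟨O, l, fun i => ?_, h1, h2, h3⟩
  have h4 : Oᴴ * P * O = diagonal l := by
    replace h3 : P = O * diagonal l * Oᵀ := h3
    rw [h3, conjTranspose_eq_transpose_of_trivial,
      show Oᵀ * (O * diagonal l * Oᵀ) * O
        = (Oᵀ * O) * diagonal l * (Oᵀ * O) by simp only [Matrix.mul_assoc], h1]
    simp
  have h5 : (Oᴴ * P * O).PosDef := by
    refine hP.conjTranspose_mul_mul_same ?_
    intro x y hxy
    have := congrArg (fun z => Oᵀ *ᵥ z) hxy
    simpa [h1] using this
  rw [h4] at h5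
  exact (Matrix.posDef_diagonal_iff.mp h5) i

theorem quadForm_comp_diag {n : ℕ} {P O : Matrix (Fin n) (Fin n) ℝ} {l : Fin n → ℝ}
    (h1 : Oᵀ * O = 1) (h : P = O * diagonal l * Oᵀ) (g : Fin n → ℝ) :
    (O *ᵥ g) ⬝ᵥ (P *ᵥ (O *ᵥ g)) - (O *ᵥ g) ⬝ᵥ (O *ᵥ g) = ∑ i, (l i - 1) * g i ^ 2 := by
  have e1 : (O *ᵥ g) ⬝ᵥ (O *ᵥ g) = ∑ i, g i ^ 2 := by
    rw [Matrix.dotProduct_mulVec, Matrix.vecMul_mulVec, ← Matrix.mulVec_transpose]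
    simp [h1, dotProduct, sq]
  have e2 : (O *ᵥ g) ⬝ᵥ (P *ᵥ (O *ᵥ g)) = ∑ i, l i * g i ^ 2 := by
    have : P *ᵥ (O *ᵥ g) = O *ᵥ (diagonal l *ᵥ g) := by
      rw [h, Matrix.mulVec_mulVec, Matrix.mulVec_mulVec, Matrix.mul_assoc, h1, Matrix.mul_one]
    rw [this, Matrix.dotProduct_mulVec, Matrix.vecMul_mulVec, h1]
    simp [dotProduct, Matrix.mulVec_diagonal, sq]
    refine Finset.sum_congr rfl fun i _ => by ring
  rw [e1, e2, ← Finset.sum_sub_distrib]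
  refine Finset.sum_congr rfl fun i _ => by ring

theorem integral_exp_quadForm_stdG {n : ℕ} {P : Matrix (Fin n) (Fin n) ℝ} (hP : P.PosDef) :
    ∫ g, Real.exp (-((g ⬝ᵥ (P *ᵥ g) - g ⬝ᵥ g) / 2)) ∂(stdG n) = P.det ^ (-(1 / 2) : ℝ) := by
  obtain ⟨O, l, hl, h1, h2, h3⟩ := exists_orthogonal_diagonal_pos hP
  have hm := measurePreserving_mulVec_stdG O h2
  have hd : P.det = ∏ i, l i := by
    rw [h3, det_mul_right_comm, h2]
    simp
  rw [← hm.map_eq, integral_map hm.measurable.aemeasurable (by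
    refine Continuous.aestronglyMeasurable ?_
    fun_prop)]
  simp_rw [quadForm_comp_diag h1 h3]
  rw [hd, integral_exp_diag_stdG hl]

theorem memLp_eval_stdG {n : ℕ} (a : Fin n) : MemLp (fun g : Fin n → ℝ => g a) 2 (stdG n) := by
  have h : MeasurePreserving (Function.eval a) (stdG n) (gaussianReal 0 1) :=
    measurePreserving_eval (fun _ : Fin n => gaussianReal 0 1) a
  exact (memLp_id_gaussianReal (μ := 0) (v := 1) 2).comp_measurePreserving h

theorem integrable_mul_stdG {n : ℕ} (a b : Fin n) :
    Integrable (fun g : Fin n → ℝ => g a * g b) (stdG n) :=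
  (memLp_eval_stdG a).integrable_mul (memLp_eval_stdG b)

theorem integrable_mul_bounded_stdG {n : ℕ} (a b : Fin n) {f : (Fin n → ℝ) → ℝ}
    (hf : Continuous f) (h0 : ∀ g, 0 ≤ f g) (h1 : ∀ g, f g ≤ 1) :
    Integrable (fun g : Fin n → ℝ => g a * g b * f g) (stdG n) := by
  refine (integrable_mul_stdG a b).mono (by fun_prop) (ae_of_all _ fun g => ?_)
  rw [norm_mul]
  refine mul_le_of_le_one_right (norm_nonneg _) ?_
  rw [Real.norm_of_nonneg (h0 g)]
  exact h1 g

theorem integral_mul_exp_quadForm_stdG {n : ℕ} {P : Matrix (Fin n) (Fin n) ℝ} (hP : P.PosDef)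
    (hP1 : ∀ g, g ⬝ᵥ g ≤ g ⬝ᵥ (P *ᵥ g)) (a b : Fin n) :
    ∫ g, g a * g b * Real.exp (-((g ⬝ᵥ (P *ᵥ g) - g ⬝ᵥ g) / 2)) ∂(stdG n) =
      P.det ^ (-(1 / 2) : ℝ) * P⁻¹ a b := by
  obtain ⟨O, l, hl, h1, h2, h3⟩ := exists_orthogonal_diagonal_pos hP
  have hm := measurePreserving_mulVec_stdG O h2
  have hd : P.det = ∏ i, l i := by
    rw [h3, det_mul_right_comm, h2]
    simp
  have hinv : P⁻¹ = O * diagonal (fun i => (l i)⁻¹) * Oᵀ := by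
    refine Matrix.inv_eq_right_inv ?_
    rw [h3, show O * diagonal l * Oᵀ * (O * diagonal (fun i => (l i)⁻¹) * Oᵀ)
      = O * diagonal l * (Oᵀ * O) * diagonal (fun i => (l i)⁻¹) * Oᵀ by
        simp only [Matrix.mul_assoc], h1, Matrix.mul_one, Matrix.mul_assoc O, diagonal_mul_diagonal]
    have : (fun i => l i * (l i)⁻¹) = fun _ => 1 := by
      funext i
      exact mul_inv_cancel₀ (hl i).ne'
    rw [this, diagonal_one, Matrix.mul_one, h2]
  rw [← hm.map_eq, integral_map hm.measurable.aemeasurable (by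
    refine Continuous.aestronglyMeasurable ?_
    fun_prop)]
  have hnn : ∀ g : Fin n → ℝ, 0 ≤ ∑ i, (l i - 1) * g i ^ 2 := fun g => by
    rw [← quadForm_comp_diag h1 h3]
    linarith [hP1 (O *ᵥ g)]
  simp_rw [quadForm_comp_diag h1 h3]
  have e : ∀ g : Fin n → ℝ, (O *ᵥ g) a * (O *ᵥ g) b *
      Real.exp (-((∑ i, (l i - 1) * g i ^ 2) / 2)) =
      ∑ i, ∑ j, O a i * O b j * (g i * g j * Real.exp (-((∑ i, (l i - 1) * g i ^ 2) / 2))) := by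
    intro g
    simp only [mulVec, dotProduct]
    rw [Finset.sum_mul_sum, Finset.sum_mul]
    refine Finset.sum_congr rfl fun i _ => ?_
    rw [Finset.sum_mul]
    refine Finset.sum_congr rfl fun j _ => by ring
  have hInt : ∀ i j, Integrable (fun g : Fin n → ℝ => O a i * O b j *
      (g i * g j * Real.exp (-((∑ i, (l i - 1) * g i ^ 2) / 2)))) (stdG n) := fun i j =>
    (integrable_mul_bounded_stdG i j (by fun_prop) (fun _ => (Real.exp_pos _).le) (fun g => by
      rw [Real.exp_le_one_iff]
      linarith [hnn g])).const_mul _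
  simp_rw [e]
  rw [integral_finsetSum _ fun i _ => integrable_finsetSum _ fun j _ => hInt i j]
  simp_rw [fun i => integral_finsetSum Finset.univ fun j _ => hInt i j, integral_const_mul,
    integral_mul_exp_diag_stdG hl]
  rw [hinv, hd, Matrix.mul_apply, Finset.mul_sum]
  refine Finset.sum_congr rfl fun i _ => ?_
  rw [Finset.sum_eq_single i]
  · simp [Matrix.mul_diagonal]
    ring
  · intro j _ hj
    simp [hj.symm]
  · simp

open Classical in
theorem det_sum_vecMulVec_star {k m : ℕ} (X : Fin m → Fin k → ℂ) :
    (Matrix.of fun a b => ∑ j, X j a * star (X j b)).det =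
      ∑ f ∈ Finset.univ.filter (fun f : Fin k → Fin m => Function.Injective f),
        ∑ τ : Equiv.Perm (Fin k), ((Equiv.Perm.sign τ : ℤ) : ℂ) *
          ∏ i, (X (f i) (τ i) * star (X (f i) i)) := by
  have h1 : (Matrix.of fun a b => ∑ j, X j a * star (X j b)).det =
      ∑ f : Fin k → Fin m, ∑ τ : Equiv.Perm (Fin k), ((Equiv.Perm.sign τ : ℤ) : ℂ) *
          ∏ i, (X (f i) (τ i) * star (X (f i) i)) := by
    rw [det_apply', Finset.sum_comm]
    refine Finset.sum_congr rfl fun τ _ => ?_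
    simp only [of_apply]
    rw [Finset.prod_univ_sum, Fintype.piFinset_univ, Finset.mul_sum]
  rw [h1, Finset.sum_filter_of_ne]
  intro f _ hne
  by_contra hf
  apply hne
  have h2 : ∑ τ : Equiv.Perm (Fin k), ((Equiv.Perm.sign τ : ℤ) : ℂ) *
          ∏ i, (X (f i) (τ i) * star (X (f i) i)) =
      (∏ i, star (X (f i) i)) * (Matrix.of fun a i => X (f i) a).det := by
    rw [det_apply', Finset.mul_sum]
    refine Finset.sum_congr rfl fun τ _ => ?_
    rw [Finset.prod_mul_distrib]
    simp only [of_apply]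
    ring
  rw [h2]
  simp only [Function.Injective, not_forall] at hf
  obtain ⟨i, j, hij, hne'⟩ := hf
  rw [det_zero_of_column_eq hne' (fun a => by simp [hij]), mul_zero]

theorem prod_ite_injective {k m : ℕ} {f : Fin k → Fin m} (hf : Function.Injective f)
    (A : Fin k → ℂ) (Z : ℂ) (I : Fin m → ℂ) (h1 : ∀ i, I (f i) = A i)
    (h2 : ∀ j, j ∉ Set.range f → I j = Z) : ∏ j, I j = (∏ i, A i) * Z ^ (m - k) := by
  classical
  rw [← Finset.prod_mul_prod_compl (Finset.univ.image f), Finset.prod_image (fun _ _ _ _ h => hf h)]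
  congr 1
  · exact Finset.prod_congr rfl fun i _ => h1 i
  · rw [Finset.prod_congr rfl (g := fun _ => Z), Finset.prod_const, Finset.card_compl,
      Finset.card_image_of_injective _ hf]
    · simp
    · intro j hj
      refine h2 j ?_
      simpa using hj

theorem integrable_and_integral_prod_injective {E : Type*} [MeasurableSpace E] {ν : Measure E}
    [IsProbabilityMeasure ν] {k m : ℕ} {f : Fin k → Fin m} (hf : Function.Injective f)
    {y : Fin k → E → ℂ} {e : E → ℂ} (he : Integrable e ν)
    (hy : ∀ i, Integrable (fun g => y i g * e g) ν) :
    Integrable (fun H : Fin m → E => (∏ i, y i (H (f i))) * ∏ j, e (H j))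
      (Measure.pi fun _ => ν) ∧
    ∫ H : Fin m → E, (∏ i, y i (H (f i))) * ∏ j, e (H j) ∂(Measure.pi fun _ => ν) =
      (∏ i, ∫ g, y i g * e g ∂ν) * (∫ g, e g ∂ν) ^ (m - k) := by
  classical
  set h : Fin m → E → ℂ := fun j g => (∏ i ∈ Finset.univ.filter (fun i => f i = j), y i g) * e g
    with hh
  have e1 : ∀ H : Fin m → E, (∏ i, y i (H (f i))) * ∏ j, e (H j) = ∏ j, h j (H j) := fun H => by
    rw [Finset.prod_mul_distrib]
    congr 1
    rw [← Finset.prod_fiberwise Finset.univ f]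
    refine Finset.prod_congr rfl fun j _ => Finset.prod_congr rfl fun i hi => ?_
    simp only [Finset.mem_filter] at hi
    rw [hi.2]
  have hfi : ∀ i, h (f i) = fun g => y i g * e g := fun i => by
    funext g
    simp only [hh]
    have : Finset.univ.filter (fun i' => f i' = f i) = {i} := by
      ext i'
      simp [hf.eq_iff]
    rw [this, Finset.prod_singleton]
  have hfj : ∀ j, j ∉ Set.range f → h j = e := fun j hj => by
    funext g
    simp only [hh]
    rw [Finset.filter_false_of_mem, Finset.prod_empty, one_mul]
    exact fun i _ hi => hj ⟨i, hi⟩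
  simp_rw [e1]
  constructor
  · refine Integrable.fintype_prod fun j => ?_
    by_cases hj : j ∈ Set.range f
    · obtain ⟨i, rfl⟩ := hj
      rw [hfi]
      exact hy i
    · rw [hfj j hj]
      exact he
  · rw [integral_fintype_prod_eq_prod]
    refine prod_ite_injective hf _ _ _ (fun i => by rw [hfi]) (fun j hj => by rw [hfj j hj])

/-- Expected determinant of a tilted sum of independent rank one matrices. -/
theorem integral_det_sum_vecMulVec {E : Type*} [MeasurableSpace E] {ν : Measure E}
    [IsProbabilityMeasure ν] {k m : ℕ} {x : E → Fin k → ℂ} {e : E → ℂ} (he : Integrable e ν)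
    (hx : ∀ a b, Integrable (fun g => x g a * star (x g b) * e g) ν) :
    Integrable (fun H : Fin m → E =>
      (Matrix.of fun a b => ∑ j, x (H j) a * star (x (H j) b)).det * ∏ j, e (H j))
      (Measure.pi fun _ => ν) ∧
    ∫ H : Fin m → E, (Matrix.of fun a b => ∑ j, x (H j) a * star (x (H j) b)).det *
        ∏ j, e (H j) ∂(Measure.pi fun _ => ν) =
      m.descFactorial k * ((∫ g, e g ∂ν) ^ (m - k) *
        (Matrix.of fun a b => ∫ g, x g a * star (x g b) * e g ∂ν).det) := by
  classical
  have key := fun (f : Fin k → Fin m) (hf : Function.Injective f) (τ : Equiv.Perm (Fin k)) =>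
    integrable_and_integral_prod_injective hf he (fun i => hx (τ i) i)
  simp_rw [fun H : Fin m → E => det_sum_vecMulVec_star (fun j => x (H j)), Finset.sum_mul, mul_assoc]
  have hInt : ∀ f ∈ Finset.univ.filter (fun f : Fin k → Fin m => Function.Injective f),
      ∀ τ ∈ (Finset.univ : Finset (Equiv.Perm (Fin k))), Integrable (fun H : Fin m → E =>
        ((Equiv.Perm.sign τ : ℤ) : ℂ) * ((∏ i, (x (H (f i)) (τ i) * star (x (H (f i)) i))) *
          ∏ j, e (H j))) (Measure.pi fun _ => ν) := fun f hf τ _ =>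
    (key f (Finset.mem_filter.mp hf).2 τ).1.const_mul _
  constructor
  · exact integrable_finsetSum _ fun f hf => integrable_finsetSum _ fun τ hτ => hInt f hf τ hτ
  · rw [integral_finsetSum _ fun f hf => integrable_finsetSum _ fun τ hτ => hInt f hf τ hτ]
    rw [Finset.sum_congr rfl (g := fun _ => (∫ g, e g ∂ν) ^ (m - k) *
        (Matrix.of fun a b => ∫ g, x g a * star (x g b) * e g ∂ν).det)]
    · rw [Finset.sum_const, nsmul_eq_mul]
      congr 2
      · rw [← Fintype.card_subtype, Fintype.card_congr (Equiv.subtypeInjectiveEquivEmbedding _ _),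
          Fintype.card_embedding_eq]
        simp
      · simp only [mul_assoc]
    · intro f hf
      rw [integral_finsetSum _ (hInt f hf), det_apply', Finset.mul_sum]
      refine Finset.sum_congr rfl fun τ _ => ?_
      rw [integral_const_mul, (key f (Finset.mem_filter.mp hf).2 τ).2]
      simp only [of_apply, mul_assoc]
      ring

/-- `R(c) = ‖c‖²`. -/
noncomputable def sqn {k : ℕ} (c : Fin k → ℂ) : ℝ := ∑ i, ‖c i‖ ^ 2

/-- `D(c) = sᵀ s` with `s = V c`. -/
def quadD {n k : ℕ} (V : Matrix (Fin n) (Fin k) ℂ) (c : Fin k → ℂ) : ℂ := (V *ᵥ c) ⬝ᵥ (V *ᵥ c)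

/-- `V* s̄` with `s = V c`. -/
def antiK {n k : ℕ} (V : Matrix (Fin n) (Fin k) ℂ) (c : Fin k → ℂ) : Fin k → ℂ :=
  Vᴴ *ᵥ star (V *ᵥ c)

/-- The image `V* g` of a real vector. -/
def colX {n k : ℕ} (V : Matrix (Fin n) (Fin k) ℂ) (g : Fin n → ℝ) : Fin k → ℂ :=
  Vᴴ *ᵥ fun i => (g i : ℂ)

/-- The compressed Wishart matrix `V* G Gᵀ V`, the rows of `H` being the columns of `G`. -/
def wish {n k m : ℕ} (V : Matrix (Fin n) (Fin k) ℂ) (H : Fin m → Fin n → ℝ) :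
    Matrix (Fin k) (Fin k) ℂ :=
  Matrix.of fun a b => ∑ j, colX V (H j) a * star (colX V (H j) b)

theorem star_dotProduct_self_eq_sqn {k : ℕ} (c : Fin k → ℂ) : star c ⬝ᵥ c = (sqn c : ℂ) := by
  simp only [sqn, dotProduct, Pi.star_apply, Complex.ofReal_sum, Complex.ofReal_pow]
  refine Finset.sum_congr rfl fun i _ => ?_
  rw [← Complex.conj_mul']
  rfl

theorem sqn_nonneg {k : ℕ} (c : Fin k → ℂ) : 0 ≤ sqn c :=
  Finset.sum_nonneg fun _ _ => by positivity

theorem sqn_mulVec {n k : ℕ} {V : Matrix (Fin n) (Fin k) ℂ} (hV : Vᴴ * V = 1) (c : Fin k → ℂ) :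
    sqn (V *ᵥ c) = sqn c := by
  have h : ((sqn (V *ᵥ c) : ℝ) : ℂ) = sqn c := by
    rw [← star_dotProduct_self_eq_sqn, ← star_dotProduct_self_eq_sqn, star_mulVec,
      ← dotProduct_mulVec, mulVec_mulVec, hV, one_mulVec]
  exact_mod_cast h

/-- The `n × 2` matrix with columns `s` and `s̄`. -/
def pairM {n : ℕ} (s : Fin n → ℂ) : Matrix (Fin n) (Fin 2) ℂ :=
  Matrix.of fun i j => if j = 0 then s i else star (s i)

/-- The real matrix `I + s s* + s̄ sᵀ`. -/
def tiltP {n : ℕ} (s : Fin n → ℂ) : Matrix (Fin n) (Fin n) ℝ :=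
  1 + Matrix.of fun i j => 2 * ((s i).re * (s j).re + (s i).im * (s j).im)

theorem tiltP_map {n : ℕ} (s : Fin n → ℂ) :
    (tiltP s).map (fun x : ℝ => (x : ℂ)) = 1 + pairM s * (pairM s)ᴴ := by
  ext i j
  simp only [tiltP, pairM, map_apply, Matrix.add_apply, one_apply, of_apply, mul_apply, Fin.sum_univ_two,
    conjTranspose_apply]
  simp only [if_true, if_neg (one_ne_zero : (1 : Fin 2) ≠ 0)]
  by_cases h : i = j
  · simp only [h, if_true]
    apply Complex.ext <;> simp <;> ring
  · simp only [h, if_false]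
    apply Complex.ext <;> simp <;> ring

theorem pairM_conjTranspose_mul {n : ℕ} (s : Fin n → ℂ) :
    (pairM s)ᴴ * pairM s = !![(sqn s : ℂ), star (s ⬝ᵥ s); s ⬝ᵥ s, (sqn s : ℂ)] := by
  have h := star_dotProduct_self_eq_sqn s
  ext i j
  fin_cases i <;> fin_cases j
  · simpa [pairM, mul_apply, dotProduct] using h
  · simp [pairM, mul_apply, dotProduct]
  · simp [pairM, mul_apply, dotProduct]
  · simp only [dotProduct, Pi.star_apply] at h
    rw [← h]
    simp [pairM, mul_apply, mul_comm]

theorem det_one_add_pairM {n : ℕ} (s : Fin n → ℂ) :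
    (1 + pairM s * (pairM s)ᴴ).det = (((1 + sqn s) ^ 2 - ‖s ⬝ᵥ s‖ ^ 2 : ℝ) : ℂ) := by
  have h2 : star (s ⬝ᵥ s) * (s ⬝ᵥ s) = ((‖s ⬝ᵥ s‖ ^ 2 : ℝ) : ℂ) := by
    rw [Complex.ofReal_pow, ← Complex.conj_mul']
    rfl
  rw [det_one_add_mul_comm, pairM_conjTranspose_mul, det_fin_two]
  push_cast at h2 ⊢
  rw [← h2]
  simp
  ring

theorem det_tiltP {n : ℕ} (s : Fin n → ℂ) :
    (tiltP s).det = (1 + sqn s) ^ 2 - ‖s ⬝ᵥ s‖ ^ 2 := by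
  have h := det_one_add_pairM s
  rw [← tiltP_map] at h
  have h3 : ((tiltP s).map (fun x : ℝ => (x : ℂ))).det = ((tiltP s).det : ℂ) :=
    (RingHom.map_det Complex.ofRealHom (tiltP s)).symm
  rw [h3] at h
  exact_mod_cast h

theorem norm_dotProduct_self_le {n : ℕ} (s : Fin n → ℂ) : ‖s ⬝ᵥ s‖ ≤ sqn s := by
  refine (norm_sum_le _ _).trans (le_of_eq ?_)
  simp [sqn, sq]

theorem tiltP_quadForm {n : ℕ} (s : Fin n → ℂ) (g : Fin n → ℝ) :
    g ⬝ᵥ (tiltP s *ᵥ g) - g ⬝ᵥ g = 2 * ‖star s ⬝ᵥ fun i => (g i : ℂ)‖ ^ 2 := by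
  have h1 : g ⬝ᵥ (tiltP s *ᵥ g) - g ⬝ᵥ g =
      2 * ((∑ i, (s i).re * g i) ^ 2 + (∑ i, (s i).im * g i) ^ 2) := by
    rw [tiltP, add_mulVec, one_mulVec, dotProduct_add, add_sub_cancel_left]
    rw [sq, sq, Finset.sum_mul_sum, Finset.sum_mul_sum, ← Finset.sum_add_distrib, Finset.mul_sum]
    simp only [dotProduct, mulVec, of_apply, ← Finset.sum_add_distrib, Finset.mul_sum]
    refine Finset.sum_congr rfl fun i _ => Finset.sum_congr rfl fun j _ => by ring
  have hre : (star s ⬝ᵥ fun i => (g i : ℂ)).re = ∑ i, (s i).re * g i := by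
    simp [dotProduct]
  have him : (star s ⬝ᵥ fun i => (g i : ℂ)).im = -∑ i, (s i).im * g i := by
    simp [dotProduct]
  rw [h1, ← Complex.normSq_eq_norm_sq, Complex.normSq_apply, hre, him]
  ring

theorem posDef_tiltP {n : ℕ} (s : Fin n → ℂ) : (tiltP s).PosDef := by
  refine Matrix.PosDef.of_dotProduct_mulVec_pos ?_ fun g hg => ?_
  · ext i j
    simp only [tiltP, conjTranspose_apply, Matrix.add_apply, of_apply, one_apply, star_trivial]
    by_cases h : i = j
    · subst h; ring
    · rw [if_neg h, if_neg (Ne.symm h)]; ring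
  · have h := tiltP_quadForm s g
    have h2 : 0 < g ⬝ᵥ g := by
      have := Matrix.dotProduct_star_self_pos_iff (v := g)
      simpa using this.mpr hg
    simp only [star_trivial]
    nlinarith [sq_nonneg ‖star s ⬝ᵥ fun i => (g i : ℂ)‖]

theorem det_compress_inv {n k : ℕ} {V : Matrix (Fin n) (Fin k) ℂ} (hV : Vᴴ * V = 1)
    (c : Fin k → ℂ) :
    (Vᴴ * ((tiltP (V *ᵥ c))⁻¹.map (fun x : ℝ => (x : ℂ))) * V).det =
      (((1 + sqn c - sqn (antiK V c)) / ((1 + sqn c) ^ 2 - ‖quadD V c‖ ^ 2) : ℝ) : ℂ) := by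
  set s := V *ᵥ c with hs
  have hdet0 : (tiltP s).det ≠ 0 := (posDef_tiltP s).det_pos.ne'
  have hsq : sqn s = sqn c := sqn_mulVec hV c
  have hdet : (1 + (pairM s)ᴴ * pairM s).det =
      ((((1 + sqn c) ^ 2 - ‖quadD V c‖ ^ 2 : ℝ)) : ℂ) := by
    rw [← det_one_add_mul_comm, det_one_add_pairM, hsq, quadD]
  have hd0 : (1 + sqn c) ^ 2 - ‖quadD V c‖ ^ 2 ≠ 0 := by
    rw [det_tiltP, hsq] at hdet0
    exact hdet0
  have hunit : IsUnit (1 + (pairM s)ᴴ * pairM s) := by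
    rw [Matrix.isUnit_iff_isUnit_det, hdet, isUnit_iff_ne_zero]
    exact_mod_cast hd0
  have hinv : (tiltP s)⁻¹.map (fun x : ℝ => (x : ℂ)) =
      1 - pairM s * (1 + (pairM s)ᴴ * pairM s)⁻¹ * (pairM s)ᴴ := by
    have h1 : (tiltP s)⁻¹.map (fun x : ℝ => (x : ℂ)) =
        ((tiltP s).map (fun x : ℝ => (x : ℂ)))⁻¹ := by
      symm
      refine Matrix.inv_eq_right_inv ?_
      have := congrArg (fun M : Matrix (Fin n) (Fin n) ℝ => M.map Complex.ofRealHom)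
        (Matrix.mul_nonsing_inv (tiltP s) (isUnit_iff_ne_zero.mpr hdet0))
      simp only [Matrix.map_mul] at this
      refine this.trans ?_
      simp
    rw [h1, tiltP_map]
    have := Matrix.add_mul_mul_inv_eq_sub (1 : Matrix (Fin n) (Fin n) ℂ) (pairM s) 1 (pairM s)ᴴ
      isUnit_one isUnit_one (by simpa using hunit)
    simpa using this
  have hcomp : Vᴴ * ((tiltP s)⁻¹.map (fun x : ℝ => (x : ℂ))) * V =
      1 + -(Vᴴ * pairM s) * ((1 + (pairM s)ᴴ * pairM s)⁻¹ * ((pairM s)ᴴ * V)) := by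
    rw [hinv, Matrix.mul_sub, Matrix.sub_mul, Matrix.mul_one, hV]
    simp only [Matrix.mul_assoc, Matrix.neg_mul, sub_eq_add_neg]
  have hVs : Vᴴ *ᵥ s = c := by rw [hs, mulVec_mulVec, hV, one_mulVec]
  have hVp : ∀ a : Fin k, ∀ j : Fin 2, (Vᴴ * pairM s) a j = if j = 0 then c a else antiK V c a := by
    intro a j
    fin_cases j
    · have := congrFun hVs a
      simpa [pairM, mul_apply, mulVec, dotProduct] using this
    · simp [pairM, mul_apply, antiK, mulVec, dotProduct, hs]
  have hmid : (pairM s)ᴴ * V * (Vᴴ * pairM s) =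
      !![(sqn c : ℂ), star (quadD V c); quadD V c, (sqn (antiK V c) : ℂ)] := by
    have h0 : (pairM s)ᴴ * V = (Vᴴ * pairM s)ᴴ := by
      rw [conjTranspose_mul, conjTranspose_conjTranspose]
    have hD : star c ⬝ᵥ antiK V c = star (quadD V c) := by
      rw [antiK, dotProduct_mulVec, ← star_mulVec, quadD, ← star_dotProduct_star]
    have hD' : star (antiK V c) ⬝ᵥ c = quadD V c := by
      rw [← star_star (quadD V c), ← hD, star_dotProduct]
    have e1 := star_dotProduct_self_eq_sqn c
    have e2 := star_dotProduct_self_eq_sqn (antiK V c)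
    rw [h0]
    ext i j
    rw [mul_apply]
    simp only [conjTranspose_apply, hVp]
    fin_cases i <;> fin_cases j
    · simpa [dotProduct] using e1
    · simpa [dotProduct] using hD
    · simpa [dotProduct] using hD'
    · simpa [dotProduct] using e2
  have hfin : (1 + (pairM s)ᴴ * pairM s) *
      (1 + (1 + (pairM s)ᴴ * pairM s)⁻¹ * ((pairM s)ᴴ * V) * -(Vᴴ * pairM s)) =
      !![1, 0; 0, ((1 + sqn c - sqn (antiK V c) : ℝ) : ℂ)] := by
    rw [Matrix.mul_add, Matrix.mul_one, Matrix.mul_neg, Matrix.mul_neg, Matrix.mul_assoc,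
      ← Matrix.mul_assoc (1 + (pairM s)ᴴ * pairM s), Matrix.mul_nonsing_inv _
        ((Matrix.isUnit_iff_isUnit_det _).mp hunit), Matrix.one_mul, hmid,
      pairM_conjTranspose_mul, hsq]
    ext i j
    fin_cases i <;> fin_cases j <;> simp [quadD, hs] <;> ring
  have hdetfin := congrArg Matrix.det hfin
  rw [det_mul, hdet, det_fin_two_of] at hdetfin
  rw [hcomp, det_one_add_mul_comm, Complex.ofReal_div, eq_div_iff (by exact_mod_cast hd0), mul_comm,
    hdetfin]
  simp

/-- The law of `m` independent standard Gaussian vectors of `ℝⁿ`. -/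
noncomputable def gaussMat (m n : ℕ) : Measure (Fin m → Fin n → ℝ) :=
  Measure.pi fun _ => stdG n

instance (m n : ℕ) : IsProbabilityMeasure (gaussMat m n) := by unfold gaussMat; infer_instance

theorem star_dotProduct_colX {n k : ℕ} (V : Matrix (Fin n) (Fin k) ℂ) (c : Fin k → ℂ)
    (g : Fin n → ℝ) : star c ⬝ᵥ colX V g = star (V *ᵥ c) ⬝ᵥ fun i => (g i : ℂ) := by
  rw [colX, dotProduct_mulVec, ← star_mulVec]

theorem star_dotProduct_wish {n k m : ℕ} (V : Matrix (Fin n) (Fin k) ℂ) (H : Fin m → Fin n → ℝ)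
    (c : Fin k → ℂ) :
    star c ⬝ᵥ (wish V H *ᵥ c) = ((∑ j, ‖star c ⬝ᵥ colX V (H j)‖ ^ 2 : ℝ) : ℂ) := by
  have h : wish V H *ᵥ c = ∑ j, (star (colX V (H j)) ⬝ᵥ c) • colX V (H j) := by
    funext a
    simp only [wish, mulVec, dotProduct, of_apply, Finset.sum_apply, Pi.smul_apply, smul_eq_mul,
      Pi.star_apply, Finset.sum_mul]
    rw [Finset.sum_comm]
    refine Finset.sum_congr rfl fun j _ => Finset.sum_congr rfl fun i _ => by ring
  rw [h, dotProduct_sum, Complex.ofReal_sum]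
  refine Finset.sum_congr rfl fun j _ => ?_
  rw [dotProduct_smul, smul_eq_mul, star_dotProduct, Complex.ofReal_pow, ← Complex.conj_mul']
  rfl

theorem isHermitian_wish {n k m : ℕ} (V : Matrix (Fin n) (Fin k) ℂ) (H : Fin m → Fin n → ℝ) :
    (wish V H).IsHermitian := by
  ext a b
  simp only [wish, conjTranspose_apply, of_apply, star_sum, star_mul', star_star]
  refine Finset.sum_congr rfl fun j _ => by ring

/-- The closed form of the expected weight at `c`. -/
noncomputable def dens {n k : ℕ} (m : ℕ) (V : Matrix (Fin n) (Fin k) ℂ) (c : Fin k → ℂ) : ℝ :=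
  ((1 + sqn c) ^ 2 - ‖quadD V c‖ ^ 2) ^ (-((m : ℝ) / 2 + 1)) * (1 + sqn c - sqn (antiK V c))

theorem integrable_and_integral_det_wish {n k m : ℕ} (hkm : k ≤ m)
    {V : Matrix (Fin n) (Fin k) ℂ} (hV : Vᴴ * V = 1) (c : Fin k → ℂ) :
    Integrable (fun H => (wish V H).det.re *
      Real.exp (-∑ j, ‖star c ⬝ᵥ colX V (H j)‖ ^ 2)) (gaussMat m n) ∧
    ∫ H, (wish V H).det.re * Real.exp (-∑ j, ‖star c ⬝ᵥ colX V (H j)‖ ^ 2) ∂(gaussMat m n) =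
      m.descFactorial k * dens m V c := by
  set s := V *ᵥ c with hs
  set P := tiltP s with hP
  have hPd := posDef_tiltP s
  set er : (Fin n → ℝ) → ℝ := fun g => Real.exp (-((g ⬝ᵥ (P *ᵥ g) - g ⬝ᵥ g) / 2)) with her
  have hexp : ∀ g, Real.exp (-‖star c ⬝ᵥ colX V g‖ ^ 2) = er g := fun g => by
    rw [her]
    simp only
    rw [hP, tiltP_quadForm, star_dotProduct_colX]
    congr 1
    ring
  have hercont : Continuous er := by
    rw [her]
    fun_prop
  have her1 : ∀ g, er g ≤ 1 := fun g => by
    rw [← hexp, Real.exp_le_one_iff]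
    simp
  have her0 : ∀ g, 0 ≤ er g := fun g => (Real.exp_pos _).le
  have hP1 : ∀ g, g ⬝ᵥ g ≤ g ⬝ᵥ (P *ᵥ g) := fun g => by
    have := tiltP_quadForm s g
    nlinarith [sq_nonneg ‖star s ⬝ᵥ fun i => (g i : ℂ)‖]
  have hI : Integrable er (stdG n) := by
    refine (integrable_const (1 : ℝ)).mono (by fun_prop) (ae_of_all _ fun g => ?_)
    rw [Real.norm_of_nonneg (her0 g)]
    simpa using her1 g
  have hIc : Integrable (fun g => (er g : ℂ)) (stdG n) := hI.ofReal
  have hterm : ∀ a b : Fin k, ∀ g : Fin n → ℝ, colX V g a * star (colX V g b) * (er g : ℂ) =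
      ∑ i, ∑ j, (Vᴴ a i * V j b) * ((g i * g j * er g : ℝ) : ℂ) := fun a b g => by
    have e1 : star (colX V g b) = ∑ j, V j b * (g j : ℂ) := by
      simp [colX, mulVec, dotProduct]
    rw [e1]
    simp only [colX, mulVec, dotProduct]
    rw [Finset.sum_mul_sum]
    simp only [Finset.sum_mul]
    refine Finset.sum_congr rfl fun i _ => Finset.sum_congr rfl fun j _ => ?_
    push_cast
    ring
  have hint2 : ∀ i j : Fin n, Integrable (fun g : Fin n → ℝ => ((g i * g j * er g : ℝ) : ℂ))
      (stdG n) := fun i j => (integrable_mul_bounded_stdG i j hercont her0 her1).ofReal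
  have hx : ∀ a b, Integrable (fun g => colX V g a * star (colX V g b) * (er g : ℂ)) (stdG n) := by
    intro a b
    simp_rw [hterm a b]
    exact integrable_finsetSum _ fun i _ => integrable_finsetSum _ fun j _ =>
      (hint2 i j).const_mul _
  have hM : (Matrix.of fun a b => ∫ g, colX V g a * star (colX V g b) * (er g : ℂ) ∂(stdG n)) =
      ((P.det ^ (-(1 / 2) : ℝ) : ℝ) : ℂ) • (Vᴴ * (P⁻¹.map (fun x : ℝ => (x : ℂ))) * V) := by
    ext a b
    simp only [of_apply, hterm a b]
    rw [integral_finsetSum _ fun i _ => integrable_finsetSum _ fun j _ => (hint2 i j).const_mul _]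
    rw [Matrix.smul_apply, Matrix.mul_assoc, Matrix.mul_apply, smul_eq_mul, Finset.mul_sum]
    refine Finset.sum_congr rfl fun i _ => ?_
    rw [integral_finsetSum _ fun j _ => (hint2 i j).const_mul _, Matrix.mul_apply, Finset.mul_sum,
      Finset.mul_sum]
    refine Finset.sum_congr rfl fun j _ => ?_
    rw [integral_const_mul, integral_complex_ofReal, her,
      integral_mul_exp_quadForm_stdG hPd hP1, map_apply]
    push_cast
    ring
  have hZ : ∫ g, (er g : ℂ) ∂(stdG n) = ((P.det ^ (-(1 / 2) : ℝ) : ℝ) : ℂ) := by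
    rw [integral_complex_ofReal, her, integral_exp_quadForm_stdG hPd]
  obtain ⟨k1, k2⟩ := integral_det_sum_vecMulVec (m := m) hIc hx
  have hdet : ∀ H : Fin m → Fin n → ℝ, ((wish V H).det.re *
      Real.exp (-∑ j, ‖star c ⬝ᵥ colX V (H j)‖ ^ 2) : ℝ) =
      ((Matrix.of fun a b => ∑ j, colX V (H j) a * star (colX V (H j) b)).det *
        ∏ j, (er (H j) : ℂ)).re := fun H => by
    have : ∏ j, (er (H j) : ℂ) =
        ((Real.exp (-∑ j, ‖star c ⬝ᵥ colX V (H j)‖ ^ 2) : ℝ) : ℂ) := by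
      rw [← Finset.sum_neg_distrib, Real.exp_sum, Complex.ofReal_prod]
      simp_rw [hexp]
    rw [this, Complex.re_mul_ofReal]
    rfl
  simp_rw [hdet]
  refine ⟨k1.re, ?_⟩
  have h3 := integral_re k1
  simp only [RCLike.re_to_complex] at h3
  rw [gaussMat, h3, k2, hZ, hM, det_smul, det_compress_inv hV, Fintype.card_fin, dens]
  have hPdet : P.det = (1 + sqn c) ^ 2 - ‖quadD V c‖ ^ 2 := by
    rw [hP, det_tiltP, hs, sqn_mulVec hV, quadD]
  have hpos : 0 < P.det := hPd.det_pos
  rw [← hPdet]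
  have e : ((P.det ^ (-(1 / 2) : ℝ)) ^ (m - k)) * ((P.det ^ (-(1 / 2) : ℝ)) ^ k) * P.det⁻¹ =
      P.det ^ (-((m : ℝ) / 2 + 1)) := by
    rw [← pow_add, Nat.sub_add_cancel hkm, ← Real.rpow_natCast, ← Real.rpow_mul hpos.le,
      ← Real.rpow_neg_one, ← Real.rpow_add hpos]
    congr 1
    ring
  rw [← e]
  have : (m.descFactorial k : ℂ) * (((P.det ^ (-(1 / 2) : ℝ) : ℝ) : ℂ) ^ (m - k) *
      (((P.det ^ (-(1 / 2) : ℝ) : ℝ) : ℂ) ^ k *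
        (((1 + sqn c - sqn (antiK V c)) / P.det : ℝ) : ℂ))) =
      ((m.descFactorial k * ((P.det ^ (-(1 / 2) : ℝ)) ^ (m - k) *
      ((P.det ^ (-(1 / 2) : ℝ)) ^ k *
        ((1 + sqn c - sqn (antiK V c)) / P.det))) : ℝ) : ℂ) := by
    push_cast
    ring
  rw [this, Complex.ofReal_re]
  ring

/-- A mean-zero function stays mean-zero under linear changes of variables, hence so do its
derivatives along linear vector fields. -/
theorem integral_deriv_linear_field_eq_zero {E : Type*} [NormedAddCommGroup E] [NormedSpace ℝ E]
    [MeasurableSpace E] [BorelSpace E] [FiniteDimensional ℝ E] (μ : Measure E)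
    [μ.IsAddHaarMeasure] (L : E →L[ℝ] E) {f f' : E → ℝ} (hf : LocallyLipschitz f) {ρ : ℝ}
    (hρ : 0 < ρ) (hsupp : ∀ c, ρ < ‖c‖ → f c = 0) (h0 : ∫ c, f c ∂μ = 0)
    (hd : ∀ᵐ c ∂μ, HasDerivAt (fun t : ℝ => f (c + t • L c)) (f' c) 0) :
    ∫ c, f' c ∂μ = 0 := by
  have hproper : ProperSpace E := FiniteDimensional.proper_real E
  obtain ⟨K, hK⟩ := hf.locallyLipschitzOn.exists_lipschitzOnWith_of_compact
    (isCompact_closedBall (0 : E) (3 * ρ))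
  have hfc : Continuous f := hf.continuous
  have hInt : Integrable f μ := hfc.integrable_of_hasCompactSupport
    (HasCompactSupport.intro (isCompact_closedBall (0 : E) ρ) fun c hc => hsupp c (by
      simpa using hc))
  have hsmall : ∀ᶠ t : ℝ in nhdsWithin 0 {0}ᶜ, |t| * ‖L‖ ≤ 1 / 2 := by
    have : Filter.Tendsto (fun t : ℝ => |t| * ‖L‖) (nhds 0) (nhds (|0| * ‖L‖)) :=
      (continuous_abs.mul continuous_const).tendsto 0
    rw [abs_zero, zero_mul] at this
    exact nhdsWithin_le_nhds (this.eventually (eventually_le_nhds (by norm_num)))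
  have hdet : ∀ᶠ t : ℝ in nhdsWithin 0 {0}ᶜ, (1 + t • L : E →L[ℝ] E).det ≠ 0 := by
    have hc : Continuous fun t : ℝ => (1 + t • L : E →L[ℝ] E).det :=
      ContinuousLinearMap.continuous_det.comp (by fun_prop)
    refine nhdsWithin_le_nhds (hc.continuousAt.eventually_ne ?_)
    simp [ContinuousLinearMap.det]
  have hfar : ∀ t : ℝ, |t| * ‖L‖ ≤ 1 / 2 → ∀ c, 2 * ρ < ‖c‖ → ρ < ‖c + t • L c‖ := by
    intro t ht c hc
    have h1 : ‖t • L c‖ ≤ 1 / 2 * ‖c‖ := by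
      rw [norm_smul, Real.norm_eq_abs]
      calc |t| * ‖L c‖ ≤ |t| * (‖L‖ * ‖c‖) := by gcongr; exact L.le_opNorm c
        _ = |t| * ‖L‖ * ‖c‖ := by ring
        _ ≤ _ := by gcongr
    have h2 := norm_sub_le_norm_add c (t • L c)
    linarith
  have hzero : ∀ᶠ t : ℝ in nhdsWithin 0 {0}ᶜ, ∫ c, t⁻¹ • (f (c + t • L c) - f c) ∂μ = 0 := by
    filter_upwards [hsmall, hdet] with t ht hdt
    have hcomp : ∫ c, f (c + t • L c) ∂μ = 0 := by
      have hmap := Measure.map_linearMap_addHaar_eq_smul_addHaar μ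
        (f := ((1 + t • L : E →L[ℝ] E) : E →ₗ[ℝ] E)) hdt
      have := integral_map (μ := μ) (φ := ((1 + t • L : E →L[ℝ] E) : E →ₗ[ℝ] E)) (f := f)
        (by fun_prop) hfc.aestronglyMeasurable
      rw [hmap, integral_smul_measure, h0, smul_zero] at this
      simpa using this.symm
    have hInt' : Integrable (fun c => f (c + t • L c)) μ :=
      Continuous.integrable_of_hasCompactSupport (by fun_prop)
        (HasCompactSupport.intro (isCompact_closedBall (0 : E) (2 * ρ)) fun c hc =>
          hsupp _ (hfar t ht c (by simpa using hc)))
    rw [integral_smul, integral_sub hInt' hInt, hcomp, h0, sub_zero, smul_zero]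
  have hlim : Filter.Tendsto (fun t : ℝ => ∫ c, t⁻¹ • (f (c + t • L c) - f c) ∂μ)
      (nhdsWithin 0 {0}ᶜ) (nhds (∫ c, f' c ∂μ)) := by
    refine tendsto_integral_filter_of_dominated_convergence
      ((Metric.closedBall (0 : E) (2 * ρ)).indicator fun _ => K * (‖L‖ * (2 * ρ))) ?_ ?_ ?_ ?_
    · refine Filter.Eventually.of_forall fun t => Continuous.aestronglyMeasurable ?_
      fun_prop
    · filter_upwards [hsmall, self_mem_nhdsWithin] with t ht ht0
      have ht0' : t ≠ 0 := ht0
      refine Filter.Eventually.of_forall fun c => ?_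
      by_cases hc : 2 * ρ < ‖c‖
      · rw [hsupp _ (hfar t ht c hc), hsupp c (by linarith), Set.indicator_of_notMem (by simpa using hc)]
        simp
      · push Not at hc
        rw [Set.indicator_of_mem (by simpa using hc)]
        have hLc : ‖L c‖ ≤ ‖L‖ * (2 * ρ) := (L.le_opNorm c).trans (by gcongr)
        have h1 : ‖t • L c‖ ≤ ρ := by
          rw [norm_smul, Real.norm_eq_abs]
          calc |t| * ‖L c‖ ≤ |t| * (‖L‖ * (2 * ρ)) := by gcongr
            _ = |t| * ‖L‖ * (2 * ρ) := by ring
            _ ≤ 1 / 2 * (2 * ρ) := by gcongr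
            _ = ρ := by ring
        have h2 := hK.norm_sub_le (x := c + t • L c) (y := c)
          (by rw [mem_closedBall_zero_iff]; exact (norm_add_le _ _).trans (by linarith))
          (by rw [mem_closedBall_zero_iff]; linarith)
        rw [norm_smul, norm_inv, inv_mul_le_iff₀ (norm_pos_iff.mpr ht0')]
        refine h2.trans ?_
        rw [add_sub_cancel_left, norm_smul]
        calc (K : ℝ) * (‖t‖ * ‖L c‖) ≤ K * (‖t‖ * (‖L‖ * (2 * ρ))) := by gcongr
          _ = _ := by ring
    · exact (integrable_indicator_iff Metric.isClosed_closedBall.measurableSet).mpr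
        (integrableOn_const (isCompact_closedBall _ _).measure_lt_top.ne)
    · filter_upwards [hd] with c hc
      simpa using hasDerivAt_iff_tendsto_slope_zero.mp hc
  exact tendsto_nhds_unique hlim (tendsto_const_nhds.congr' (hzero.mono fun t h => h.symm))

theorem sqn_eq_norm_toLp {k : ℕ} (c : Fin k → ℂ) :
    sqn c = ‖(WithLp.toLp 2 c : EuclideanSpace ℂ (Fin k))‖ ^ 2 := by
  rw [EuclideanSpace.norm_sq_eq, sqn]

/-- The volume of `ℂᵏ` transported to the Euclidean space. -/
noncomputable def volC (k : ℕ) : Measure (EuclideanSpace ℂ (Fin k)) :=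
  (volume : Measure (Fin k → ℂ)).map (PiLp.continuousLinearEquiv 2 ℝ fun _ : Fin k => ℂ).symm

noncomputable instance (k : ℕ) : (volC k).IsAddHaarMeasure := by
  unfold volC
  exact ContinuousLinearEquiv.isAddHaarMeasure_map _ _

theorem volume_sqn_eq {k : ℕ} (hk : 0 < k) (X : ℝ) :
    volume {c : Fin k → ℂ | sqn c = X} = 0 := by
  have : Nonempty (Fin k) := ⟨⟨0, hk⟩⟩
  have h := Measure.addHaar_sphere (volC k) 0 (Real.sqrt X)
  rw [volC, Measure.map_apply (by fun_prop) Metric.isClosed_sphere.measurableSet] at h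
  refine measure_mono_null ?_ h
  intro c hc
  simp only [Set.mem_ofPred_eq] at hc
  rw [Set.mem_preimage, mem_sphere_zero_iff_norm, ← hc, sqn_eq_norm_toLp,
    Real.sqrt_sq (norm_nonneg _)]
  rfl

theorem sqn_add_smul {k : ℕ} (c w : Fin k → ℂ) (t : ℝ) :
    sqn (c + t • w) = sqn c + 2 * t * (star c ⬝ᵥ w).re + t ^ 2 * sqn w := by
  simp only [sqn, dotProduct, Complex.re_sum, Finset.mul_sum, ← Finset.sum_add_distrib]
  refine Finset.sum_congr rfl fun i _ => ?_
  simp only [Complex.sq_norm, Complex.normSq_apply, Pi.add_apply, Pi.smul_apply, Pi.star_apply]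
  simp
  ring

theorem quadD_add_smul {n k : ℕ} (V : Matrix (Fin n) (Fin k) ℂ) (c w : Fin k → ℂ) (t : ℝ) :
    quadD V (c + t • w) =
      quadD V c + 2 * t * ((V *ᵥ c) ⬝ᵥ (V *ᵥ w)) + t ^ 2 * quadD V w := by
  have h : (t • w : Fin k → ℂ) = (t : ℂ) • w := by ext i; simp
  rw [h]
  simp only [quadD, mulVec_add, mulVec_smul, dotProduct_add, add_dotProduct, smul_dotProduct,
    dotProduct_smul, smul_eq_mul, dotProduct_comm (V *ᵥ w) (V *ᵥ c)]
  ring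

theorem star_dotProduct_antiK {n k : ℕ} (V : Matrix (Fin n) (Fin k) ℂ) (c : Fin k → ℂ) :
    star c ⬝ᵥ antiK V c = star (quadD V c) := by
  rw [antiK, dotProduct_mulVec, ← star_mulVec, quadD, star_dotProduct_star]

theorem mulVec_dotProduct_antiK {n k : ℕ} (V : Matrix (Fin n) (Fin k) ℂ) (c : Fin k → ℂ) :
    (V *ᵥ c) ⬝ᵥ (V *ᵥ antiK V c) = (sqn (antiK V c) : ℂ) := by
  rw [← star_dotProduct_self_eq_sqn, dotProduct_mulVec]
  congr 1
  rw [antiK, star_mulVec, star_star, conjTranspose_conjTranspose]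

theorem norm_dotProduct_le_sqn {n : ℕ} (x y : Fin n → ℂ) :
    ‖x ⬝ᵥ y‖ ≤ (sqn x + sqn y) / 2 := by
  rw [sqn, sqn, ← Finset.sum_add_distrib, Finset.sum_div]
  refine (norm_sum_le _ _).trans (Finset.sum_le_sum fun i _ => ?_)
  rw [norm_mul]
  nlinarith [sq_nonneg (‖x i‖ - ‖y i‖)]

theorem sqn_antiK_le {n k : ℕ} {V : Matrix (Fin n) (Fin k) ℂ} (hV : Vᴴ * V = 1)
    (c : Fin k → ℂ) : sqn (antiK V c) ≤ sqn c := by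
  have h := norm_dotProduct_le_sqn (V *ᵥ c) (V *ᵥ antiK V c)
  rw [mulVec_dotProduct_antiK, sqn_mulVec hV, sqn_mulVec hV, Complex.norm_real,
    Real.norm_of_nonneg (sqn_nonneg _)] at h
  linarith

theorem norm_quadD_le {n k : ℕ} {V : Matrix (Fin n) (Fin k) ℂ} (hV : Vᴴ * V = 1)
    (c : Fin k → ℂ) : ‖quadD V c‖ ≤ sqn c :=
  (norm_dotProduct_self_le _).trans (sqn_mulVec hV c).le

/-- The real-linear vector field `c ↦ u Vᴴ V̄ c̄`. -/
noncomputable def antiField {n k : ℕ} (V : Matrix (Fin n) (Fin k) ℂ) (u : ℂ) :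
    (Fin k → ℂ) →L[ℝ] (Fin k → ℂ) :=
  LinearMap.toContinuousLinearMap
    { toFun := fun c => u • antiK V c
      map_add' := fun c d => by simp [antiK, mulVec_add]
      map_smul' := fun t c => by
        have h : (t • c : Fin k → ℂ) = (t : ℂ) • c := by ext i; simp
        have h' : star ((t : ℂ) • V *ᵥ c) = (t : ℂ) • star (V *ᵥ c) := by ext i; simp
        rw [h, antiK, mulVec_smul, h', mulVec_smul, smul_comm]
        ext i; simp [antiK] }

theorem antiField_apply {n k : ℕ} (V : Matrix (Fin n) (Fin k) ℂ) (u : ℂ) (c : Fin k → ℂ) :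
    antiField V u c = u • antiK V c := rfl

/-- The base `1 + 2Y + R² - θQ` of the powers in the test functions. -/
noncomputable def baseP {n k : ℕ} (V : Matrix (Fin n) (Fin k) ℂ) (θ Y : ℝ) (c : Fin k → ℂ) : ℝ :=
  1 + 2 * Y + sqn c ^ 2 - θ * ‖quadD V c‖ ^ 2

theorem one_le_baseP {n k : ℕ} {V : Matrix (Fin n) (Fin k) ℂ} (hV : Vᴴ * V = 1) {θ Y : ℝ}
    (hθ : θ ≤ 1) (hY : 0 ≤ Y) (c : Fin k → ℂ) : 1 ≤ baseP V θ Y c := by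
  have h1 : ‖quadD V c‖ ^ 2 ≤ sqn c ^ 2 := by gcongr; exact norm_quadD_le hV c
  have h2 : θ * ‖quadD V c‖ ^ 2 ≤ 1 * ‖quadD V c‖ ^ 2 := by gcongr
  unfold baseP
  linarith

theorem hasDerivAt_sqn_antiField {n k : ℕ} (V : Matrix (Fin n) (Fin k) ℂ) (u : ℂ)
    (c : Fin k → ℂ) :
    HasDerivAt (fun t : ℝ => sqn (c + t • antiField V u c)) (2 * (star u * quadD V c).re) 0 := by
  simp_rw [sqn_add_smul, antiField_apply]
  have h : (star c ⬝ᵥ u • antiK V c).re = (star u * quadD V c).re := by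
    rw [dotProduct_smul, star_dotProduct_antiK, smul_eq_mul]
    simp
  rw [h]
  have := (((hasDerivAt_id (0 : ℝ)).const_mul 2).mul_const (star u * quadD V c).re).const_add (sqn c)
  have h3 := this.add (((hasDerivAt_id (0 : ℝ)).pow 2).mul_const (sqn (u • antiK V c)))
  refine HasDerivAt.congr_deriv (f' := _) h3 ?_
  simp

theorem hasDerivAt_quadD_antiField {n k : ℕ} (V : Matrix (Fin n) (Fin k) ℂ) (u : ℂ)
    (c : Fin k → ℂ) :
    HasDerivAt (fun t : ℝ => quadD V (c + t • antiField V u c)) (2 * u * sqn (antiK V c)) 0 := by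
  simp_rw [quadD_add_smul, antiField_apply, mulVec_smul, dotProduct_smul,
    mulVec_dotProduct_antiK]
  have h1 : HasDerivAt (fun t : ℝ => (t : ℂ)) 1 0 := Complex.ofRealCLM.hasDerivAt
  have := ((h1.const_mul 2).mul_const (u • (sqn (antiK V c) : ℂ))).const_add (quadD V c)
  have h3 := this.add ((h1.pow 2).mul_const (quadD V (u • antiK V c)))
  refine HasDerivAt.congr_deriv (f' := _) h3 ?_
  simp [mul_assoc]

theorem hasDerivAt_re_quadD_antiField {n k : ℕ} (V : Matrix (Fin n) (Fin k) ℂ) {u : ℂ}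
    (hu : star u * u = 1) (c : Fin k → ℂ) :
    HasDerivAt (fun t : ℝ => (star u * quadD V (c + t • antiField V u c)).re)
      (2 * sqn (antiK V c)) 0 := by
  have h := Complex.reCLM.hasFDerivAt.comp_hasDerivAt (0 : ℝ)
    ((hasDerivAt_quadD_antiField V u c).const_mul (star u))
  refine h.congr_deriv ?_
  rw [show star u * (2 * u * (sqn (antiK V c) : ℂ)) = (star u * u) * (2 * (sqn (antiK V c) : ℂ)) by
    ring, hu]
  simp

theorem hasDerivAt_normSq_quadD_antiField {n k : ℕ} (V : Matrix (Fin n) (Fin k) ℂ) (u : ℂ)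
    (c : Fin k → ℂ) :
    HasDerivAt (fun t : ℝ => ‖quadD V (c + t • antiField V u c)‖ ^ 2)
      (4 * sqn (antiK V c) * (star u * quadD V c).re) 0 := by
  have h := (hasDerivAt_quadD_antiField V u c).norm_sq
  convert h using 1
  simp only [zero_smul, add_zero, Complex.inner]
  simp
  ring

/-- The profile of the test functions, positive exactly where `R < X`. -/
noncomputable def profG {n k : ℕ} (V : Matrix (Fin n) (Fin k) ℂ) (μ θ X : ℝ) (c : Fin k → ℂ) : ℝ :=
  baseP V θ (sqn c) c ^ (-μ) - baseP V θ X c ^ (-μ)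

theorem hasDerivAt_profG_antiField {n k : ℕ} {V : Matrix (Fin n) (Fin k) ℂ} (hV : Vᴴ * V = 1)
    (u : ℂ) {μ θ X : ℝ} (hθ : θ ≤ 1) (hX : 0 ≤ X) (c : Fin k → ℂ) :
    HasDerivAt (fun t : ℝ => profG V μ θ X (c + t • antiField V u c))
      (4 * (star u * quadD V c).re * (-μ * baseP V θ (sqn c) c ^ (-μ - 1) *
          (1 + sqn c - θ * sqn (antiK V c)) +
        μ * baseP V θ X c ^ (-μ - 1) * (sqn c - θ * sqn (antiK V c)))) 0 := by
  have hR := hasDerivAt_sqn_antiField V u c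
  have hQ := hasDerivAt_normSq_quadD_antiField V u c
  have ha := (((hR.const_mul 2).const_add 1).add (hR.pow 2)).sub (hQ.const_mul θ)
  have hb := ((hR.pow 2).const_add (1 + 2 * X)).sub (hQ.const_mul θ)
  have ha1 := one_le_baseP hV hθ (sqn_nonneg c) c
  have hb1 := one_le_baseP hV hθ hX c
  unfold baseP at ha1 hb1
  have h := (ha.rpow_const (p := -μ) (Or.inl (by simp; linarith))).sub
    (hb.rpow_const (p := -μ) (Or.inl (by simp; linarith)))
  unfold profG baseP
  refine h.congr_deriv ?_
  simp
  ring

theorem contDiff_sqn {k : ℕ} : ContDiff ℝ 1 (sqn : (Fin k → ℂ) → ℝ) := by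
  unfold sqn
  exact ContDiff.sum fun i _ => ContDiff.norm_sq ℝ (contDiff_apply ℝ ℂ i)

theorem contDiff_quadD {n k : ℕ} (V : Matrix (Fin n) (Fin k) ℂ) : ContDiff ℝ 1 (quadD V) := by
  unfold quadD mulVec dotProduct
  fun_prop

theorem continuous_antiK {n k : ℕ} (V : Matrix (Fin n) (Fin k) ℂ) : Continuous (antiK V) := by
  unfold antiK
  fun_prop

theorem contDiff_profG {n k : ℕ} {V : Matrix (Fin n) (Fin k) ℂ} (hV : Vᴴ * V = 1)
    {μ θ X : ℝ} (hθ : θ ≤ 1) (hX : 0 ≤ X) : ContDiff ℝ 1 (profG V μ θ X) := by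
  have h1 := contDiff_sqn (k := k)
  have h2 := ContDiff.norm_sq ℝ (contDiff_quadD V)
  refine ContDiff.sub (ContDiff.rpow_const_of_ne ?_ fun c =>
    (zero_lt_one.trans_le (one_le_baseP hV hθ (sqn_nonneg c) c)).ne')
    (ContDiff.rpow_const_of_ne ?_ fun c => (zero_lt_one.trans_le (one_le_baseP hV hθ hX c)).ne')
  all_goals unfold baseP; fun_prop

theorem profG_pos_iff {n k : ℕ} {V : Matrix (Fin n) (Fin k) ℂ} (hV : Vᴴ * V = 1)
    {μ θ X : ℝ} (hμ : 0 < μ) (hθ : θ ≤ 1) (hX : 0 ≤ X) (c : Fin k → ℂ) :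
    0 < profG V μ θ X c ↔ sqn c < X := by
  have ha := one_le_baseP hV hθ (sqn_nonneg c) c
  have hb := one_le_baseP hV hθ hX c
  rw [profG, sub_pos, Real.rpow_lt_rpow_iff_of_neg (by linarith) (by linarith) (by linarith)]
  unfold baseP
  constructor <;> intro h <;> linarith

theorem measurePreserving_I_smul (k : ℕ) :
    MeasurePreserving (fun c : Fin k → ℂ => Complex.I • c) volume volume := by
  have h : MeasurePreserving (rotation ⟨Complex.I, by simp [Submonoid.unitSphere]⟩ : ℂ ≃ₗᵢ[ℝ] ℂ) volume volume :=
    LinearIsometryEquiv.measurePreserving _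
  exact volume_preserving_pi (α' := fun _ : Fin k => ℂ) (β' := fun _ : Fin k => ℂ) fun _ => h

theorem sqn_I_smul {k : ℕ} (c : Fin k → ℂ) : sqn (Complex.I • c) = sqn c := by simp [sqn]

theorem quadD_I_smul {n k : ℕ} (V : Matrix (Fin n) (Fin k) ℂ) (c : Fin k → ℂ) :
    quadD V (Complex.I • c) = -quadD V c := by
  rw [quadD, mulVec_smul, smul_dotProduct, dotProduct_smul, smul_smul, Complex.I_mul_I, quadD]
  simp

theorem norm_le_of_sqn_le {k : ℕ} {c : Fin k → ℂ} {X : ℝ} (h : sqn c ≤ X) :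
    ‖c‖ ≤ 1 + X := by
  have hX : 0 ≤ X := (sqn_nonneg c).trans h
  rw [pi_norm_le_iff_of_nonneg (by linarith)]
  intro i
  have : ‖c i‖ ^ 2 ≤ sqn c :=
    Finset.single_le_sum (f := fun i => ‖c i‖ ^ 2) (fun _ _ => by positivity) (Finset.mem_univ i)
  nlinarith [norm_nonneg (c i)]

theorem isCompact_sqn_le (k : ℕ) (X : ℝ) : IsCompact {c : Fin k → ℂ | sqn c ≤ X} := by
  refine (isCompact_closedBall (0 : Fin k → ℂ) (1 + X)).of_isClosed_subset
    (isClosed_le contDiff_sqn.continuous continuous_const) fun c hc => ?_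
  simpa using norm_le_of_sqn_le hc

theorem measurableSet_sqn_lt (k : ℕ) (X : ℝ) : MeasurableSet {c : Fin k → ℂ | sqn c < X} :=
  measurableSet_lt contDiff_sqn.continuous.measurable measurable_const

theorem ContinuousOn.integrableOn_sqn_lt {k : ℕ} {f : (Fin k → ℂ) → ℝ} {X : ℝ}
    (hf : ContinuousOn f {c | sqn c ≤ X}) : IntegrableOn f {c | sqn c < X} :=
  (hf.integrableOn_compact (isCompact_sqn_le k X)).mono_set fun c (hc : sqn c < X) => hc.le

theorem integral_testField_eq_zero {n k : ℕ} (hk : 0 < k) {V : Matrix (Fin n) (Fin k) ℂ}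
    (hV : Vᴴ * V = 1) {u : ℂ} (hu : star u * u = 1) {μ θ X : ℝ} (hμ : 0 < μ) (hθ : θ ≤ 1)
    (hX : 0 < X) :
    ∫ c in {c | sqn c < X}, (4 * (star u * quadD V c).re *
      (-μ * baseP V θ (sqn c) c ^ (-μ - 1) * (1 + sqn c - θ * sqn (antiK V c)) +
        μ * baseP V θ X c ^ (-μ - 1) * (sqn c - θ * sqn (antiK V c))) * (star u * quadD V c).re +
      profG V μ θ X c * (2 * sqn (antiK V c))) = 0 := by
  rw [← integral_indicator (measurableSet_sqn_lt k X)]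
  have hx : ContDiff ℝ 1 fun c => (star u * quadD V c).re :=
    Complex.reCLM.contDiff.comp (contDiff_const.mul (contDiff_quadD V))
  have hg := contDiff_profG hV (μ := μ) hθ hX.le
  have hmul : LocallyLipschitz fun p : ℝ × ℝ => p.1 * p.2 :=
    (contDiff_fst.mul contDiff_snd : ContDiff ℝ 1 fun p : ℝ × ℝ => p.1 * p.2).locallyLipschitz
  have hnonpos : ∀ c, X ≤ sqn c → profG V μ θ X c ≤ 0 := fun c hc => by
    by_contra h
    exact absurd ((profG_pos_iff hV hμ hθ hX.le c).mp (not_le.mp h)) (not_lt.mpr hc)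
  refine integral_deriv_linear_field_eq_zero volume (antiField V u) (ρ := 1 + X)
    (f := fun c => max (profG V μ θ X c) 0 * (star u * quadD V c).re)
    (hmul.comp ((hg.locallyLipschitz.max_const 0).prodMk hx.locallyLipschitz))
    (by linarith) ?_ ?_ ?_
  · intro c hc
    have : X ≤ sqn c := by
      by_contra h
      exact absurd (norm_le_of_sqn_le (not_le.mp h).le) (not_le.mpr hc)
    rw [max_eq_right (hnonpos c this), zero_mul]
  · have hodd := (measurePreserving_I_smul k).integral_comp
      (MeasurableEquiv.smul₀ Complex.I Complex.I_ne_zero).measurableEmbedding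
      (fun c => max (profG V μ θ X c) 0 * (star u * quadD V c).re)
    have hneg : ∀ c, max (profG V μ θ X (Complex.I • c)) 0 *
        (star u * quadD V (Complex.I • c)).re =
        -(max (profG V μ θ X c) 0 * (star u * quadD V c).re) := fun c => by
      rw [profG, baseP, baseP, sqn_I_smul, quadD_I_smul, norm_neg, mul_neg, Complex.neg_re,
        mul_neg]
      rfl
    simp_rw [hneg, integral_neg] at hodd
    linarith
  · have hnull : ∀ᵐ c : Fin k → ℂ, sqn c ≠ X := by
      rw [ae_iff]
      simpa using volume_sqn_eq hk X
    filter_upwards [hnull] with c hc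
    have hcont : Continuous fun t : ℝ => sqn (c + t • antiField V u c) :=
      contDiff_sqn.continuous.comp (by fun_prop)
    have h0 : sqn (c + (0 : ℝ) • antiField V u c) = sqn c := by simp
    rcases lt_or_gt_of_ne hc with h | h
    · rw [Set.indicator_of_mem (by exact h)]
      have hd := (hasDerivAt_profG_antiField hV u (μ := μ) hθ hX.le c).mul
        (hasDerivAt_re_quadD_antiField V hu c)
      simp only [zero_smul, add_zero] at hd
      refine hd.congr_of_eventuallyEq ?_
      have : ∀ᶠ t in nhds (0 : ℝ), sqn (c + t • antiField V u c) < X :=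
        hcont.continuousAt.eventually_lt continuousAt_const (by rwa [h0])
      filter_upwards [this] with t ht
      rw [max_eq_left ((profG_pos_iff hV hμ hθ hX.le _).mpr ht).le]
      rfl
    · rw [Set.indicator_of_notMem (by simpa using h.le)]
      refine (hasDerivAt_const (0 : ℝ) (0 : ℝ)).congr_of_eventuallyEq ?_
      have : ∀ᶠ t in nhds (0 : ℝ), X < sqn (c + t • antiField V u c) :=
        continuousAt_const.eventually_lt hcont.continuousAt (by rwa [h0])
      filter_upwards [this] with t ht
      rw [max_eq_right (hnonpos _ ht.le), zero_mul]

/-- The average of the test identities over the directions `u = 1` and `u = i`. -/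
noncomputable def avgJ {n k : ℕ} (V : Matrix (Fin n) (Fin k) ℂ) (μ X : ℝ) (θ : ℝ)
    (c : Fin k → ℂ) : ℝ :=
  sqn (antiK V c) * profG V μ θ X c + ‖quadD V c‖ ^ 2 *
    (-μ * baseP V θ (sqn c) c ^ (-μ - 1) * (1 + sqn c - θ * sqn (antiK V c)) +
      μ * baseP V θ X c ^ (-μ - 1) * (sqn c - θ * sqn (antiK V c)))

theorem continuousOn_baseP_rpow {n k : ℕ} {V : Matrix (Fin n) (Fin k) ℂ} (hV : Vᴴ * V = 1)
    {Y : (Fin k → ℂ) → ℝ} (hY : Continuous Y) (hY0 : ∀ c, 0 ≤ Y c) (μ : ℝ) :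
    ContinuousOn (fun p : ℝ × (Fin k → ℂ) => baseP V p.1 (Y p.2) p.2 ^ μ)
      (Set.Iic 1 ×ˢ Set.univ) := by
  have h1 := (contDiff_sqn (k := k)).continuous
  have h2 := (contDiff_quadD V).continuous
  refine ContinuousOn.rpow_const ?_ fun p hp =>
    Or.inl (zero_lt_one.trans_le (one_le_baseP hV hp.1 (hY0 _) _)).ne'
  unfold baseP
  fun_prop

theorem continuousOn_avgJ {n k : ℕ} {V : Matrix (Fin n) (Fin k) ℂ} (hV : Vᴴ * V = 1)
    {μ X : ℝ} (hX : 0 ≤ X) :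
    ContinuousOn (fun p : ℝ × (Fin k → ℂ) => avgJ V μ X p.1 p.2) (Set.Iic 1 ×ˢ Set.univ) := by
  have h1 := (contDiff_sqn (k := k)).continuous
  have h2 := (contDiff_quadD V).continuous
  have h3 : Continuous fun c => sqn (antiK V c) := h1.comp (continuous_antiK V)
  have d1 : ContinuousOn (fun p : ℝ × (Fin k → ℂ) => sqn p.2) (Set.Iic 1 ×ˢ Set.univ) :=
    (h1.comp continuous_snd).continuousOn
  have d2 : ContinuousOn (fun p : ℝ × (Fin k → ℂ) => quadD V p.2) (Set.Iic 1 ×ˢ Set.univ) :=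
    (h2.comp continuous_snd).continuousOn
  have d3 : ContinuousOn (fun p : ℝ × (Fin k → ℂ) => sqn (antiK V p.2)) (Set.Iic 1 ×ˢ Set.univ) :=
    (h3.comp continuous_snd).continuousOn
  have a1 := continuousOn_baseP_rpow hV h1 sqn_nonneg (-μ)
  have a2 := continuousOn_baseP_rpow hV h1 sqn_nonneg (-μ - 1)
  have b1 := continuousOn_baseP_rpow hV (continuous_const (y := X)) (fun _ => hX) (-μ)
  have b2 := continuousOn_baseP_rpow hV (continuous_const (y := X)) (fun _ => hX) (-μ - 1)
  unfold avgJ profG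
  fun_prop

theorem integral_avgJ_eq_zero {n k : ℕ} (hk : 0 < k) {V : Matrix (Fin n) (Fin k) ℂ}
    (hV : Vᴴ * V = 1) {μ θ X : ℝ} (hμ : 0 < μ) (hθ : θ ≤ 1) (hX : 0 < X) :
    ∫ c in {c | sqn c < X}, avgJ V μ X θ c = 0 := by
  have e1 := integral_testField_eq_zero hk hV (u := 1) (by simp) hμ hθ hX
  have e2 := integral_testField_eq_zero hk hV (u := Complex.I) (by simp) hμ hθ hX
  have h1 := (contDiff_sqn (k := k)).continuous
  have h2 := (contDiff_quadD V).continuous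
  have h3 : Continuous fun c => sqn (antiK V c) := h1.comp (continuous_antiK V)
  have hg := (contDiff_profG hV (μ := μ) hθ hX.le).continuous
  have a2 : Continuous fun c => baseP V θ (sqn c) c ^ (-μ - 1) :=
    Continuous.rpow_const (by unfold baseP; fun_prop) fun c =>
      Or.inl (zero_lt_one.trans_le (one_le_baseP hV hθ (sqn_nonneg c) c)).ne'
  have b2 : Continuous fun c => baseP V θ X c ^ (-μ - 1) :=
    Continuous.rpow_const (by unfold baseP; fun_prop) fun c =>
      Or.inl (zero_lt_one.trans_le (one_le_baseP hV hθ hX.le c)).ne'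
  have hx : ∀ u : ℂ, Continuous fun c => (star u * quadD V c).re := fun u => by fun_prop
  have hx1 := hx 1
  have hx2 := hx Complex.I
  have hsum := integral_add
    (ContinuousOn.integrableOn_sqn_lt (X := X) (Continuous.continuousOn (f := fun c =>
      (4 * (star (1 : ℂ) * quadD V c).re *
      (-μ * baseP V θ (sqn c) c ^ (-μ - 1) * (1 + sqn c - θ * sqn (antiK V c)) +
        μ * baseP V θ X c ^ (-μ - 1) * (sqn c - θ * sqn (antiK V c))) * (star (1 : ℂ) * quadD V c).re +
      profG V μ θ X c * (2 * sqn (antiK V c)))) (by fun_prop)))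
    (ContinuousOn.integrableOn_sqn_lt (X := X) (Continuous.continuousOn (f := fun c =>
      (4 * (star Complex.I * quadD V c).re *
      (-μ * baseP V θ (sqn c) c ^ (-μ - 1) * (1 + sqn c - θ * sqn (antiK V c)) +
        μ * baseP V θ X c ^ (-μ - 1) * (sqn c - θ * sqn (antiK V c))) *
          (star Complex.I * quadD V c).re +
      profG V μ θ X c * (2 * sqn (antiK V c)))) (by fun_prop)))
  rw [e1, e2, add_zero] at hsum
  have h4 : ∫ c in {c | sqn c < X}, 4 * avgJ V μ X θ c = 0 := by
    rw [← hsum]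
    congr 1
    funext c
    rw [avgJ, Complex.sq_norm, Complex.normSq_apply]
    simp
    ring
  rw [integral_const_mul] at h4
  linarith

theorem integral_avgJ_theta {n k : ℕ} {V : Matrix (Fin n) (Fin k) ℂ}
    (hV : Vᴴ * V = 1) {μ X : ℝ} (hX : 0 ≤ X) (c : Fin k → ℂ) :
    ∫ θ in (0 : ℝ)..1, avgJ V μ X θ c =
      (sqn (antiK V c) * (baseP V 1 (sqn c) c ^ (-μ) - baseP V 1 X c ^ (-μ)) -
        (1 + sqn c) * baseP V 1 (sqn c) c ^ (-μ) + sqn c * baseP V 1 X c ^ (-μ)) -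
      (-(1 + sqn c) * baseP V 0 (sqn c) c ^ (-μ) + sqn c * baseP V 0 X c ^ (-μ)) := by
  have hbase : ∀ Y, 0 ≤ Y → ∀ θ ∈ Set.uIcc (0 : ℝ) 1,
      HasDerivAt (fun θ => baseP V θ Y c ^ (-μ))
        (μ * ‖quadD V c‖ ^ 2 * baseP V θ Y c ^ (-μ - 1)) θ := by
    intro Y hY θ hθ
    rw [Set.uIcc_of_le zero_le_one] at hθ
    have h1 : HasDerivAt (fun θ => baseP V θ Y c) (-‖quadD V c‖ ^ 2) θ := by
      have := ((hasDerivAt_id θ).mul_const (‖quadD V c‖ ^ 2)).const_sub (1 + 2 * Y + sqn c ^ 2)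
      simpa [baseP] using this
    refine (h1.rpow_const (Or.inl
      (zero_lt_one.trans_le (one_le_baseP hV hθ.2 hY c)).ne')).congr_deriv ?_
    ring
  have h := intervalIntegral.integral_eq_sub_of_hasDerivAt (a := 0) (b := 1)
    (f := fun θ => θ * sqn (antiK V c) * (baseP V θ (sqn c) c ^ (-μ) - baseP V θ X c ^ (-μ)) -
      (1 + sqn c) * baseP V θ (sqn c) c ^ (-μ) + sqn c * baseP V θ X c ^ (-μ))
    (f' := fun θ => avgJ V μ X θ c) ?_ ?_
  · rw [h]
    ring
  · intro θ hθ
    have ha := hbase (sqn c) (sqn_nonneg c) θ hθ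
    have hb := hbase X hX θ hθ
    have := ((((hasDerivAt_id θ).mul_const (sqn (antiK V c))).mul (ha.sub hb)).sub
      (ha.const_mul (1 + sqn c))).add (hb.const_mul (sqn c))
    refine HasDerivAt.congr_deriv (f' := _) this ?_
    simp only [avgJ, profG, id]
    simp
    ring
  · refine ContinuousOn.intervalIntegrable ?_
    rw [Set.uIcc_of_le zero_le_one]
    exact (continuousOn_avgJ hV hX (μ := μ)).comp (f := fun θ : ℝ => (θ, c))
      (by fun_prop) fun θ hθ => ⟨hθ.2, trivial⟩

theorem continuous_dens {n k : ℕ} {V : Matrix (Fin n) (Fin k) ℂ} (hV : Vᴴ * V = 1) (m : ℕ) :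
    Continuous (dens m V) := by
  have h1 := (contDiff_sqn (k := k)).continuous
  have h2 := (contDiff_quadD V).continuous
  have h3 : Continuous fun c => sqn (antiK V c) := h1.comp (continuous_antiK V)
  refine (Continuous.rpow_const (by fun_prop) fun c => Or.inl ?_).mul (by fun_prop)
  have := one_le_baseP hV le_rfl (sqn_nonneg c) c
  unfold baseP at this
  nlinarith

theorem le_integral_dens {n k : ℕ} (hk : 0 < k) {V : Matrix (Fin n) (Fin k) ℂ}
    (hV : Vᴴ * V = 1) (m : ℕ) {X : ℝ} (hX : 0 < X) :
    ∫ c in {c : Fin k → ℂ | sqn c < X}, ((1 + sqn c) ^ (-(m : ℝ) - 1) -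
      sqn c * (1 + 2 * X + sqn c ^ 2) ^ (-((m : ℝ) / 2 + 1))) ≤
    ∫ c in {c | sqn c < X}, dens m V c := by
  set μ : ℝ := (m : ℝ) / 2 + 1 with hμdef
  have hμ : 0 < μ := by positivity
  set S := {c : Fin k → ℂ | sqn c < X} with hS
  have hswap : ∫ c in S, ∫ θ in (0 : ℝ)..1, avgJ V μ X θ c = 0 := by
    have hInt : Integrable (Function.uncurry fun θ c => avgJ V μ X θ c)
        ((volume.restrict (Set.Ioc (0 : ℝ) 1)).prod (volume.restrict S)) := by
      rw [Measure.prod_restrict]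
      refine IntegrableOn.mono_set (t := Set.Icc 0 1 ×ˢ {c | sqn c ≤ X}) ?_
        (Set.prod_mono Set.Ioc_subset_Icc_self fun c (hc : sqn c < X) => hc.le)
      exact ContinuousOn.integrableOn_compact (isCompact_Icc.prod (isCompact_sqn_le k X))
        ((continuousOn_avgJ hV hX.le).mono
          (Set.prod_mono Set.Icc_subset_Iic_self (Set.subset_univ _)))
    have h := integral_integral_swap hInt
    simp_rw [intervalIntegral.integral_of_le zero_le_one]
    rw [← h]
    rw [setIntegral_congr_fun (g := fun _ => 0) measurableSet_Ioc
      fun θ hθ => integral_avgJ_eq_zero hk hV hμ hθ.2 hX]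
    simp
  have h1 := (contDiff_sqn (k := k)).continuous
  have h2 := (contDiff_quadD V).continuous
  have h3 : Continuous fun c => sqn (antiK V c) := h1.comp (continuous_antiK V)
  have hb : ∀ θ ≤ (1 : ℝ), ∀ Y : (Fin k → ℂ) → ℝ, Continuous Y → (∀ c, 0 ≤ Y c) →
      Continuous fun c => baseP V θ (Y c) c ^ (-μ) := fun θ hθ Y hY hY0 =>
    Continuous.rpow_const (by unfold baseP; fun_prop) fun c =>
      Or.inl (zero_lt_one.trans_le (one_le_baseP hV hθ (hY0 c) c)).ne'
  have c1 := hb 1 le_rfl sqn h1 sqn_nonneg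
  have c2 := hb 1 le_rfl (fun _ => X) continuous_const fun _ => hX.le
  have c3 := hb 0 zero_le_one sqn h1 sqn_nonneg
  have c4 := hb 0 zero_le_one (fun _ => X) continuous_const fun _ => hX.le
  have cd := continuous_dens hV m
  simp_rw [integral_avgJ_theta hV hX.le] at hswap
  rw [← add_zero (∫ c in S, dens m V c), ← hswap, ← integral_add
    cd.continuousOn.integrableOn_sqn_lt
    (Continuous.continuousOn (by fun_prop)).integrableOn_sqn_lt]
  have e3 : ∀ c : Fin k → ℂ, (1 + sqn c) ^ (-(m : ℝ) - 1) =
      (1 + sqn c) * baseP V 0 (sqn c) c ^ (-μ) := fun c => by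
    have hp : 0 < 1 + sqn c := by linarith [sqn_nonneg c]
    rw [show baseP V 0 (sqn c) c = (1 + sqn c) ^ (2 : ℝ) by rw [baseP, Real.rpow_two]; ring,
      ← Real.rpow_mul hp.le, mul_comm (1 + sqn c), ← Real.rpow_add_one hp.ne']
    congr 1
    rw [hμdef]
    ring
  have e4 : ∀ c : Fin k → ℂ, 1 + 2 * X + sqn c ^ 2 = baseP V 0 X c := fun c => by
    rw [baseP]; ring
  simp_rw [e3, e4]
  refine setIntegral_mono
    (Continuous.continuousOn (by fun_prop)).integrableOn_sqn_lt
    (Continuous.continuousOn (by fun_prop)).integrableOn_sqn_lt fun c => ?_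
  have hd : dens m V c = baseP V 1 (sqn c) c ^ (-μ) * (1 + sqn c - sqn (antiK V c)) := by
    rw [dens, baseP]
    congr 2
    ring
  have hle := sqn_antiK_le hV c
  have hBpos : 0 ≤ baseP V 1 X c ^ (-μ) :=
    Real.rpow_nonneg (zero_le_one.trans (one_le_baseP hV le_rfl hX.le c)) _
  simp only [hd]
  nlinarith [mul_nonneg hBpos (sub_nonneg.mpr hle)]

theorem integrableOn_rpow_mul_exp {a r : ℝ} (ha : 0 < a) (hr : 0 < r) :
    IntegrableOn (fun t : ℝ => t ^ (a - 1) * Real.exp (-(r * t))) (Set.Ioi 0) :=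
  Integrable.of_integral_ne_zero (by
    rw [Real.integral_rpow_mul_exp_neg_mul_Ioi ha hr]
    have := Real.Gamma_pos_of_pos ha
    positivity)

/-- The Beta integral on the half-line. -/
theorem integrableOn_and_integral_beta_Ioi {a b : ℝ} (ha : 0 < a) (hb : 0 < b) :
    IntegrableOn (fun x : ℝ => x ^ (a - 1) * (1 + x) ^ (-(a + b))) (Set.Ioi 0) ∧
    ∫ x in Set.Ioi (0 : ℝ), x ^ (a - 1) * (1 + x) ^ (-(a + b)) =
      Real.Gamma a * Real.Gamma b / Real.Gamma (a + b) := by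
  have hab : 0 < a + b := by positivity
  have hΓ := Real.Gamma_pos_of_pos hab
  set F : ℝ → ℝ → ℝ := fun t x =>
    x ^ (a - 1) * Real.exp (-(t * x)) * (t ^ (a + b - 1) * Real.exp (-t)) with hF
  have hinner : ∀ t ∈ Set.Ioi (0 : ℝ), ∫ x in Set.Ioi (0 : ℝ), F t x =
      Real.Gamma a * (t ^ (b - 1) * Real.exp (-(1 * t))) := fun t ht => by
    have ht' : 0 < t := ht
    rw [hF]
    simp only
    rw [integral_mul_const, Real.integral_rpow_mul_exp_neg_mul_Ioi ha ht', one_div,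
      Real.inv_rpow ht'.le, ← Real.rpow_neg ht'.le, one_mul]
    rw [show b - 1 = -a + (a + b - 1) by ring, Real.rpow_add ht']
    ring
  have hinner' : ∀ x ∈ Set.Ioi (0 : ℝ), ∫ t in Set.Ioi (0 : ℝ), F t x =
      x ^ (a - 1) * (1 + x) ^ (-(a + b)) * Real.Gamma (a + b) := fun x hx => by
    have hx' : 0 < 1 + x := by linarith [show (0 : ℝ) < x from hx]
    have h : ∀ t, F t x = x ^ (a - 1) * (t ^ (a + b - 1) * Real.exp (-((1 + x) * t))) := fun t => by
      rw [hF]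
      simp only
      rw [show -((1 + x) * t) = -(t * x) + -t by ring, Real.exp_add]
      ring
    simp_rw [h]
    rw [integral_const_mul, Real.integral_rpow_mul_exp_neg_mul_Ioi hab hx', one_div,
      Real.inv_rpow hx'.le, ← Real.rpow_neg hx'.le]
    ring
  have hInt : Integrable (Function.uncurry F)
      ((volume.restrict (Set.Ioi (0 : ℝ))).prod (volume.restrict (Set.Ioi (0 : ℝ)))) := by
    rw [integrable_prod_iff]
    · constructor
      · refine (ae_restrict_mem measurableSet_Ioi).mono fun t ht => ?_
        exact (integrableOn_rpow_mul_exp ha ht).mul_const (t ^ (a + b - 1) * Real.exp (-t))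
      · refine ((integrableOn_rpow_mul_exp hb one_pos).const_mul (Real.Gamma a)).congr ?_
        refine (ae_restrict_mem measurableSet_Ioi).mono fun t ht => ?_
        simp only
        rw [← hinner t ht]
        refine setIntegral_congr_fun measurableSet_Ioi fun x hx => ?_
        have ht' : 0 < t := ht
        have hx' : 0 < x := hx
        simp only [Function.uncurry, hF]
        rw [Real.norm_of_nonneg (by positivity)]
    · refine Measurable.aestronglyMeasurable ?_
      simp only [Function.uncurry_def, hF]
      fun_prop
  constructor
  · have h := (hInt.integral_prod_right).mul_const (Real.Gamma (a + b))⁻¹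
    refine h.congr ((ae_restrict_mem measurableSet_Ioi).mono fun x hx => ?_)
    have := hinner' x hx
    simp only [Function.uncurry] at this ⊢
    rw [this, mul_assoc, mul_inv_cancel₀ hΓ.ne', mul_one]
  · have h := integral_integral_swap hInt
    rw [setIntegral_congr_fun measurableSet_Ioi hinner,
      setIntegral_congr_fun measurableSet_Ioi hinner', integral_const_mul, integral_mul_const,
      Real.integral_rpow_mul_exp_neg_mul_Ioi hb one_pos] at h
    rw [eq_div_iff hΓ.ne', ← h]
    simp

theorem integrableOn_and_integral_beta_sq {a b s : ℝ} (ha : 0 < a) (hb : 0 < b) (hs : 0 < s) :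
    IntegrableOn (fun x : ℝ => x ^ (2 * a - 1) * (s + x ^ 2) ^ (-(a + b))) (Set.Ioi 0) ∧
    ∫ x in Set.Ioi (0 : ℝ), x ^ (2 * a - 1) * (s + x ^ 2) ^ (-(a + b)) =
      s ^ (-b) * (Real.Gamma a * Real.Gamma b / Real.Gamma (a + b)) / 2 := by
  obtain ⟨h1, h2⟩ := integrableOn_and_integral_beta_Ioi ha hb
  set g : ℝ → ℝ := fun x => x ^ (a - 1) * (1 + x) ^ (-(a + b)) with hg
  have hs' : 0 < s⁻¹ := inv_pos.mpr hs
  have key : ∀ x ∈ Set.Ioi (0 : ℝ), x ^ (2 * a - 1) * (s + x ^ 2) ^ (-(a + b)) =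
      (s ^ (-b - 1) / 2) * ((|(2 : ℝ)| * x ^ ((2 : ℝ) - 1)) • g (s⁻¹ * x ^ (2 : ℝ))) := fun x hx => by
    have hx' : 0 < x := hx
    have e1 : s + x ^ 2 = s * (1 + s⁻¹ * x ^ (2 : ℝ)) := by
      rw [Real.rpow_two]; field_simp
    rw [e1, hg, Real.mul_rpow hs.le (by positivity)]
    simp only [smul_eq_mul]
    rw [Real.mul_rpow hs'.le (by positivity), ← Real.rpow_mul hx'.le, Real.inv_rpow hs.le,
      ← Real.rpow_neg hs.le, abs_of_pos (by norm_num : (0 : ℝ) < 2)]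
    have e2 : x ^ (2 * a - 1) = x ^ ((2 : ℝ) - 1) * x ^ (2 * (a - 1)) := by
      rw [← Real.rpow_add hx']; congr 1; ring
    have e3 : s ^ (-(a + b)) = s ^ (-b - 1) * s ^ (-(a - 1)) := by
      rw [← Real.rpow_add hs]; congr 1; ring
    rw [e2, e3]
    ring
  have hi : IntegrableOn (fun y => g (s⁻¹ * y)) (Set.Ioi 0) := by
    rw [integrableOn_Ioi_comp_mul_left_iff g 0 hs', mul_zero]
    exact h1
  constructor
  · refine IntegrableOn.congr_fun (f := fun x => (s ^ (-b - 1) / 2) *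
      ((|(2 : ℝ)| * x ^ ((2 : ℝ) - 1)) • g (s⁻¹ * x ^ (2 : ℝ)))) ?_ (fun x hx => (key x hx).symm)
      measurableSet_Ioi
    refine Integrable.const_mul ?_ _
    exact (integrableOn_Ioi_comp_rpow_iff (fun y => g (s⁻¹ * y)) two_ne_zero).mpr hi
  · rw [setIntegral_congr_fun measurableSet_Ioi key, integral_const_mul,
      integral_comp_rpow_Ioi (fun y => g (s⁻¹ * y)) two_ne_zero,
      integral_comp_mul_left_Ioi g 0 hs', mul_zero, h2, inv_inv, smul_eq_mul, Real.rpow_sub_one hs.ne']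
    field_simp

theorem volume_real_sqn_lt_one {k : ℕ} (hk : 0 < k) :
    (volC k).real (Metric.ball 0 1) = Real.pi ^ k / k.factorial := by
  have : Nonempty (Fin k) := ⟨⟨0, hk⟩⟩
  have h := Complex.volume_sum_rpow_lt (Fin k) (p := 2) (by norm_num) 1
  have hset : {x : Fin k → ℂ | (∑ i, ‖x i‖ ^ (2 : ℝ)) ^ (1 / (2 : ℝ)) < 1} =
      (PiLp.continuousLinearEquiv 2 ℝ fun _ : Fin k => ℂ).symm ⁻¹' Metric.ball 0 1 := by
    ext c
    rw [Set.mem_preimage, mem_ball_zero_iff, EuclideanSpace.norm_eq, Real.sqrt_eq_rpow]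
    simp
  rw [hset] at h
  rw [Measure.real, volC, Measure.map_apply (by fun_prop) Metric.isOpen_ball.measurableSet, h]
  have e1 : (2 : ℝ) / 2 + 1 = 2 := by norm_num
  have e2 : 2 * (k : ℝ) / 2 + 1 = k + 1 := by ring
  rw [Fintype.card_fin, e1, e2, Real.Gamma_two, Real.Gamma_nat_eq_factorial, mul_one,
    ENNReal.ofReal_one, one_pow, one_mul, ENNReal.toReal_ofReal (by positivity)]

theorem integral_fun_sqn {k : ℕ} (hk : 0 < k) (f : ℝ → ℝ) :
    ∫ c : Fin k → ℂ, f (sqn c) =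
      Real.pi ^ k / Real.Gamma k * ∫ x in Set.Ioi (0 : ℝ), x ^ (k - 1) * f x := by
  have : Nonempty (Fin k) := ⟨⟨0, hk⟩⟩
  have hfin : Module.finrank ℝ (EuclideanSpace ℂ (Fin k)) = 2 * k := by
    rw [← Module.finrank_mul_finrank ℝ ℂ (EuclideanSpace ℂ (Fin k)), Complex.finrank_real_complex,
      finrank_euclideanSpace_fin]
  have h := integral_fun_norm_addHaar (volC k) fun r => f (r ^ 2)
  rw [hfin, volume_real_sqn_lt_one hk] at h
  have hl : ∫ x, f (‖x‖ ^ 2) ∂(volC k) = ∫ c : Fin k → ℂ, f (sqn c) := by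
    have := ((PiLp.continuousLinearEquiv 2 ℝ
      fun _ : Fin k => ℂ).symm.toHomeomorph.toMeasurableEquiv).measurableEmbedding.integral_map
        (μ := volume) fun x : EuclideanSpace ℂ (Fin k) => f (‖x‖ ^ 2)
    rw [volC]
    refine this.trans ?_
    congr 1
    funext c
    rw [sqn_eq_norm_toLp]
    rfl
  rw [← hl, h]
  have hc : ∫ y in Set.Ioi (0 : ℝ), y ^ (2 * k - 1) • f (y ^ 2) =
      (1 / 2) * ∫ x in Set.Ioi (0 : ℝ), x ^ (k - 1) * f x := by
    rw [← integral_comp_rpow_Ioi (fun x : ℝ => x ^ (k - 1) * f x) two_ne_zero, ← integral_const_mul]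
    refine setIntegral_congr_fun measurableSet_Ioi fun x hx => ?_
    simp only [smul_eq_mul, abs_of_pos (by norm_num : (0 : ℝ) < 2)]
    rw [Real.rpow_two, ← pow_mul, show (2 : ℝ) - 1 = 1 by norm_num, Real.rpow_one,
      show 2 * k - 1 = 2 * (k - 1) + 1 by omega, pow_succ]
    ring
  rw [hc]
  obtain ⟨l, rfl⟩ : ∃ l, k = l + 1 := ⟨k - 1, by omega⟩
  rw [Nat.cast_add_one, Real.Gamma_nat_eq_factorial, Nat.factorial_succ]
  simp only [nsmul_eq_mul, smul_eq_mul]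
  push_cast
  field_simp

/-- The bound for the mass escaping the ball `R < X`. -/
noncomputable def tailT (k p : ℕ) (X : ℝ) : ℝ :=
  (1 + 1 / X) * ((k + p).descFactorial k / Real.Gamma k) *
    ((1 + 2 * X) ^ (-(((p : ℝ) + 1) / 2)) *
      (Real.Gamma (((k : ℝ) + 1) / 2) * Real.Gamma (((p : ℝ) + 1) / 2) /
        Real.Gamma (((k : ℝ) + 1) / 2 + ((p : ℝ) + 1) / 2)) / 2)

theorem profile_le {k p : ℕ} {X x : ℝ} (hk : 0 < k) (hX : 0 < X) (hx : 0 < x) :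
    x ^ ((k : ℝ) - 1) * (1 + x) ^ (-((k : ℝ) + (p + 1))) -
      (1 + 1 / X) * (x ^ (2 * (((k : ℝ) + 1) / 2) - 1) *
        (1 + 2 * X + x ^ 2) ^ (-(((k : ℝ) + 1) / 2 + ((p : ℝ) + 1) / 2))) ≤
    x ^ (k - 1) * (Set.Iio X).indicator (fun x => (1 + x) ^ (-((k + p : ℕ) : ℝ) - 1) -
      x * (1 + 2 * X + x ^ 2) ^ (-(((k + p : ℕ) : ℝ) / 2 + 1))) x := by
  have e1 : x ^ ((k : ℝ) - 1) = x ^ (k - 1) := by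
    rw [← Real.rpow_natCast, Nat.cast_sub hk, Nat.cast_one]
  have e2 : x ^ (2 * (((k : ℝ) + 1) / 2) - 1) = x ^ (k - 1) * x := by
    rw [show 2 * (((k : ℝ) + 1) / 2) - 1 = (k : ℝ) by ring, Real.rpow_natCast, ← pow_succ,
      Nat.sub_add_cancel hk]
  have e3 : -(((k : ℝ) + 1) / 2 + ((p : ℝ) + 1) / 2) = -(((k + p : ℕ) : ℝ) / 2 + 1) := by
    push_cast; ring
  have e4 : -((k : ℝ) + (p + 1)) = -((k + p : ℕ) : ℝ) - 1 := by push_cast; ring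
  rw [e1, e2, e3, e4]
  set μ : ℝ := ((k + p : ℕ) : ℝ) / 2 + 1 with hμ
  have hμ0 : 0 ≤ μ := by positivity
  have hpow : 0 ≤ x ^ (k - 1) := by positivity
  set B := (1 + 2 * X + x ^ 2) ^ (-μ) with hB
  have hB0 : 0 ≤ B := by positivity
  have hXi : 0 < 1 / X := by positivity
  by_cases hlt : x < X
  · rw [Set.indicator_of_mem (Set.mem_Iio.mpr hlt)]
    have : x ^ (k - 1) * x * B ≤ (1 + 1 / X) * (x ^ (k - 1) * x * B) :=
      le_mul_of_one_le_left (by positivity) (by linarith)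
    linarith
  · rw [Set.indicator_of_notMem (by simpa using hlt), mul_zero]
    push Not at hlt
    have h1 : (1 + x) ^ (-((k + p : ℕ) : ℝ) - 1) ≤ (1 + x) * B := by
      have : (1 + x) ^ (-((k + p : ℕ) : ℝ) - 1) = (1 + x) * ((1 + x) ^ (2 : ℝ)) ^ (-μ) := by
        rw [← Real.rpow_mul (by positivity), mul_comm (1 + x), ← Real.rpow_add_one (by positivity)]
        congr 1
        rw [hμ]
        ring
      rw [this]
      refine mul_le_mul_of_nonneg_left ?_ (by positivity)
      refine Real.rpow_le_rpow_of_nonpos (by positivity) ?_ (by linarith)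
      rw [Real.rpow_two]
      nlinarith
    have h2 : 1 + x ≤ (1 + 1 / X) * x := by
      have : 1 ≤ 1 / X * x := by
        rw [one_div, inv_mul_eq_div, le_div_iff₀ hX]
        linarith
      linarith
    have h3 : x ^ (k - 1) * (1 + x) ^ (-((k + p : ℕ) : ℝ) - 1) ≤
        x ^ (k - 1) * ((1 + 1 / X) * x * B) :=
      mul_le_mul_of_nonneg_left (h1.trans (mul_le_mul_of_nonneg_right h2 hB0)) hpow
    linarith

theorem one_sub_mass_le_tailT {n k p : ℕ} (hk : 0 < k) {V : Matrix (Fin n) (Fin k) ℂ}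
    (hV : Vᴴ * V = 1) {X : ℝ} (hX : 0 < X) :
    1 - (k + p).descFactorial k / Real.pi ^ k * ∫ c in {c | sqn c < X}, dens (k + p) V c ≤
      tailT k p X := by
  have hk' : (0 : ℝ) < k := Nat.cast_pos.mpr hk
  set M : ℝ := ((k + p).descFactorial k : ℝ) with hM
  have hM0 : 0 ≤ M := Nat.cast_nonneg _
  set r : ℝ := ((p : ℝ) + 1) / 2 with hr
  have hr0 : 0 < r := by positivity
  obtain ⟨i1, j1⟩ := integrableOn_and_integral_beta_Ioi hk' (by positivity : (0 : ℝ) < p + 1)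
  obtain ⟨i2, j2⟩ := integrableOn_and_integral_beta_sq (s := 1 + 2 * X)
    (by positivity : 0 < ((k : ℝ) + 1) / 2) hr0 (by positivity)
  set h : ℝ → ℝ := fun x => (1 + x) ^ (-((k + p : ℕ) : ℝ) - 1) -
      x * (1 + 2 * X + x ^ 2) ^ (-(((k + p : ℕ) : ℝ) / 2 + 1)) with hh
  have hrad : ∫ c in {c : Fin k → ℂ | sqn c < X}, h (sqn c) =
      Real.pi ^ k / Real.Gamma k *
        ∫ x in Set.Ioi (0 : ℝ), x ^ (k - 1) * (Set.Iio X).indicator h x := by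
    rw [← integral_fun_sqn hk, ← integral_indicator (measurableSet_sqn_lt k X)]
    rfl
  have hInt : IntegrableOn (fun x => x ^ (k - 1) * (Set.Iio X).indicator h x) (Set.Ioi 0) := by
    have hc : ContinuousOn (fun x : ℝ => x ^ (k - 1) * h x) (Set.Icc 0 X) := by
      refine ContinuousOn.mul (by fun_prop) (ContinuousOn.sub ?_ (ContinuousOn.mul (by fun_prop) ?_))
      · refine ContinuousOn.rpow_const (by fun_prop) fun x hx => Or.inl ?_
        linarith [hx.1]
      · refine ContinuousOn.rpow_const (by fun_prop) fun x hx => Or.inl ?_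
        positivity
    have h1 : IntegrableOn (fun x : ℝ => x ^ (k - 1) * h x) (Set.Iio X ∩ Set.Ioi 0) :=
      (hc.integrableOn_compact isCompact_Icc).mono_set fun x hx => ⟨le_of_lt hx.2, le_of_lt hx.1⟩
    have h2 : (fun x => x ^ (k - 1) * (Set.Iio X).indicator h x) =
        (Set.Iio X).indicator fun x => x ^ (k - 1) * h x := by
      funext x
      by_cases hx : x < X
      · rw [Set.indicator_of_mem (Set.mem_Iio.mpr hx), Set.indicator_of_mem (Set.mem_Iio.mpr hx)]
      · rw [Set.indicator_of_notMem (by simpa using hx), Set.indicator_of_notMem (by simpa using hx),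
          mul_zero]
    rw [h2]
    rw [IntegrableOn, integrable_indicator_iff measurableSet_Iio, IntegrableOn,
      Measure.restrict_restrict measurableSet_Iio]
    exact h1
  have hmono : ∫ x in Set.Ioi (0 : ℝ), (x ^ ((k : ℝ) - 1) * (1 + x) ^ (-((k : ℝ) + (p + 1))) -
      (1 + 1 / X) * (x ^ (2 * (((k : ℝ) + 1) / 2) - 1) *
        (1 + 2 * X + x ^ 2) ^ (-(((k : ℝ) + 1) / 2 + r)))) ≤
      ∫ x in Set.Ioi (0 : ℝ), x ^ (k - 1) * (Set.Iio X).indicator h x :=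
    setIntegral_mono_on (i1.sub (i2.const_mul _)) hInt measurableSet_Ioi
      fun x hx => profile_le hk hX hx
  rw [integral_sub i1 (i2.const_mul _), integral_const_mul, j1, j2] at hmono
  have hdens := le_integral_dens hk hV (k + p) hX
  have hΓk := Real.Gamma_pos_of_pos hk'
  have hmass : M / Real.Gamma k * (Real.Gamma k * Real.Gamma ((p : ℝ) + 1) /
      Real.Gamma ((k : ℝ) + (p + 1))) = 1 := by
    have e : (k : ℝ) + (p + 1) = ((k + p : ℕ) : ℝ) + 1 := by push_cast; ring
    have hf := Nat.factorial_mul_descFactorial (Nat.le_add_right k p)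
    rw [Nat.add_sub_cancel_left] at hf
    rw [e, Real.Gamma_nat_eq_factorial, Real.Gamma_nat_eq_factorial, ← hf, hM]
    have h1 : ((p.factorial : ℕ) : ℝ) ≠ 0 := by exact_mod_cast p.factorial_ne_zero
    have h2 : (((k + p).descFactorial k : ℕ) : ℝ) ≠ 0 := by
      exact_mod_cast (Nat.descFactorial_pos.mpr (Nat.le_add_right k p)).ne'
    push_cast
    field_simp
  have hfin : M / Real.pi ^ k * (Real.pi ^ k / Real.Gamma k *
      (Real.Gamma k * Real.Gamma ((p : ℝ) + 1) / Real.Gamma ((k : ℝ) + (p + 1)) -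
        (1 + 1 / X) * ((1 + 2 * X) ^ (-r) * (Real.Gamma (((k : ℝ) + 1) / 2) * Real.Gamma r /
          Real.Gamma (((k : ℝ) + 1) / 2 + r)) / 2))) = 1 - tailT k p X := by
    have hpi : ∀ Z, M / Real.pi ^ k * (Real.pi ^ k / Real.Gamma k * Z) = M / Real.Gamma k * Z :=
      fun Z => by
        have : Real.pi ^ k ≠ 0 := by positivity
        field_simp
    rw [hpi, mul_sub, hmass, tailT, ← hM, ← hr]
    ring
  have hle : 1 - tailT k p X ≤ M / Real.pi ^ k * ∫ c in {c | sqn c < X}, dens (k + p) V c := by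
    rw [← hfin]
    refine mul_le_mul_of_nonneg_left ?_ (by positivity)
    refine le_trans ?_ hdens
    rw [show (∫ c in {c : Fin k → ℂ | sqn c < X}, ((1 + sqn c) ^ (-((k + p : ℕ) : ℝ) - 1) -
      sqn c * (1 + 2 * X + sqn c ^ 2) ^ (-(((k + p : ℕ) : ℝ) / 2 + 1)))) =
      ∫ c in {c : Fin k → ℂ | sqn c < X}, h (sqn c) from rfl, hrad]
    exact mul_le_mul_of_nonneg_left hmono (by positivity)
  linarith

theorem measurePreserving_unitary_mulVec {k : ℕ} {U : Matrix (Fin k) (Fin k) ℂ}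
    (hU : Uᴴ * U = 1) :
    MeasurePreserving (fun c : Fin k → ℂ => U *ᵥ c) volume volume := by
  have hU' : U * Uᴴ = 1 := mul_eq_one_comm.mp hU
  set e : (Fin k → ℂ) ≃ₗ[ℝ] (Fin k → ℂ) := LinearEquiv.ofLinearMap
    (U.mulVecLin.restrictScalars ℝ) (Uᴴ.mulVecLin.restrictScalars ℝ)
    (LinearMap.ext fun c => by simp [mulVec_mulVec, hU'])
    (LinearMap.ext fun c => by simp [mulVec_mulVec, hU]) with he
  have hmap := Measure.map_linearMap_addHaar_eq_smul_addHaar (volume : Measure (Fin k → ℂ))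
    (f := (e : (Fin k → ℂ) →ₗ[ℝ] (Fin k → ℂ))) (LinearEquiv.isUnit_det' e).ne_zero
  have hfun : ⇑(e : (Fin k → ℂ) →ₗ[ℝ] (Fin k → ℂ)) = fun c => U *ᵥ c := rfl
  rw [hfun] at hmap
  have hcont : Continuous fun c : Fin k → ℂ => U *ᵥ c := by fun_prop
  have hS := measurableSet_sqn_lt k 1
  have h1 := congrArg (fun ν => ν {c : Fin k → ℂ | sqn c < 1}) hmap
  simp only [Measure.map_apply hcont.measurable hS, Measure.smul_apply, smul_eq_mul] at h1
  have hpre : (fun c : Fin k → ℂ => U *ᵥ c) ⁻¹' {c | sqn c < 1} = {c | sqn c < 1} := by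
    ext c
    simp [sqn_mulVec hU]
  rw [hpre] at h1
  have hfin : volume {c : Fin k → ℂ | sqn c < 1} ≠ ⊤ :=
    ((measure_mono fun c (hc : sqn c < 1) => hc.le).trans_lt
      (isCompact_sqn_le k 1).measure_lt_top).ne
  have hpos : volume {c : Fin k → ℂ | sqn c < 1} ≠ 0 := by
    refine (IsOpen.measure_pos _ (isOpen_lt contDiff_sqn.continuous continuous_const)
      ⟨0, ?_⟩).ne'
    simp [sqn]
  have hone : ENNReal.ofReal |(LinearMap.det (e : (Fin k → ℂ) →ₗ[ℝ] (Fin k → ℂ)))⁻¹| = 1 := by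
    have := h1.symm
    nth_rewrite 2 [← one_mul (volume {c : Fin k → ℂ | sqn c < 1})] at this
    exact (ENNReal.mul_left_inj hpos hfin).mp this
  rw [hone, one_smul] at hmap
  exact ⟨hcont.measurable, hmap⟩

theorem integral_complex_fun_normSq (f : ℝ → ℝ) :
    ∫ z : ℂ, f (‖z‖ ^ 2) = Real.pi * ∫ x in Set.Ioi (0 : ℝ), f x := by
  have h := integral_fun_sqn one_pos f
  have h2 := (volume_preserving_funUnique (Fin 1) ℂ).integral_comp
    (MeasurableEquiv.measurableEmbedding _) fun z => f (‖z‖ ^ 2)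
  have h3 : ∫ c : Fin 1 → ℂ, f (sqn c) = ∫ z : ℂ, f (‖z‖ ^ 2) := by
    rw [← h2]
    refine integral_congr_ae (Filter.Eventually.of_forall fun c => ?_)
    simp only [sqn, Finset.univ_unique, Fin.default_eq_zero, Finset.sum_singleton]
    rfl
  rw [← h3, h]
  simp

theorem integral_exp_normSq {l : ℝ} (hl : 0 < l) :
    ∫ z : ℂ, l * Real.exp (-(l * ‖z‖ ^ 2)) = Real.pi := by
  rw [integral_complex_fun_normSq fun x => l * Real.exp (-(l * x)), integral_const_mul]
  have := Real.integral_rpow_mul_exp_neg_mul_Ioi one_pos hl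
  simp only [sub_self, Real.rpow_zero, one_mul, Real.rpow_one, Real.Gamma_one] at this
  rw [this]
  field_simp

theorem integral_exp_normSq_lt {l X : ℝ} (hX : 0 ≤ X) :
    ∫ z : ℂ, (if ‖z‖ ^ 2 < X then l * Real.exp (-(l * ‖z‖ ^ 2)) else 0) =
      Real.pi * (1 - Real.exp (-(l * X))) := by
  rw [integral_complex_fun_normSq fun x => if x < X then l * Real.exp (-(l * x)) else 0]
  congr 1
  have h1 : ∀ x : ℝ, (if x < X then l * Real.exp (-(l * x)) else 0) =
      (Set.Iio X).indicator (fun x => l * Real.exp (-(l * x))) x := fun x => rfl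
  simp_rw [h1]
  rw [integral_indicator measurableSet_Iio, Measure.restrict_restrict measurableSet_Iio,
    Set.Iio_inter_Ioi, ← integral_Ioc_eq_integral_Ioo, ← intervalIntegral.integral_of_le hX]
  rw [intervalIntegral.integral_eq_sub_of_hasDerivAt (f := fun x => -Real.exp (-(l * x)))]
  · simp
    ring
  · intro x _
    have := ((((hasDerivAt_id x).const_mul l).neg).exp).neg
    refine HasDerivAt.congr_deriv (f' := _) this ?_
    simp
    ring
  · exact Continuous.intervalIntegrable (by fun_prop) _ _

/-- The Gaussian mass of the ball `R < X` with precision matrix `W`. -/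
noncomputable def massN {k : ℕ} (X : ℝ) (W : Matrix (Fin k) (Fin k) ℂ) : ℝ :=
  1 / Real.pi ^ k * ∫ c in {c : Fin k → ℂ | sqn c < X},
    W.det.re * Real.exp (-(star c ⬝ᵥ (W *ᵥ c)).re)

theorem integral_massN_wish {n k m : ℕ} (hkm : k ≤ m) {V : Matrix (Fin n) (Fin k) ℂ}
    (hV : Vᴴ * V = 1) (X : ℝ) :
    Integrable (fun H => massN X (wish V H)) (gaussMat m n) ∧
    ∫ H, massN X (wish V H) ∂(gaussMat m n) =
      m.descFactorial k / Real.pi ^ k * ∫ c in {c | sqn c < X}, dens m V c := by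
  set S := {c : Fin k → ℂ | sqn c < X} with hS
  have hfin : IsFiniteMeasure ((volume : Measure (Fin k → ℂ)).restrict S) :=
    ⟨by
      rw [Measure.restrict_apply_univ]
      exact (measure_mono fun c (hc : sqn c < X) => hc.le).trans_lt
        (isCompact_sqn_le k X).measure_lt_top⟩
  have hquad : ∀ (H : Fin m → Fin n → ℝ) (c : Fin k → ℂ), (star c ⬝ᵥ (wish V H *ᵥ c)).re =
      ∑ j, ‖star c ⬝ᵥ colX V (H j)‖ ^ 2 := fun H c => by
    rw [star_dotProduct_wish, Complex.ofReal_re]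
  have hdet : Integrable (fun H => (wish V H).det.re) (gaussMat m n) := by
    simpa using (integrable_and_integral_det_wish hkm hV 0).1
  have hcol : Continuous fun H : Fin m → Fin n → ℝ => fun j => colX V (H j) := by
    unfold colX; fun_prop
  have hwish : Continuous fun H : Fin m → Fin n → ℝ => wish V H := by
    refine continuous_matrix fun a b => ?_
    unfold wish
    simp only [of_apply]
    have h1 : ∀ j a, Continuous fun H : Fin m → Fin n → ℝ => colX V (H j) a := fun j a =>
      (continuous_apply a).comp ((continuous_apply j).comp hcol)
    exact continuous_finsetSum _ fun j _ => (h1 j a).mul (continuous_star.comp (h1 j b))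
  have hInt : Integrable (Function.uncurry fun (H : Fin m → Fin n → ℝ) (c : Fin k → ℂ) =>
      (wish V H).det.re * Real.exp (-∑ j, ‖star c ⬝ᵥ colX V (H j)‖ ^ 2))
      ((gaussMat m n).prod (volume.restrict S)) := by
    have hb := hdet.mul_prod (integrable_const (1 : ℝ) (μ := volume.restrict S))
    refine hb.mono ?_ ?_
    · refine Continuous.aestronglyMeasurable ?_
      simp only [Function.uncurry_def]
      have h1 : Continuous fun p : (Fin m → Fin n → ℝ) × (Fin k → ℂ) => wish V p.1 :=
        hwish.comp continuous_fst
      have h2 : ∀ j, Continuous fun p : (Fin m → Fin n → ℝ) × (Fin k → ℂ) => colX V (p.1 j) :=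
        fun j => (continuous_apply j).comp (hcol.comp continuous_fst)
      refine (Complex.continuous_re.comp h1.matrix_det).mul (Real.continuous_exp.comp
        (continuous_finsetSum _ fun j _ => ?_).neg)
      have h3 := h2 j
      fun_prop
    · refine Filter.Eventually.of_forall fun p => ?_
      simp only [Function.uncurry_def, mul_one, norm_mul]
      refine mul_le_of_le_one_right (norm_nonneg _) ?_
      rw [Real.norm_eq_abs, Real.abs_exp, Real.exp_le_one_iff, neg_nonpos]
      exact Finset.sum_nonneg fun _ _ => by positivity
  unfold massN
  simp_rw [hquad]
  refine ⟨hInt.integral_prod_left.const_mul _, ?_⟩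
  rw [integral_const_mul, integral_integral_swap hInt,
    integral_congr_ae (Filter.Eventually.of_forall fun c =>
      (integrable_and_integral_det_wish hkm hV c).2), integral_const_mul]
  ring

theorem massN_le {k : ℕ} {X : ℝ} (hX : 0 < X) {W : Matrix (Fin k) (Fin k) ℂ}
    (hW : W.IsHermitian) (hpos : ∀ c, 0 ≤ (star c ⬝ᵥ (W *ᵥ c)).re) {v : Fin k → ℂ}
    (hv : sqn v = 1) :
    massN X W ≤ 1 - Real.exp (-(X * (star v ⬝ᵥ (W *ᵥ v)).re)) := by
  obtain ⟨U, l, hU, hU', hWe⟩ := exists_unitary_diagonal hW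
  replace hWe : W = U * diagonal (fun i => (l i : ℂ)) * Uᴴ := hWe
  have hk : 0 < k := by
    rcases Nat.eq_zero_or_pos k with h | h
    · subst h; simp [sqn] at hv
    · exact h
  have : Nonempty (Fin k) := ⟨⟨0, hk⟩⟩
  have hquad : ∀ d : Fin k → ℂ, (star (U *ᵥ d) ⬝ᵥ (W *ᵥ (U *ᵥ d))).re = ∑ i, l i * ‖d i‖ ^ 2 := by
    intro d
    have h1 : star (U *ᵥ d) ⬝ᵥ (W *ᵥ (U *ᵥ d)) =
        star d ⬝ᵥ (diagonal (fun i => (l i : ℂ)) *ᵥ d) := by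
      rw [star_mulVec, ← dotProduct_mulVec, mulVec_mulVec, mulVec_mulVec]
      congr 2
      rw [hWe]
      calc Uᴴ * (U * diagonal (fun i => (l i : ℂ)) * Uᴴ) * U
          = (Uᴴ * U) * diagonal (fun i => (l i : ℂ)) * (Uᴴ * U) := by simp only [Matrix.mul_assoc]
        _ = _ := by rw [hU, Matrix.one_mul, Matrix.mul_one]
    rw [h1, dotProduct, Complex.re_sum]
    refine Finset.sum_congr rfl fun i _ => ?_
    rw [mulVec_diagonal, Pi.star_apply, Complex.sq_norm, Complex.normSq_apply]
    simp
    ring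
  have hl0 : ∀ i, 0 ≤ l i := fun i => by
    have h := hpos (U *ᵥ Pi.single i 1)
    rw [hquad, Finset.sum_eq_single i (fun j _ hj => by simp [hj]) (by simp)] at h
    simpa using h
  have hdet : W.det.re = ∏ i, l i := by
    have h1 : U.det * Uᴴ.det = 1 := by rw [← det_mul, hU', det_one]
    rw [hWe, det_mul, det_mul, det_diagonal, mul_right_comm, h1, one_mul, ← Complex.ofReal_prod,
      Complex.ofReal_re]
  obtain ⟨i₀, -, hi₀⟩ := Finset.exists_min_image Finset.univ l Finset.univ_nonempty
  have hmin : l i₀ ≤ (star v ⬝ᵥ (W *ᵥ v)).re := by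
    have hd : U *ᵥ (Uᴴ *ᵥ v) = v := by rw [mulVec_mulVec, hU', one_mulVec]
    have hs : sqn (Uᴴ *ᵥ v) = 1 := by rw [← sqn_mulVec hU, hd, hv]
    have h := hquad (Uᴴ *ᵥ v)
    rw [hd] at h
    rw [h]
    calc l i₀ = ∑ i, l i₀ * ‖(Uᴴ *ᵥ v) i‖ ^ 2 := by rw [← Finset.mul_sum]; rw [sqn] at hs; rw [hs, mul_one]
      _ ≤ _ := Finset.sum_le_sum fun i _ => by gcongr; exact hi₀ i (Finset.mem_univ i)
  have hexp : Real.exp (-(X * (star v ⬝ᵥ (W *ᵥ v)).re)) ≤ Real.exp (-(l i₀ * X)) := by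
    rw [Real.exp_le_exp]
    nlinarith
  have hexp1 : Real.exp (-(X * (star v ⬝ᵥ (W *ᵥ v)).re)) ≤ 1 := by
    rw [Real.exp_le_one_iff]
    nlinarith [hpos v]
  by_cases hz : ∃ i, l i = 0
  · obtain ⟨i, hi⟩ := hz
    rw [massN, hdet, Finset.prod_eq_zero (Finset.mem_univ i) hi]
    simpa using hexp1
  push Not at hz
  have hlp : ∀ i, 0 < l i := fun i => lt_of_le_of_ne (hl0 i) (hz i).symm
  set f : Fin k → ℂ → ℝ := fun i z => if i = i₀ then
    (if ‖z‖ ^ 2 < X then l i * Real.exp (-(l i * ‖z‖ ^ 2)) else 0)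
    else l i * Real.exp (-(l i * ‖z‖ ^ 2)) with hf
  have hprod : ∫ d : Fin k → ℂ, ∏ i, f i (d i) = Real.pi ^ k * (1 - Real.exp (-(l i₀ * X))) := by
    rw [integral_fintype_prod_volume_eq_prod]
    have h1 : ∀ i, ∫ z, f i z = Real.pi * (if i = i₀ then 1 - Real.exp (-(l i₀ * X)) else 1) := by
      intro i
      by_cases h : i = i₀
      · simp only [hf, h, if_true]
        exact integral_exp_normSq_lt hX.le
      · simp only [hf, h, if_false, mul_one]
        exact integral_exp_normSq (hlp i)
    rw [Finset.prod_congr rfl fun i _ => h1 i, Finset.prod_mul_distrib, Finset.prod_const,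
      Finset.card_univ, Fintype.card_fin, Finset.prod_ite_eq' Finset.univ i₀]
    simp
  have hchange : ∫ c in {c : Fin k → ℂ | sqn c < X},
      W.det.re * Real.exp (-(star c ⬝ᵥ (W *ᵥ c)).re) =
      ∫ d : Fin k → ℂ, if sqn d < X then ∏ i, l i * Real.exp (-(l i * ‖d i‖ ^ 2)) else 0 := by
    rw [← integral_indicator (measurableSet_sqn_lt k X)]
    have hemb : MeasurableEmbedding fun c : Fin k → ℂ => U *ᵥ c := by
      refine Continuous.measurableEmbedding (by fun_prop) fun a b hab => ?_
      have := congrArg (fun x => Uᴴ *ᵥ x) hab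
      simpa [mulVec_mulVec, hU] using this
    rw [← (measurePreserving_unitary_mulVec hU).integral_comp hemb]
    congr 1
    funext d
    simp only [Set.indicator, Set.mem_ofPred_eq, sqn_mulVec hU, hquad, hdet]
    split_ifs
    · rw [Finset.prod_mul_distrib, ← Real.exp_sum, Finset.sum_neg_distrib]
    · rfl
  have hfint : Integrable fun d : Fin k → ℂ => ∏ i, f i (d i) := by
    refine Integrable.fintype_prod fun i => ?_
    have hi : Integrable fun z : ℂ => l i * Real.exp (-(l i * ‖z‖ ^ 2)) :=
      Integrable.of_integral_ne_zero (by rw [integral_exp_normSq (hlp i)]; exact Real.pi_ne_zero)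
    by_cases h : i = i₀
    · have : f i = {z : ℂ | ‖z‖ ^ 2 < X}.indicator
          fun z => l i * Real.exp (-(l i * ‖z‖ ^ 2)) := by
        funext z
        simp [hf, h, Set.indicator]
      rw [this]
      exact hi.indicator (measurableSet_lt (by fun_prop) measurable_const)
    · have : f i = fun z => l i * Real.exp (-(l i * ‖z‖ ^ 2)) := by
        funext z
        simp [hf, h]
      rw [this]
      exact hi
  have hf0 : ∀ i z, 0 ≤ f i z := fun i z => by
    have := hl0 i
    simp only [hf]
    split_ifs <;> positivity
  have hle : ∫ d : Fin k → ℂ, (if sqn d < X then ∏ i, l i * Real.exp (-(l i * ‖d i‖ ^ 2)) else 0) ≤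
      ∫ d : Fin k → ℂ, ∏ i, f i (d i) := by
    refine integral_mono_of_nonneg (Filter.Eventually.of_forall fun d => ?_) hfint
      (Filter.Eventually.of_forall fun d => ?_)
    · simp only [Pi.zero_apply]
      split_ifs
      · exact Finset.prod_nonneg fun i _ => mul_nonneg (hl0 i) (Real.exp_pos _).le
      · rfl
    · simp only
      split_ifs with h
      · refine (Finset.prod_congr rfl fun i _ => ?_).le
        simp only [hf]
        split_ifs with h1 h2
        · rfl
        · exact absurd ((Finset.single_le_sum (f := fun i => ‖d i‖ ^ 2)
            (fun _ _ => by positivity) (Finset.mem_univ i)).trans_lt h) h2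
        · rfl
      · exact Finset.prod_nonneg fun i _ => hf0 i _
  rw [massN, hchange, one_div, inv_mul_le_iff₀ (by positivity)]
  refine hle.trans (hprod.le.trans ?_)
  gcongr

/-- The complex combination of the rows of `H` with coefficients `l`. -/
noncomputable def rowComb {m n : ℕ} (H : Matrix (Fin m) (Fin n) ℝ) (l : Fin m → ℂ) : Fin n → ℂ :=
  (H.map Complex.ofReal)ᵀ *ᵥ l

/-- The row space of `H` nearly misses a unit vector in the range of `V`: the squared cosine of
the angle is at most `η`. -/
def NearMiss {n k m : ℕ} (η : ℝ) (V : Matrix (Fin n) (Fin k) ℂ) (H : Matrix (Fin m) (Fin n) ℝ) :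
    Prop :=
  ∃ v, sqn v = 1 ∧ ∀ l, ‖star (V *ᵥ v) ⬝ᵥ rowComb H l‖ ^ 2 ≤ η * sqn (rowComb H l)

theorem map_mul_ofReal {a b c : ℕ} (M : Matrix (Fin a) (Fin b) ℝ) (N : Matrix (Fin b) (Fin c) ℝ) :
    (M * N).map Complex.ofReal = M.map Complex.ofReal * N.map Complex.ofReal :=
  Matrix.map_mul (f := Complex.ofRealHom)

theorem rowComb_mul {m m' n : ℕ} (M : Matrix (Fin m') (Fin m) ℝ) (H : Matrix (Fin m) (Fin n) ℝ)
    (l : Fin m' → ℂ) : rowComb (M * H) l = rowComb H (rowComb M l) := by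
  simp only [rowComb, mulVec_mulVec]
  rw [← transpose_mul, map_mul_ofReal]

theorem NearMiss.mul {n k m m' : ℕ} {η : ℝ} {V : Matrix (Fin n) (Fin k) ℂ}
    {H : Matrix (Fin m) (Fin n) ℝ} (h : NearMiss η V H) (M : Matrix (Fin m') (Fin m) ℝ) :
    NearMiss η V (M * H) := by
  obtain ⟨v, hv, h⟩ := h
  exact ⟨v, hv, fun l => by rw [rowComb_mul]; exact h _⟩

theorem nearMiss_mul_iff {n k m : ℕ} {η : ℝ} {V : Matrix (Fin n) (Fin k) ℂ}
    {H : Matrix (Fin m) (Fin n) ℝ} {M M' : Matrix (Fin m) (Fin m) ℝ} (hM : M' * M = 1) :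
    NearMiss η V (M * H) ↔ NearMiss η V H :=
  ⟨fun h => by simpa [← Matrix.mul_assoc, hM] using h.mul M', fun h => h.mul M⟩

theorem wish_eq {n k m : ℕ} (V : Matrix (Fin n) (Fin k) ℂ) (H : Matrix (Fin m) (Fin n) ℝ) :
    wish V H = Vᴴ * (Hᵀ * H).map Complex.ofReal * V := by
  have h : wish V H = Vᴴ * (H.map Complex.ofReal)ᵀ * (Vᴴ * (H.map Complex.ofReal)ᵀ)ᴴ := by
    ext a b
    simp only [wish, of_apply]
    rfl
  have h2 : (H.map Complex.ofReal)ᵀᴴ = H.map Complex.ofReal := by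
    ext a b
    simp
  rw [h, conjTranspose_mul, conjTranspose_conjTranspose, h2, map_mul_ofReal]
  simp only [Matrix.mul_assoc, transpose_map]

theorem exists_orthogonal_extension {m n : ℕ} (hmn : m ≤ n) {E : Matrix (Fin m) (Fin n) ℝ}
    (hE : E * Eᵀ = 1) : ∃ P : Matrix (Fin n) (Fin n) ℝ, P * Pᵀ = 1 ∧
      E = P.submatrix (Fin.castLE hmn) id := by
  classical
  set v : Fin n → EuclideanSpace ℝ (Fin n) := fun i =>
    if h : (i : ℕ) < m then WithLp.toLp 2 (E ⟨i, h⟩) else 0 with hv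
  have hon : Orthonormal ℝ ({i : Fin n | (i : ℕ) < m}.domRestrict v) := by
    rw [orthonormal_iff_ite]
    rintro ⟨i, hi⟩ ⟨j, hj⟩
    have h := congrFun (congrFun hE ⟨i, hi⟩) ⟨j, hj⟩
    rw [Matrix.mul_apply, Matrix.one_apply] at h
    have hi' : v i = WithLp.toLp 2 (E ⟨i, hi⟩) := dif_pos hi
    have hj' : v j = WithLp.toLp 2 (E ⟨j, hj⟩) := dif_pos hj
    simp only [transpose_apply, Fin.mk.injEq, ← Fin.ext_iff] at h
    simp only [Set.domRestrict_apply, hi', hj', PiLp.inner_apply, RCLike.inner_apply,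
      conj_trivial, Subtype.mk.injEq, ← h]
    exact Finset.sum_congr rfl fun _ _ => mul_comm _ _
  obtain ⟨b, hb⟩ := hon.exists_orthonormalBasis_extension_of_card_eq (by simp)
  refine ⟨of fun i => (b i).ofLp, ?_, ?_⟩
  · ext i j
    have h := orthonormal_iff_ite.mp b.orthonormal i j
    rw [Matrix.mul_apply, Matrix.one_apply, ← h]
    simp only [PiLp.inner_apply, RCLike.inner_apply, conj_trivial]
    exact Finset.sum_congr rfl fun _ _ => mul_comm _ _
  · ext i j
    have h := hb (Fin.castLE hmn i) (by simp)
    simp [h, hv]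

theorem exists_orthogonal_frame_eq {m n : ℕ} (hmn : m ≤ n) {E E' : Matrix (Fin m) (Fin n) ℝ}
    (hE : E * Eᵀ = 1) (hE' : E' * E'ᵀ = 1) :
    ∃ O : Matrix (Fin n) (Fin n) ℝ, O * Oᵀ = 1 ∧ E' = E * Oᵀ := by
  obtain ⟨P, hP, rfl⟩ := exists_orthogonal_extension hmn hE
  obtain ⟨P', hP', rfl⟩ := exists_orthogonal_extension hmn hE'
  have hPt : P'ᵀ * P' = 1 := mul_eq_one_comm.mp hP'
  refine ⟨P'ᵀ * P, ?_, ?_⟩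
  · rw [transpose_mul, transpose_transpose]
    calc P'ᵀ * P * (Pᵀ * P') = P'ᵀ * (P * Pᵀ) * P' := by simp only [Matrix.mul_assoc]
      _ = 1 := by rw [hP, Matrix.mul_one, hPt]
  · rw [transpose_mul, transpose_transpose, ← Matrix.mul_assoc]
    have h : P.submatrix (Fin.castLE hmn) id * Pᵀ =
        (1 : Matrix (Fin n) (Fin n) ℝ).submatrix (Fin.castLE hmn) id := by
      rw [← hP]; rfl
    rw [h]
    ext i j
    simp [Matrix.mul_apply, Matrix.one_apply]

theorem exists_frame_decomposition {m n : ℕ} {H : Matrix (Fin m) (Fin n) ℝ}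
    (hH : IsUnit (H * Hᵀ).det) :
    ∃ (K : Matrix (Fin m) (Fin m) ℝ) (d : Fin m → ℝ) (E : Matrix (Fin m) (Fin n) ℝ),
      Kᵀ * K = 1 ∧ (∀ i, 0 < d i) ∧ E * Eᵀ = 1 ∧ H = K * (diagonal d * E) ∧
      ∑ i, d i ^ 2 = ∑ i, ∑ j, H i j ^ 2 := by
  have hS : (H * Hᵀ).IsHermitian := by simp [IsHermitian]
  obtain ⟨K, l, hK, hK', hSe⟩ := exists_unitary_diagonal hS
  simp only [conjTranspose_eq_transpose_of_trivial, RCLike.ofReal_real_eq_id, id] at hK hK' hSe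
  set F := Kᵀ * H with hF
  have hFF : F * Fᵀ = diagonal l := by
    rw [hF, transpose_mul, transpose_transpose]
    calc Kᵀ * H * (Hᵀ * K) = Kᵀ * (H * Hᵀ) * K := by simp only [Matrix.mul_assoc]
      _ = (Kᵀ * K) * diagonal l * (Kᵀ * K) := by rw [hSe]; simp only [Matrix.mul_assoc]
      _ = diagonal l := by rw [hK, Matrix.one_mul, Matrix.mul_one]
  have hl : ∀ i, 0 < l i := by
    intro i
    have h1 : l i = ∑ j, F i j ^ 2 := by
      have := congrFun (congrFun hFF i) i
      rw [diagonal_apply_eq, Matrix.mul_apply] at this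
      rw [← this]
      exact Finset.sum_congr rfl fun j _ => by rw [transpose_apply, sq]
    refine lt_of_le_of_ne (h1 ▸ Finset.sum_nonneg fun _ _ => sq_nonneg _) fun h0 => ?_
    have h2 : (H * Hᵀ).det = 0 := by
      rw [hSe, det_mul, det_mul, det_diagonal, Finset.prod_eq_zero (Finset.mem_univ i) h0.symm]
      simp
    exact hH.ne_zero h2
  refine ⟨K, fun i => √(l i), diagonal (fun i => (√(l i))⁻¹) * F, hK,
    fun i => Real.sqrt_pos.mpr (hl i), ?_, ?_, ?_⟩
  · rw [transpose_mul, diagonal_transpose]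
    calc diagonal (fun i => (√(l i))⁻¹) * F * (Fᵀ * diagonal fun i => (√(l i))⁻¹)
        = diagonal (fun i => (√(l i))⁻¹) * (F * Fᵀ) * diagonal fun i => (√(l i))⁻¹ := by
          simp only [Matrix.mul_assoc]
      _ = 1 := by
        rw [hFF, diagonal_mul_diagonal, diagonal_mul_diagonal, ← diagonal_one]
        congr 1
        funext i
        have h := (Real.sqrt_pos.mpr (hl i)).ne'
        have h' := Real.mul_self_sqrt (hl i).le
        field_simp
        nlinarith
  · rw [← Matrix.mul_assoc (diagonal _), diagonal_mul_diagonal]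
    have : (fun i => √(l i) * (√(l i))⁻¹) = fun _ => (1 : ℝ) := funext fun i =>
      mul_inv_cancel₀ (Real.sqrt_pos.mpr (hl i)).ne'
    rw [this, diagonal_one, Matrix.one_mul, hF, ← Matrix.mul_assoc, hK', Matrix.one_mul]
  · have h1 : (H * Hᵀ).trace = ∑ i, l i := by
      rw [hSe, trace_mul_comm, ← Matrix.mul_assoc, hK, Matrix.one_mul, trace_diagonal]
    rw [Finset.sum_congr rfl fun i _ => Real.sq_sqrt (hl i).le, ← h1, trace]
    refine Finset.sum_congr rfl fun i _ => ?_
    rw [diag_apply, Matrix.mul_apply]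
    exact Finset.sum_congr rfl fun j _ => by rw [transpose_apply, sq]

noncomputable instance instMeasurableSpaceOrthogonalGroup (n : ℕ) :
    MeasurableSpace (orthogonalGroup (Fin n) ℝ) := borel _

instance instBorelSpaceOrthogonalGroup (n : ℕ) : BorelSpace (orthogonalGroup (Fin n) ℝ) := ⟨rfl⟩

instance instSecondCountableOrthogonalGroup (n : ℕ) :
    SecondCountableTopology (orthogonalGroup (Fin n) ℝ) :=
  haveI : SecondCountableTopology (Matrix (Fin n) (Fin n) ℝ) :=
    inferInstanceAs (SecondCountableTopology (Fin n → Fin n → ℝ))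
  TopologicalSpace.Subtype.secondCountableTopology _

theorem abs_entry_le_one_of_mul_transpose {n : ℕ} {O : Matrix (Fin n) (Fin n) ℝ}
    (hO : O * Oᵀ = 1) (i j : Fin n) : |O i j| ≤ 1 := by
  have h := congrFun (congrFun hO i) i
  rw [Matrix.mul_apply, Matrix.one_apply_eq] at h
  simp only [transpose_apply, ← sq] at h
  rw [← sq_le_one_iff_abs_le_one, ← h]
  exact Finset.single_le_sum (f := fun j => O i j ^ 2) (fun _ _ => sq_nonneg _)
    (Finset.mem_univ j)

instance instCompactSpaceOrthogonalGroup (n : ℕ) :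
    CompactSpace (orthogonalGroup (Fin n) ℝ) := by
  refine isCompact_iff_compactSpace.mp ?_
  have hbox : IsCompact (Set.univ.pi fun _ : Fin n => Set.univ.pi fun _ : Fin n =>
      Set.Icc (-1 : ℝ) 1) := isCompact_univ_pi fun _ => isCompact_univ_pi fun _ => isCompact_Icc
  have hclosed : IsClosed {O : Matrix (Fin n) (Fin n) ℝ | O * Oᵀ = 1} :=
    isClosed_eq (by fun_prop) continuous_const
  have hset : ((orthogonalGroup (Fin n) ℝ : Submonoid _) : Set (Matrix (Fin n) (Fin n) ℝ)) =
      {O | O * Oᵀ = 1} := by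
    ext O
    exact mem_orthogonalGroup_iff _ _
  rw [hset]
  refine IsCompact.of_isClosed_subset (s := (Set.univ.pi fun _ : Fin n => Set.univ.pi
    fun _ : Fin n => Set.Icc (-1 : ℝ) 1 : Set (Matrix (Fin n) (Fin n) ℝ))) hbox hclosed ?_
  intro O hO i _ j _
  exact abs_le.mp (abs_entry_le_one_of_mul_transpose hO i j)

theorem exists_orthogonal_invariant_probability (n : ℕ) :
    ∃ μ : Measure (orthogonalGroup (Fin n) ℝ), IsProbabilityMeasure μ ∧
      μ.IsMulRightInvariant := by
  let ν : Measure (orthogonalGroup (Fin n) ℝ) := Measure.haarMeasure ⊤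
  have hν : IsProbabilityMeasure ν := ⟨Measure.haarMeasure_self⟩
  exact ⟨ν.inv, Measure.isProbabilityMeasure_map measurable_inv.aemeasurable, inferInstance⟩

theorem continuous_rowComb {m n : ℕ} :
    Continuous fun p : Matrix (Fin m) (Fin n) ℝ × (Fin m → ℂ) => rowComb p.1 p.2 := by
  unfold rowComb
  have : Continuous fun p : Matrix (Fin m) (Fin n) ℝ × (Fin m → ℂ) => p.1.map Complex.ofReal :=
    continuous_fst.matrix_map Complex.continuous_ofReal
  fun_prop

theorem isClosed_nearMiss {n k m : ℕ} (η : ℝ) (V : Matrix (Fin n) (Fin k) ℂ) :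
    IsClosed {H : Matrix (Fin m) (Fin n) ℝ | NearMiss η V H} := by
  have hsphere : IsCompact {v : Fin k → ℂ | sqn v = 1} :=
    (isCompact_sqn_le k 1).of_isClosed_subset
      (isClosed_eq contDiff_sqn.continuous continuous_const) fun v (hv : sqn v = 1) => hv.le
  have : CompactSpace {v : Fin k → ℂ | sqn v = 1} := isCompact_iff_compactSpace.mp hsphere
  have hrow : ∀ l, Continuous fun p : {v : Fin k → ℂ | sqn v = 1} × Matrix (Fin m) (Fin n) ℝ =>
      rowComb p.2 l := fun l => continuous_rowComb.comp (continuous_snd.prodMk continuous_const)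
  have hcl : IsClosed {p : {v : Fin k → ℂ | sqn v = 1} × Matrix (Fin m) (Fin n) ℝ |
      ∀ l, ‖star (V *ᵥ (p.1 : Fin k → ℂ)) ⬝ᵥ rowComb p.2 l‖ ^ 2 ≤ η * sqn (rowComb p.2 l)} := by
    rw [Set.ofPred_forall]
    refine isClosed_iInter fun l => isClosed_le ?_ ?_
    · exact ((Continuous.dotProduct (Continuous.star (Continuous.matrix_mulVec continuous_const
        (continuous_subtype_val.comp continuous_fst))) (hrow l)).norm).pow 2
    · exact continuous_const.mul (contDiff_sqn.continuous.comp (hrow l))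
  convert isClosedMap_snd_of_compactSpace _ hcl using 1
  ext H
  simp only [NearMiss, Set.mem_ofPred_eq, Set.mem_image, Prod.exists, exists_eq_right,
    Subtype.exists, exists_prop]

theorem measurable_massN {k : ℕ} (X : ℝ) {α : Type*} [TopologicalSpace α] [MeasurableSpace α]
    [BorelSpace α] [SecondCountableTopology α] {W : α → Matrix (Fin k) (Fin k) ℂ}
    (hW : Continuous W) : Measurable fun a => massN X (W a) := by
  unfold massN
  have h : Continuous (Function.uncurry fun (a : α) (c : Fin k → ℂ) =>
      (W a).det.re * Real.exp (-(star c ⬝ᵥ (W a *ᵥ c)).re)) := by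
    simp only [Function.uncurry_def]
    have h1 : Continuous fun p : α × (Fin k → ℂ) => W p.1 := hW.comp continuous_fst
    refine (Complex.continuous_re.comp h1.matrix_det).mul (Real.continuous_exp.comp
      (Complex.continuous_re.comp ?_).neg)
    fun_prop
  exact (h.stronglyMeasurable.integral_prod_right (ν := volume.restrict _)).measurable.const_mul _

theorem lintegral_frame_rotation_eq {m n : ℕ} (hmn : m ≤ n)
    {μ : Measure (orthogonalGroup (Fin n) ℝ)} (hμ : μ.IsMulRightInvariant)
    {E E' : Matrix (Fin m) (Fin n) ℝ} (hE : E * Eᵀ = 1) (hE' : E' * E'ᵀ = 1)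
    (f : Matrix (Fin m) (Fin n) ℝ → ℝ≥0∞) :
    ∫⁻ O, f (E' * (O : Matrix (Fin n) (Fin n) ℝ)ᵀ) ∂μ =
      ∫⁻ O, f (E * (O : Matrix (Fin n) (Fin n) ℝ)ᵀ) ∂μ := by
  obtain ⟨P, hP, rfl⟩ := exists_orthogonal_frame_eq hmn hE hE'
  rw [← lintegral_mul_right_eq_self (μ := μ)
    (fun O => f (E * (O : Matrix (Fin n) (Fin n) ℝ)ᵀ)) ⟨P, (mem_orthogonalGroup_iff _ _).mpr hP⟩]
  refine lintegral_congr fun O => ?_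
  simp [transpose_mul, Matrix.mul_assoc]

theorem card_mul_exp_le_sum_exp {m : ℕ} (y : Fin m → ℝ) {z : ℝ} (h : m * z ≤ ∑ c, y c) :
    m * Real.exp z ≤ ∑ c, Real.exp (y c) := by
  have h1 : ∀ c, Real.exp z * (y c - z + 1) ≤ Real.exp (y c) := fun c => by
    calc Real.exp z * (y c - z + 1) ≤ Real.exp z * Real.exp (y c - z) := by
          gcongr; exact Real.add_one_le_exp _
      _ = Real.exp (y c) := by rw [← Real.exp_add]; congr 1; ring
  calc m * Real.exp z ≤ Real.exp z * ((∑ c, y c) - m * z + m) := by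
        nlinarith [Real.exp_pos z]
    _ = ∑ c, Real.exp z * (y c - z + 1) := by
        rw [← Finset.mul_sum, Finset.sum_add_distrib, Finset.sum_sub_distrib]
        simp
    _ ≤ _ := Finset.sum_le_sum fun c _ => h1 c

theorem rowComb_apply_dotProduct {m n : ℕ} (s : Fin n → ℂ) (H : Matrix (Fin m) (Fin n) ℝ)
    (l : Fin m → ℂ) :
    s ⬝ᵥ rowComb H l = ∑ i, l i * (s ⬝ᵥ fun j => (H i j : ℂ)) := by
  rw [rowComb, dotProduct_mulVec, dotProduct]
  refine Finset.sum_congr rfl fun i _ => ?_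
  rw [mul_comm]
  rfl

theorem sqn_rowComb_frame {m n : ℕ} {F : Matrix (Fin m) (Fin n) ℝ} (hF : F * Fᵀ = 1)
    (l : Fin m → ℂ) : sqn (rowComb F l) = sqn l := by
  refine sqn_mulVec ?_ l
  have h : ((F.map Complex.ofReal)ᵀ)ᴴ = F.map Complex.ofReal := by
    ext a b
    simp
  rw [h, ← transpose_map, ← map_mul_ofReal, hF]
  ext a b
  simp [Matrix.one_apply, apply_ite]

theorem sum_norm_sq_le_of_nearMiss_witness {m n : ℕ} {η : ℝ} (hη : 0 ≤ η)
    {F : Matrix (Fin m) (Fin n) ℝ} (hF : F * Fᵀ = 1) {s : Fin n → ℂ}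
    (h : ∀ l, ‖s ⬝ᵥ rowComb F l‖ ^ 2 ≤ η * sqn (rowComb F l)) :
    ∑ i, ‖s ⬝ᵥ fun j => (F i j : ℂ)‖ ^ 2 ≤ η := by
  set b : Fin m → ℂ := fun i => s ⬝ᵥ fun j => (F i j : ℂ) with hb
  have hA : s ⬝ᵥ rowComb F (star b) = ((sqn b : ℝ) : ℂ) := by
    rw [rowComb_apply_dotProduct, ← star_dotProduct_self_eq_sqn]
    rfl
  have hs : sqn (star b) = sqn b := by simp [sqn]
  have := h (star b)
  rw [hA, sqn_rowComb_frame hF, hs, Complex.norm_real, Real.norm_eq_abs, sq_abs] at this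
  change sqn b ≤ η
  by_contra! hc
  nlinarith [sqn_nonneg b]

theorem re_quadForm_wish {n k m : ℕ} (V : Matrix (Fin n) (Fin k) ℂ) (H : Matrix (Fin m) (Fin n) ℝ)
    (v : Fin k → ℂ) : (star v ⬝ᵥ (wish V H *ᵥ v)).re =
      ∑ j, ‖star (V *ᵥ v) ⬝ᵥ fun i => (H j i : ℂ)‖ ^ 2 := by
  refine (congrArg Complex.re (star_dotProduct_wish V H v)).trans ?_
  rw [Complex.ofReal_re]
  simp_rw [star_dotProduct_colX]

theorem exp_le_one_sub_massN_wish {n k m : ℕ} {X : ℝ} (hX : 0 < X) (V : Matrix (Fin n) (Fin k) ℂ)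
    (H : Matrix (Fin m) (Fin n) ℝ) {v : Fin k → ℂ} (hv : sqn v = 1) :
    Real.exp (-(X * ∑ j, ‖star (V *ᵥ v) ⬝ᵥ fun i => (H j i : ℂ)‖ ^ 2)) ≤
      1 - massN X (wish V H) := by
  have h := massN_le hX (isHermitian_wish V H) (fun c => by
    rw [re_quadForm_wish]; exact Finset.sum_nonneg fun _ _ => by positivity) hv
  rw [re_quadForm_wish] at h
  linarith

theorem exp_le_average_one_sub_massN {n k m : ℕ} [NeZero m] {X η : ℝ} (hX : 0 < X) (hη : 0 ≤ η)
    {V : Matrix (Fin n) (Fin k) ℂ} {F : Matrix (Fin m) (Fin n) ℝ} (hF : F * Fᵀ = 1)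
    (hbad : NearMiss η V F) (d : Fin m → ℝ) :
    m * Real.exp (-(X * η * (∑ i, d i ^ 2) / m)) ≤
      ∑ c : Fin m, (1 - massN X (wish V (diagonal d * F.submatrix (· + c) id))) := by
  obtain ⟨v, hv, hl⟩ := hbad
  have ha := sum_norm_sq_le_of_nearMiss_witness hη hF hl
  set a : Fin m → ℝ := fun i => ‖star (V *ᵥ v) ⬝ᵥ fun j => (F i j : ℂ)‖ ^ 2 with hadef
  have hm : (0 : ℝ) < m := Nat.cast_pos.mpr (NeZero.pos m)
  have hquad : ∀ c : Fin m, ∑ j, ‖star (V *ᵥ v) ⬝ᵥ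
      fun i => (((diagonal d * F.submatrix (· + c) id) j i : ℝ) : ℂ)‖ ^ 2 =
      ∑ j, d j ^ 2 * a (j + c) := by
    intro c
    refine Finset.sum_congr rfl fun j _ => ?_
    have : (fun i => (((diagonal d * F.submatrix (· + c) id) j i : ℝ) : ℂ)) =
        (d j : ℂ) • fun i => (F (j + c) i : ℂ) := by
      funext i
      simp [diagonal_mul]
    rw [this, dotProduct_smul, norm_smul, mul_pow, Complex.norm_real, Real.norm_eq_abs, sq_abs]
  refine le_trans (card_mul_exp_le_sum_exp
    (fun c => -(X * ∑ j, d j ^ 2 * a (j + c))) ?_) (Finset.sum_le_sum fun c _ => ?_)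
  · have hsum : ∑ c, ∑ j, d j ^ 2 * a (j + c) = (∑ j, d j ^ 2) * ∑ i, a i := by
      rw [Finset.sum_comm, Finset.sum_mul]
      refine Finset.sum_congr rfl fun j _ => ?_
      rw [← Finset.mul_sum]
      congr 1
      exact Equiv.sum_comp (Equiv.addLeft j) a
    rw [Finset.sum_neg_distrib, ← Finset.mul_sum, hsum]
    have h0 : 0 ≤ ∑ j, d j ^ 2 := Finset.sum_nonneg fun _ _ => sq_nonneg _
    have h1 : (∑ j, d j ^ 2) * ∑ i, a i ≤ (∑ j, d j ^ 2) * η := by gcongr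
    have h2 := mul_le_mul_of_nonneg_left h1 hX.le
    have h3 : (m : ℝ) * -(X * η * (∑ i, d i ^ 2) / m) = -(X * ((∑ j, d j ^ 2) * η)) := by
      field_simp
    rw [h3]
    linarith
  · rw [← hquad]
    exact exp_le_one_sub_massN_wish hX V _ hv

theorem wish_eq_of_orthogonal_mul {n k m : ℕ} (V : Matrix (Fin n) (Fin k) ℂ)
    {K : Matrix (Fin m) (Fin m) ℝ} (hK : Kᵀ * K = 1) (F : Matrix (Fin m) (Fin n) ℝ) :
    wish V (K * F) = wish V F := by
  rw [wish_eq, wish_eq, transpose_mul]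
  congr 3
  rw [Matrix.mul_assoc, ← Matrix.mul_assoc Kᵀ, hK, Matrix.one_mul]

theorem continuous_wish {n k m : ℕ} (V : Matrix (Fin n) (Fin k) ℂ) :
    Continuous fun H : Matrix (Fin m) (Fin n) ℝ => wish V H := by
  simp_rw [wish_eq]
  have : Continuous fun H : Matrix (Fin m) (Fin n) ℝ => (Hᵀ * H).map Complex.ofReal :=
    Continuous.matrix_map (by fun_prop) Complex.continuous_ofReal
  fun_prop

theorem measurableSet_nearMiss_rotation {n k m : ℕ} (η : ℝ) (V : Matrix (Fin n) (Fin k) ℂ)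
    (H : Matrix (Fin m) (Fin n) ℝ) :
    MeasurableSet {O : orthogonalGroup (Fin n) ℝ |
      NearMiss η V (H * (O : Matrix (Fin n) (Fin n) ℝ)ᵀ)} := by
  have h : Continuous fun O : orthogonalGroup (Fin n) ℝ =>
    H * (O : Matrix (Fin n) (Fin n) ℝ)ᵀ := by fun_prop
  exact ((isClosed_nearMiss η V).preimage h).measurableSet

theorem measure_nearMiss_rotation {n k m : ℕ} (hmn : m ≤ n) {η : ℝ}
    {V : Matrix (Fin n) (Fin k) ℂ} {μ : Measure (orthogonalGroup (Fin n) ℝ)}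
    (hμ : μ.IsMulRightInvariant) {H E₁ : Matrix (Fin m) (Fin n) ℝ} (hE₁ : E₁ * E₁ᵀ = 1)
    (hH : IsUnit (H * Hᵀ).det) :
    μ {O | NearMiss η V (H * (O : Matrix (Fin n) (Fin n) ℝ)ᵀ)} =
      μ {O | NearMiss η V (E₁ * (O : Matrix (Fin n) (Fin n) ℝ)ᵀ)} := by
  classical
  obtain ⟨K, d, E, hK, hd, hE, hHe, -⟩ := exists_frame_decomposition hH
  have hiff : ∀ O : orthogonalGroup (Fin n) ℝ,
      NearMiss η V (H * (O : Matrix (Fin n) (Fin n) ℝ)ᵀ) ↔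
        NearMiss η V (E * (O : Matrix (Fin n) (Fin n) ℝ)ᵀ) := fun O => by
    rw [hHe, Matrix.mul_assoc, Matrix.mul_assoc, nearMiss_mul_iff hK,
      nearMiss_mul_iff (M' := diagonal fun i => (d i)⁻¹)]
    rw [diagonal_mul_diagonal, ← diagonal_one]
    congr 1
    exact funext fun i => inv_mul_cancel₀ (hd i).ne'
  simp_rw [hiff]
  rw [← lintegral_indicator_one (measurableSet_nearMiss_rotation η V E),
    ← lintegral_indicator_one (measurableSet_nearMiss_rotation η V E₁)]
  exact lintegral_frame_rotation_eq hmn hμ hE₁ hE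
    fun F => {F : Matrix (Fin m) (Fin n) ℝ | NearMiss η V F}.indicator 1 F

theorem exp_mul_measure_nearMiss_le {n k m : ℕ} [NeZero m] (hmn : m ≤ n) {X η : ℝ} (hX : 0 < X)
    (hη : 0 ≤ η) {V : Matrix (Fin n) (Fin k) ℂ} {μ : Measure (orthogonalGroup (Fin n) ℝ)}
    (hμ : μ.IsMulRightInvariant) {H E₁ : Matrix (Fin m) (Fin n) ℝ} (hE₁ : E₁ * E₁ᵀ = 1)
    (hH : IsUnit (H * Hᵀ).det) :
    ENNReal.ofReal (Real.exp (-(X * η * (∑ i, ∑ j, H i j ^ 2) / m))) *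
      μ {O | NearMiss η V (E₁ * (O : Matrix (Fin n) (Fin n) ℝ)ᵀ)} ≤
    ∫⁻ O, ENNReal.ofReal (1 - massN X (wish V (H * (O : Matrix (Fin n) (Fin n) ℝ)ᵀ))) ∂μ := by
  obtain ⟨K, d, E, hK, hd, hE, hHe, hsum⟩ := exists_frame_decomposition hH
  rw [← hsum]
  set f : Matrix (Fin m) (Fin n) ℝ → ℝ≥0∞ := fun F =>
    ENNReal.ofReal (1 - massN X (wish V (diagonal d * F))) with hf
  set S := {O : orthogonalGroup (Fin n) ℝ | NearMiss η V (E₁ * (O : Matrix (Fin n) (Fin n) ℝ)ᵀ)}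
  have hInt : ∀ c : Fin m, ∫⁻ O : orthogonalGroup (Fin n) ℝ, ENNReal.ofReal
      (1 - massN X (wish V (H * (O : Matrix (Fin n) (Fin n) ℝ)ᵀ))) ∂μ =
      ∫⁻ O, f ((E₁ * (O : Matrix (Fin n) (Fin n) ℝ)ᵀ).submatrix (· + c) id) ∂μ := by
    intro c
    have hperm : E₁.submatrix (· + c) id * (E₁.submatrix (· + c) id)ᵀ = 1 := by
      have : (E₁ * E₁ᵀ).submatrix (· + c) (· + c) = 1 := by
        rw [hE₁, submatrix_one _ (add_left_injective c)]
      rw [← this]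
      rfl
    refine Eq.trans ?_ (lintegral_frame_rotation_eq hmn hμ hperm hE f)
    refine lintegral_congr fun O => ?_
    simp only [hf]
    rw [hHe, Matrix.mul_assoc, Matrix.mul_assoc, wish_eq_of_orthogonal_mul V hK]
  have hm : (m : ℝ≥0∞) ≠ 0 := Nat.cast_ne_zero.mpr (NeZero.ne m)
  have hmeas : ∀ c : Fin m, Measurable fun O : orthogonalGroup (Fin n) ℝ =>
      f ((E₁ * (O : Matrix (Fin n) (Fin n) ℝ)ᵀ).submatrix (· + c) id) := by
    intro c
    refine (Measurable.const_sub (measurable_massN X ((continuous_wish V).comp ?_)) 1).ennreal_ofReal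
    have : Continuous fun O : orthogonalGroup (Fin n) ℝ =>
      (E₁ * (O : Matrix (Fin n) (Fin n) ℝ)ᵀ).submatrix (· + c) id :=
      Continuous.matrix_submatrix (by fun_prop) _ _
    fun_prop
  rw [← ENNReal.mul_le_mul_iff_right hm (ENNReal.natCast_ne_top m), ← mul_assoc]
  calc (m : ℝ≥0∞) * ENNReal.ofReal (Real.exp (-(X * η * (∑ i, d i ^ 2) / m))) * μ S
      = ∫⁻ O in S, (m : ℝ≥0∞) * ENNReal.ofReal (Real.exp (-(X * η * (∑ i, d i ^ 2) / m))) ∂μ := by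
        rw [setLIntegral_const]
    _ ≤ ∫⁻ O in S, ∑ c : Fin m,
          f ((E₁ * (O : Matrix (Fin n) (Fin n) ℝ)ᵀ).submatrix (· + c) id) ∂μ := by
        refine setLIntegral_mono' (measurableSet_nearMiss_rotation η V E₁) fun O hO => ?_
        have hOt : (O : Matrix (Fin n) (Fin n) ℝ)ᵀ * (O : Matrix (Fin n) (Fin n) ℝ) = 1 :=
          (mem_orthogonalGroup_iff' _ _).mp O.2
        have hF : (E₁ * (O : Matrix (Fin n) (Fin n) ℝ)ᵀ) *
            (E₁ * (O : Matrix (Fin n) (Fin n) ℝ)ᵀ)ᵀ = 1 := by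
          rw [transpose_mul, transpose_transpose, Matrix.mul_assoc, ← Matrix.mul_assoc _ _ E₁ᵀ,
            hOt, Matrix.one_mul, hE₁]
        obtain ⟨v, hv, -⟩ := id hO
        have h := exp_le_average_one_sub_massN hX hη hF hO d
        rw [← ENNReal.ofReal_natCast, ← ENNReal.ofReal_mul (by positivity), hf]
        refine (ENNReal.ofReal_le_ofReal h).trans (ENNReal.ofReal_sum_of_nonneg fun c _ => ?_).le
        exact (Real.exp_pos _).le.trans (exp_le_one_sub_massN_wish hX V _ hv)
    _ ≤ ∫⁻ O, ∑ c : Fin m,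
          f ((E₁ * (O : Matrix (Fin n) (Fin n) ℝ)ᵀ).submatrix (· + c) id) ∂μ :=
        setLIntegral_le_lintegral _ _
    _ = _ := by
        rw [lintegral_finsetSum _ fun c _ => hmeas c, Finset.sum_congr rfl fun c _ => (hInt c).symm]
        simp

theorem lintegral_one_sub_massN_wish_le {n k p : ℕ} (hk : 0 < k) {V : Matrix (Fin n) (Fin k) ℂ}
    (hV : Vᴴ * V = 1) {X : ℝ} (hX : 0 < X) :
    ∫⁻ H, ENNReal.ofReal (1 - massN X (wish V H)) ∂(gaussMat (k + p) n) ≤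
      ENNReal.ofReal (tailT k p X) := by
  obtain ⟨hInt, hval⟩ := integral_massN_wish (Nat.le_add_right k p) hV X
  have hv : sqn (Pi.single ⟨0, hk⟩ 1 : Fin k → ℂ) = 1 := by
    rw [sqn, Finset.sum_eq_single ⟨0, hk⟩ (fun j _ hj => by simp [hj]) (by simp)]
    simp
  have hint1 : Integrable (fun H => 1 - massN X (wish V H)) (gaussMat (k + p) n) :=
    (integrable_const 1).sub hInt
  rw [← ofReal_integral_eq_lintegral_ofReal hint1
    (Filter.Eventually.of_forall fun H =>
      (Real.exp_pos _).le.trans (exp_le_one_sub_massN_wish hX V H hv))]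
  refine ENNReal.ofReal_le_ofReal ?_
  rw [integral_sub (integrable_const 1) hInt, hval]
  simpa using one_sub_mass_le_tailT (p := p) hk hV hX

theorem tendsto_tailT_zero (k : ℕ) : Filter.Tendsto (tailT k 0) Filter.atTop (nhds 0) := by
  unfold tailT
  have h1 : Filter.Tendsto (fun X : ℝ => 1 + 1 / X) Filter.atTop (nhds (1 + 0)) :=
    tendsto_const_nhds.add (tendsto_const_nhds.div_atTop Filter.tendsto_id)
  have h2 : Filter.Tendsto (fun X : ℝ => (1 + 2 * X) ^ (-(((0 : ℕ) + 1 : ℝ) / 2)))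
      Filter.atTop (nhds 0) :=
    (tendsto_rpow_neg_atTop (by norm_num)).comp
      (Filter.tendsto_atTop_add_const_left _ _ (Filter.tendsto_id.const_mul_atTop two_pos))
  have := (h1.mul_const (((k + 0).descFactorial k : ℝ) / Real.Gamma k)).mul
    ((h2.mul_const (Real.Gamma ((k + 1) / 2) * Real.Gamma (((0 : ℕ) + 1) / 2) /
      Real.Gamma ((k + 1) / 2 + ((0 : ℕ) + 1) / 2))).div_const 2)
  simpa using this

theorem det_mul_transpose_ne_zero_ae {m n : ℕ} (hm : 0 < m) (hmn : m ≤ n) :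
    ∀ᵐ H ∂(gaussMat m n), IsUnit ((of H : Matrix (Fin m) (Fin n) ℝ) * (of H)ᵀ).det := by
  set J : Matrix (Fin n) (Fin m) ℝ := (1 : Matrix (Fin n) (Fin n) ℝ).submatrix id (Fin.castLE hmn)
  have hJ : (J.map Complex.ofReal)ᴴ * J.map Complex.ofReal = 1 := by
    have h1 : (J.map Complex.ofReal)ᴴ = Jᵀ.map Complex.ofReal := by ext; simp
    have h2 : Jᵀ * J = 1 := by
      ext a b
      simp [J, Matrix.mul_apply, Matrix.one_apply]
    rw [h1, ← map_mul_ofReal, h2]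
    ext a b
    simp [Matrix.one_apply, apply_ite]
  have hdet : ∀ H : Matrix (Fin m) (Fin n) ℝ, ¬IsUnit (H * Hᵀ).det →
      (wish (J.map Complex.ofReal) H).det = 0 := by
    intro H hH
    rw [isUnit_iff_ne_zero, not_not, ← exists_mulVec_eq_zero_iff] at hH
    obtain ⟨x, hx, hHx⟩ := hH
    have h0 : Hᵀ *ᵥ x = 0 := by
      have := self_mul_conjTranspose_mulVec_eq_zero H x
      rw [conjTranspose_eq_transpose_of_trivial] at this
      exact this.mp hHx
    have hd : (H * J).det = 0 := by
      rw [← det_transpose, ← exists_mulVec_eq_zero_iff]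
      exact ⟨x, hx, by rw [transpose_mul, ← mulVec_mulVec, h0, mulVec_zero]⟩
    have h1 : (J.map Complex.ofReal)ᴴ = Jᵀ.map Complex.ofReal := by ext; simp
    have h2 : wish (J.map Complex.ofReal) H = ((H * J)ᵀ * (H * J)).map Complex.ofReal := by
      rw [wish_eq, h1, ← map_mul_ofReal, ← map_mul_ofReal, transpose_mul]
      simp only [Matrix.mul_assoc]
    have h3 : (wish (J.map Complex.ofReal) H).det = (((H * J)ᵀ * (H * J)).det : ℂ) := by
      rw [h2]
      exact (RingHom.map_det Complex.ofRealHom _).symm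
    rw [h3, det_mul, hd]
    simp
  rw [ae_iff]
  have hbound : ∀ X : ℝ, 0 < X → gaussMat m n {H | ¬IsUnit ((of H : Matrix (Fin m) (Fin n) ℝ) *
      (of H)ᵀ).det} ≤ ENNReal.ofReal (tailT m 0 X) := by
    intro X hX
    refine le_trans ?_ (lintegral_one_sub_massN_wish_le (p := 0) hm hJ hX)
    have hmark := mul_meas_ge_le_lintegral₀ (μ := gaussMat m n)
      (f := fun H => ENNReal.ofReal (1 - massN X (wish (J.map Complex.ofReal) H)))
      (((integral_massN_wish le_rfl hJ X).1.aemeasurable.const_sub 1).ennreal_ofReal) 1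
    rw [one_mul] at hmark
    refine (measure_mono fun H hH => ?_).trans hmark
    have h0 := hdet (of H) hH
    have h1 : massN X (wish (J.map Complex.ofReal) H) = 0 := by
      rw [massN]
      change _ * ∫ c in _, (wish (J.map Complex.ofReal) (of H)).det.re * _ = _
      rw [h0]
      simp
    simp [h1]
  have hlim : Filter.Tendsto (fun X => ENNReal.ofReal (tailT m 0 X)) Filter.atTop (nhds 0) := by
    simpa using ENNReal.tendsto_ofReal (tendsto_tailT_zero m)
  exact le_antisymm (ge_of_tendsto hlim (Filter.eventually_atTop.mpr
    ⟨1, fun X hX => hbound X (by linarith)⟩)) bot_le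

theorem measurePreserving_rotation_gaussMat {m n : ℕ} {O : Matrix (Fin n) (Fin n) ℝ}
    (hO : O * Oᵀ = 1) :
    MeasurePreserving (fun H : Fin m → Fin n → ℝ => fun j => O *ᵥ H j) (gaussMat m n)
      (gaussMat m n) :=
  measurePreserving_pi _ _ fun _ => measurePreserving_mulVec_stdG O hO

theorem of_rotation {m n : ℕ} (O : Matrix (Fin n) (Fin n) ℝ) (H : Fin m → Fin n → ℝ) :
    (of fun j => O *ᵥ H j : Matrix (Fin m) (Fin n) ℝ) = of H * Oᵀ := by
  ext i j
  simp [Matrix.mul_apply, mulVec, dotProduct, mul_comm]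

theorem integrable_and_integral_sum_sq_gaussMat (m n : ℕ) :
    Integrable (fun H : Fin m → Fin n → ℝ => ∑ i, ∑ j, H i j ^ 2) (gaussMat m n) ∧
    ∫ H : Fin m → Fin n → ℝ, ∑ i, ∑ j, H i j ^ 2 ∂(gaussMat m n) = m * n := by
  have hrow : ∀ i : Fin m, MeasurePreserving (Function.eval i) (gaussMat m n) (stdG n) :=
    fun i => measurePreserving_eval _ i
  have hcol : ∀ j : Fin n, MeasurePreserving (Function.eval j) (stdG n) (gaussianReal 0 1) :=
    fun j => measurePreserving_eval _ j
  have hent : ∀ i j, MeasurePreserving (fun H : Fin m → Fin n → ℝ => H i j) (gaussMat m n)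
      (gaussianReal 0 1) := fun i j => (hcol j).comp (hrow i)
  have hsq : Integrable (fun x : ℝ => x ^ 2) (gaussianReal 0 1) :=
    Integrable.of_integral_ne_zero (by rw [integral_sq_gaussianReal]; exact one_ne_zero)
  have hInt : ∀ i j, Integrable (fun H : Fin m → Fin n → ℝ => H i j ^ 2) (gaussMat m n) :=
    fun i j => (hent i j).integrable_comp_of_integrable hsq
  have hval : ∀ i j, ∫ H : Fin m → Fin n → ℝ, H i j ^ 2 ∂(gaussMat m n) = 1 := fun i j => by
    have h := integral_sq_gaussianReal 1
    rwa [← (hent i j).map_eq, integral_map (hent i j).measurable.aemeasurable (by fun_prop)] at h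
  refine ⟨integrable_finsetSum _ fun i _ => integrable_finsetSum _ fun j _ => hInt i j, ?_⟩
  rw [integral_finsetSum _ fun i _ => integrable_finsetSum _ fun j _ => hInt i j]
  simp_rw [integral_finsetSum Finset.univ fun j _ => hInt _ j, hval]
  simp

theorem exp_le_lintegral_exp_gaussMat (m n : ℕ) {t : ℝ} (ht : 0 ≤ t) :
    ENNReal.ofReal (Real.exp (-(t * (m * n)))) ≤
      ∫⁻ H : Fin m → Fin n → ℝ, ENNReal.ofReal (Real.exp (-(t * ∑ i, ∑ j, H i j ^ 2)))
        ∂(gaussMat m n) := by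
  obtain ⟨hInt, hval⟩ := integrable_and_integral_sum_sq_gaussMat m n
  set N : (Fin m → Fin n → ℝ) → ℝ := fun H => ∑ i, ∑ j, H i j ^ 2 with hN
  have hN0 : ∀ H, 0 ≤ N H := fun H =>
    Finset.sum_nonneg fun _ _ => Finset.sum_nonneg fun _ _ => sq_nonneg _
  have hNc : Continuous N := by fun_prop
  have hexp : Integrable (fun H => Real.exp (-(t * N H))) (gaussMat m n) := by
    refine Integrable.mono' (integrable_const (1 : ℝ))
      (Continuous.aestronglyMeasurable (by fun_prop)) (Filter.Eventually.of_forall fun H => ?_)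
    rw [Real.norm_eq_abs, Real.abs_exp, Real.exp_le_one_iff]
    nlinarith [hN0 H, mul_nonneg ht (hN0 H)]
  rw [← ofReal_integral_eq_lintegral_ofReal hexp
    (Filter.Eventually.of_forall fun H => (Real.exp_pos _).le)]
  refine ENNReal.ofReal_le_ofReal ?_
  have hlin : Integrable (fun H => Real.exp (-(t * (m * n))) * (1 + t * (m * n) - t * N H))
      (gaussMat m n) := ((integrable_const _).sub (hInt.const_mul t)).const_mul _
  calc Real.exp (-(t * (m * n)))
      = ∫ H, Real.exp (-(t * (m * n))) * (1 + t * (m * n) - t * N H) ∂(gaussMat m n) := by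
        rw [integral_const_mul, integral_sub (integrable_const _) (hInt.const_mul t),
          integral_const_mul, hval]
        simp
    _ ≤ _ := by
        refine integral_mono hlin hexp fun H => ?_
        calc Real.exp (-(t * (m * n))) * (1 + t * (m * n) - t * N H)
            ≤ Real.exp (-(t * (m * n))) * Real.exp (t * (m * n) - t * N H) := by
              gcongr
              linarith [Real.add_one_le_exp (t * (m * n) - t * N H)]
          _ = _ := by rw [← Real.exp_add]; congr 1; ring

theorem gaussMat_nearMiss_le {n k p : ℕ} (hk : 0 < k) (hmn : k + p ≤ n)
    {V : Matrix (Fin n) (Fin k) ℂ} (hV : Vᴴ * V = 1) {X η : ℝ} (hX : 0 < X) (hη : 0 ≤ η) :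
    gaussMat (k + p) n {H | NearMiss η V (of H : Matrix (Fin (k + p)) (Fin n) ℝ)} ≤
      ENNReal.ofReal (Real.exp (X * η * n) * tailT k p X) := by
  obtain ⟨μ, hμp, hμ⟩ := exists_orthogonal_invariant_probability n
  set m := k + p with hm
  have : NeZero m := ⟨by omega⟩
  set E₁ : Matrix (Fin m) (Fin n) ℝ := (1 : Matrix (Fin n) (Fin n) ℝ).submatrix (Fin.castLE hmn) id
  have hE₁ : E₁ * E₁ᵀ = 1 := by
    ext a b
    simp [E₁, Matrix.mul_apply, Matrix.one_apply]
  set ϖ := μ {O | NearMiss η V (E₁ * (O : Matrix (Fin n) (Fin n) ℝ)ᵀ)} with hϖ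
  have hrank := det_mul_transpose_ne_zero_ae (by omega : 0 < m) hmn
  have hcont : Continuous fun q : (Fin m → Fin n → ℝ) × orthogonalGroup (Fin n) ℝ =>
      (of q.1 : Matrix (Fin m) (Fin n) ℝ) * (q.2 : Matrix (Fin n) (Fin n) ℝ)ᵀ := by
    have h1 : Continuous fun q : (Fin m → Fin n → ℝ) × orthogonalGroup (Fin n) ℝ =>
      (of q.1 : Matrix (Fin m) (Fin n) ℝ) := continuous_fst
    fun_prop
  have hO : ∀ O : orthogonalGroup (Fin n) ℝ,
      (O : Matrix (Fin n) (Fin n) ℝ) * (O : Matrix (Fin n) (Fin n) ℝ)ᵀ = 1 :=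
    fun O => (mem_orthogonalGroup_iff _ _).mp O.2
  have hbadc : IsClosed {H : Fin m → Fin n → ℝ | NearMiss η V (of H)} := isClosed_nearMiss η V
  have hbadm := hbadc.measurableSet
  have hprob : gaussMat m n {H | NearMiss η V (of H)} = ϖ := by
    set S := {q : (Fin m → Fin n → ℝ) × orthogonalGroup (Fin n) ℝ |
      NearMiss η V ((of q.1 : Matrix (Fin m) (Fin n) ℝ) * (q.2 : Matrix (Fin n) (Fin n) ℝ)ᵀ)}
    have hS : MeasurableSet S := ((isClosed_nearMiss η V).preimage hcont).measurableSet
    have h1 : ((gaussMat m n).prod μ) S = gaussMat m n {H | NearMiss η V (of H)} := by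
      rw [Measure.prod_apply_symm hS]
      have : ∀ O : orthogonalGroup (Fin n) ℝ, gaussMat m n ((fun H => (H, O)) ⁻¹' S) =
          gaussMat m n {H | NearMiss η V (of H)} := fun O => by
        rw [← (measurePreserving_rotation_gaussMat (hO O)).measure_preimage
          hbadm.nullMeasurableSet]
        congr 1
        ext H
        simp only [Set.mem_preimage, Set.mem_ofPred_eq, S, of_rotation]
      simp [this]
    rw [← h1, Measure.prod_apply hS]
    have : ∀ᵐ H ∂(gaussMat m n), μ (Prod.mk H ⁻¹' S) = ϖ := by
      filter_upwards [hrank] with H hH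
      exact measure_nearMiss_rotation hmn hμ hE₁ hH
    rw [lintegral_congr_ae this]
    simp
  have hswap : ∫⁻ H, ENNReal.ofReal (1 - massN X (wish V H)) ∂(gaussMat m n) =
      ∫⁻ H, ∫⁻ O, ENNReal.ofReal (1 - massN X (wish V
        ((of H : Matrix (Fin m) (Fin n) ℝ) * (O : Matrix (Fin n) (Fin n) ℝ)ᵀ)))
        ∂μ ∂(gaussMat m n) := by
    rw [lintegral_lintegral_swap]
    · have hwc : Continuous fun H : Fin m → Fin n → ℝ => wish V H := continuous_wish V
      have hmeas : Measurable fun H : Fin m → Fin n → ℝ =>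
          ENNReal.ofReal (1 - massN X (wish V H)) :=
        ((measurable_massN X hwc).const_sub 1).ennreal_ofReal
      have : ∀ O : orthogonalGroup (Fin n) ℝ, ∫⁻ H, ENNReal.ofReal (1 - massN X (wish V
          ((of H : Matrix (Fin m) (Fin n) ℝ) * (O : Matrix (Fin n) (Fin n) ℝ)ᵀ)))
          ∂(gaussMat m n) = ∫⁻ H, ENNReal.ofReal (1 - massN X (wish V H)) ∂(gaussMat m n) := by
        intro O
        rw [← (measurePreserving_rotation_gaussMat (hO O)).lintegral_comp hmeas]
        refine lintegral_congr fun H => ?_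
        rw [← of_rotation]
        rfl
      simp [this]
    · exact ((measurable_massN X ((continuous_wish V).comp hcont)).const_sub
        1).ennreal_ofReal.aemeasurable
  have hlow : ENNReal.ofReal (Real.exp (-(X * η * n))) * ϖ ≤ ENNReal.ofReal (tailT k p X) := by
    refine le_trans ?_ (lintegral_one_sub_massN_wish_le (p := p) hk hV hX)
    rw [← hm, hswap]
    have hmR : (0 : ℝ) < m := Nat.cast_pos.mpr (by omega)
    calc ENNReal.ofReal (Real.exp (-(X * η * n))) * ϖ
        ≤ (∫⁻ H : Fin m → Fin n → ℝ, ENNReal.ofReal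
            (Real.exp (-(X * η / m * ∑ i, ∑ j, H i j ^ 2))) ∂(gaussMat m n)) * ϖ := by
          gcongr
          have h := exp_le_lintegral_exp_gaussMat m n (t := X * η / m) (by positivity)
          rwa [show X * η / m * (m * n) = X * η * n by field_simp] at h
      _ = ∫⁻ H : Fin m → Fin n → ℝ, ENNReal.ofReal
            (Real.exp (-(X * η / m * ∑ i, ∑ j, H i j ^ 2))) * ϖ ∂(gaussMat m n) := by
          rw [lintegral_mul_const _ (by fun_prop)]
      _ ≤ _ := by
          refine lintegral_mono_ae ?_
          filter_upwards [hrank] with H hH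
          refine le_trans (le_of_eq ?_) (exp_mul_measure_nearMiss_le hmn hX hη hμ hE₁ hH)
          congr 4
          simp only [of_apply]
          ring
  rw [hprob, ENNReal.ofReal_mul (Real.exp_pos _).le]
  calc ϖ = ENNReal.ofReal (Real.exp (X * η * n)) *
        (ENNReal.ofReal (Real.exp (-(X * η * n))) * ϖ) := by
        rw [← mul_assoc, ← ENNReal.ofReal_mul (Real.exp_pos _).le, ← Real.exp_add]
        simp
    _ ≤ _ := by gcongr

theorem Gamma_add_half_le {x : ℝ} (hx : 0 < x) :
    Real.Gamma (x + 1 / 2) ≤ √x * Real.Gamma x := by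
  have h := Real.Gamma_mul_add_mul_le_rpow_Gamma_mul_rpow_Gamma hx (by linarith : 0 < x + 1)
    one_half_pos one_half_pos (by norm_num)
  rw [show 1 / 2 * x + 1 / 2 * (x + 1) = x + 1 / 2 by ring, Real.Gamma_add_one hx.ne',
    ← Real.sqrt_eq_rpow, ← Real.sqrt_eq_rpow, Real.sqrt_mul hx.le] at h
  calc Real.Gamma (x + 1 / 2) ≤ _ := h
    _ = √x * (√(Real.Gamma x) * √(Real.Gamma x)) := by ring
    _ = _ := by rw [Real.mul_self_sqrt (Real.Gamma_pos_of_pos hx).le]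

theorem Gamma_add_half_nat_le {x : ℝ} (hx : 0 < x) (p : ℕ) :
    Real.Gamma (x + (p + 1) / 2) ≤ (x + p / 2) ^ (((p : ℝ) + 1) / 2) * Real.Gamma x := by
  have hG := Real.Gamma_pos_of_pos hx
  induction p using Nat.twoStepInduction with
  | zero => simpa [Real.sqrt_eq_rpow] using Gamma_add_half_le hx
  | one =>
    norm_num
    rw [Real.Gamma_add_one hx.ne']
    gcongr
    linarith
  | more p ih _ =>
    push_cast
    have hpos : 0 < x + ((p : ℝ) + 1) / 2 := by positivity
    rw [show x + ((p : ℝ) + 2 + 1) / 2 = x + ((p : ℝ) + 1) / 2 + 1 by ring,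
      Real.Gamma_add_one hpos.ne', show ((p : ℝ) + 2 + 1) / 2 = ((p : ℝ) + 1) / 2 + 1 by ring,
      Real.rpow_add (by positivity), Real.rpow_one]
    calc (x + ((p : ℝ) + 1) / 2) * Real.Gamma (x + ((p : ℝ) + 1) / 2)
        ≤ (x + ((p : ℝ) + 2) / 2) * ((x + p / 2) ^ (((p : ℝ) + 1) / 2) * Real.Gamma x) := by
          gcongr
          linarith
      _ ≤ (x + ((p : ℝ) + 2) / 2) * ((x + (p + 2) / 2) ^ (((p : ℝ) + 1) / 2) * Real.Gamma x) := by
          gcongr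
          linarith
      _ = _ := by ring

theorem rpow_le_Gamma_add_half {p : ℕ} (hp : 1 ≤ p) :
    1.14 * ((((p : ℝ) + 1) / 2) / Real.exp 1) ^ (((p : ℝ) + 1) / 2) ≤
      Real.Gamma (((p : ℝ) + 1) / 2 + 1 / 2) := by
  have hp' : (1 : ℝ) ≤ p := by exact_mod_cast hp
  have hp0 : (0 : ℝ) < p := by linarith
  set r : ℝ := ((p : ℝ) + 1) / 2 with hr
  have hr0 : 0 < r := by positivity
  have hG := Real.Gamma_pos_of_pos (by linarith : 0 < r + 1 / 2)
  have hGr := Real.Gamma_pos_of_pos hr0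
  have h1 : √((p : ℝ) / 2) * Real.Gamma r ≤ Real.Gamma (r + 1 / 2) := by
    have h := Gamma_add_half_le (x := (p : ℝ) / 2) (by positivity)
    have h2 : Real.Gamma (r + 1 / 2) = p / 2 * Real.Gamma (p / 2) := by
      rw [← Real.Gamma_add_one (by positivity)]; congr 1; rw [hr]; ring
    rw [show (p : ℝ) / 2 + 1 / 2 = r by rw [hr]; ring] at h
    calc √((p : ℝ) / 2) * Real.Gamma r ≤ √((p : ℝ) / 2) * (√((p : ℝ) / 2) * Real.Gamma (p / 2)) := by
          gcongr
      _ = _ := by rw [h2, ← mul_assoc, Real.mul_self_sqrt (by positivity)]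
  have h3 : Real.Gamma r * Real.Gamma (r + 1 / 2) = p.factorial * 2 ^ (-(p : ℝ)) * √Real.pi := by
    rw [Real.Gamma_mul_Gamma_add_half, show 2 * r = (p : ℝ) + 1 by rw [hr]; ring,
      Real.Gamma_nat_eq_factorial, show 1 - ((p : ℝ) + 1) = -p by ring]
  have h4 := Stirling.le_factorial_stirling p
  have hsq : Real.pi * p * (p / (2 * Real.exp 1)) ^ p ≤ Real.Gamma (r + 1 / 2) ^ 2 := by
    calc Real.pi * p * (p / (2 * Real.exp 1)) ^ p
        = √((p : ℝ) / 2) * ((√(2 * Real.pi * p) * (p / Real.exp 1) ^ p) *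
            2 ^ (-(p : ℝ)) * √Real.pi) := by
          have e1 : √((p : ℝ) / 2) * √(2 * Real.pi * p) * √Real.pi = Real.pi * p := by
            rw [← Real.sqrt_mul (by positivity), ← Real.sqrt_mul (by positivity),
              show (p : ℝ) / 2 * (2 * Real.pi * p) * Real.pi = (Real.pi * p) ^ 2 by ring,
              Real.sqrt_sq (by positivity)]
          rw [← e1, Real.rpow_neg (by norm_num), Real.rpow_natCast, mul_comm 2 (Real.exp 1),
            ← div_div, div_pow _ (2 : ℝ)]
          ring
      _ ≤ √((p : ℝ) / 2) * (p.factorial * 2 ^ (-(p : ℝ)) * √Real.pi) := by gcongr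
      _ = √((p : ℝ) / 2) * Real.Gamma r * Real.Gamma (r + 1 / 2) := by rw [← h3]; ring
      _ ≤ Real.Gamma (r + 1 / 2) * Real.Gamma (r + 1 / 2) := by gcongr
      _ = _ := by ring
  refine le_of_sq_le_sq ?_ hG.le
  refine le_trans ?_ hsq
  have h5 : ((r / Real.exp 1) ^ r) ^ 2 = (r / Real.exp 1) ^ (p + 1) := by
    rw [← Real.rpow_natCast, ← Real.rpow_mul (by positivity), ← Real.rpow_natCast]
    congr 1
    rw [hr]
    push_cast
    ring
  have h6 : (r / Real.exp 1) ^ p ≤ (p / (2 * Real.exp 1)) ^ p * Real.exp 1 := by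
    have e1 : (1 + 1 / (p : ℝ)) ^ p ≤ Real.exp 1 := by
      calc (1 + 1 / (p : ℝ)) ^ p ≤ Real.exp (1 / p) ^ p := by
            gcongr
            linarith [Real.add_one_le_exp (1 / (p : ℝ))]
        _ = Real.exp 1 := by rw [← Real.exp_nat_mul]; congr 1; field_simp
    calc (r / Real.exp 1) ^ p = (p / (2 * Real.exp 1)) ^ p * (1 + 1 / (p : ℝ)) ^ p := by
          rw [← mul_pow, hr]; congr 1; field_simp
      _ ≤ _ := by gcongr
  rw [mul_pow, h5, pow_succ]
  have he := Real.exp_pos 1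
  have hB : 0 < (p / (2 * Real.exp 1)) ^ p := by positivity
  calc (1.14 : ℝ) ^ 2 * ((r / Real.exp 1) ^ p * (r / Real.exp 1))
      ≤ 1.14 ^ 2 * ((p / (2 * Real.exp 1)) ^ p * Real.exp 1 * (r / Real.exp 1)) := by gcongr
    _ = 1.14 ^ 2 * r * (p / (2 * Real.exp 1)) ^ p := by field_simp
    _ ≤ Real.pi * p * (p / (2 * Real.exp 1)) ^ p := by
      refine mul_le_mul_of_nonneg_right ?_ hB.le
      rw [hr]
      nlinarith [Real.pi_gt_three]

theorem tailT_eq {k p : ℕ} (hk : 0 < k) (X : ℝ) :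
    tailT k p X = (1 + 1 / X) * (1 + 2 * X) ^ (-(((p : ℝ) + 1) / 2)) *
      (√Real.pi / Real.Gamma (((p : ℝ) + 1) / 2 + 1 / 2) *
        (Real.Gamma ((k : ℝ) / 2 + ((p : ℝ) + 1) / 2) / Real.Gamma ((k : ℝ) / 2))) := by
  have hk' : (0 : ℝ) < k := Nat.cast_pos.mpr hk
  set r : ℝ := ((p : ℝ) + 1) / 2 with hr
  have hr0 : 0 < r := by positivity
  have hM : ((k + p).descFactorial k : ℝ) = (k + p).factorial / p.factorial := by
    rw [eq_div_iff (by positivity)]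
    have := Nat.factorial_mul_descFactorial (Nat.le_add_right k p)
    rw [Nat.add_sub_cancel_left, mul_comm] at this
    exact_mod_cast this
  have d1 := Real.Gamma_mul_Gamma_add_half ((k : ℝ) / 2)
  have d2 := Real.Gamma_mul_Gamma_add_half ((k : ℝ) / 2 + r)
  have d3 := Real.Gamma_mul_Gamma_add_half r
  rw [show 2 * ((k : ℝ) / 2) = k by ring] at d1
  rw [show 2 * ((k : ℝ) / 2 + r) = ((k + p : ℕ) : ℝ) + 1 by rw [hr]; push_cast; ring,
    Real.Gamma_nat_eq_factorial] at d2
  rw [show 2 * r = (p : ℝ) + 1 by rw [hr]; ring, Real.Gamma_nat_eq_factorial] at d3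
  have g1 := Real.Gamma_pos_of_pos (by positivity : 0 < (k : ℝ) / 2)
  have g2 := Real.Gamma_pos_of_pos (by positivity : 0 < (k : ℝ) / 2 + 1 / 2)
  have g3 := Real.Gamma_pos_of_pos (by positivity : 0 < (k : ℝ) / 2 + r)
  have g4 := Real.Gamma_pos_of_pos (by positivity : 0 < (k : ℝ) / 2 + r + 1 / 2)
  have g5 := Real.Gamma_pos_of_pos hr0
  have g6 := Real.Gamma_pos_of_pos (by positivity : 0 < r + 1 / 2)
  have g7 := Real.Gamma_pos_of_pos hk'
  have hpi := Real.sqrt_pos.mpr Real.pi_pos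
  have t1 : (0 : ℝ) < 2 ^ (1 - (k : ℝ)) := by positivity
  have t3 : (0 : ℝ) < 2 ^ (1 - ((p : ℝ) + 1)) := by positivity
  have t2 : (2 : ℝ) ^ (1 - (((k + p : ℕ) : ℝ) + 1)) * 2 =
      2 ^ (1 - (k : ℝ)) * 2 ^ (1 - ((p : ℝ) + 1)) := by
    rw [← Real.rpow_add two_pos]
    nth_rewrite 2 [← Real.rpow_one 2]
    rw [← Real.rpow_add two_pos]
    congr 1
    push_cast
    ring
  have t4 : (0 : ℝ) < 2 ^ (1 - (((k + p : ℕ) : ℝ) + 1)) := by positivity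
  rw [tailT, hM, show ((k : ℝ) + 1) / 2 = (k : ℝ) / 2 + 1 / 2 by ring,
    show (k : ℝ) / 2 + 1 / 2 + ((p : ℝ) + 1) / 2 = (k : ℝ) / 2 + r + 1 / 2 by rw [hr]; ring, ← hr]
  have e1 : Real.Gamma k = Real.Gamma (k / 2) * Real.Gamma (k / 2 + 1 / 2) /
      (2 ^ (1 - (k : ℝ)) * √Real.pi) := by
    rw [d1]; field_simp
  have e2 : ((k + p).factorial : ℝ) = Real.Gamma (k / 2 + r) * Real.Gamma (k / 2 + r + 1 / 2) /
      (2 ^ (1 - (((k + p : ℕ) : ℝ) + 1)) * √Real.pi) := by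
    rw [d2]; field_simp
  have e3 : (p.factorial : ℝ) = Real.Gamma r * Real.Gamma (r + 1 / 2) /
      (2 ^ (1 - ((p : ℝ) + 1)) * √Real.pi) := by
    rw [d3]; field_simp
  rw [e1, e2, e3]
  set a := (2 : ℝ) ^ (1 - (((k + p : ℕ) : ℝ) + 1))
  set b := (2 : ℝ) ^ (1 - (k : ℝ))
  set c := (2 : ℝ) ^ (1 - ((p : ℝ) + 1))
  have e4 : c = a * 2 / b := by rw [t2]; field_simp
  rw [e4]
  field_simp

theorem exp_mul_tailT_le {k p : ℕ} (hk : 1 ≤ k) (hp : 1 ≤ p) {δ X : ℝ} (hδ0 : 0 < δ) (hδ1 : δ < 1)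
    (hX : Real.exp 1 ^ 2 * (k + p) / (2 * (p + 1)) * (2 / δ) ^ (2 / ((p : ℝ) + 1)) ≤ X) :
    Real.exp (((p : ℝ) + 1) / 2) * tailT k p X ≤ δ := by
  have hk' : (1 : ℝ) ≤ k := by exact_mod_cast hk
  have hp' : (1 : ℝ) ≤ p := by exact_mod_cast hp
  set r : ℝ := ((p : ℝ) + 1) / 2 with hr
  have hr0 : 0 < r := by positivity
  have he := Real.exp_one_gt_d9
  have hD : 1 ≤ (2 / δ) ^ (2 / ((p : ℝ) + 1)) :=
    Real.one_le_rpow (by rw [le_div_iff₀ hδ0]; linarith) (by positivity)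
  set X₀ := Real.exp 1 ^ 2 * (k + p) / (2 * (p + 1)) * (2 / δ) ^ (2 / ((p : ℝ) + 1)) with hX₀
  have hX₀3 : 3.6 ≤ X₀ := by
    have h1 : (3.6 : ℝ) ≤ Real.exp 1 ^ 2 * (k + p) / (2 * (p + 1)) := by
      rw [le_div_iff₀ (by positivity)]
      have h7 : 7.2 ≤ Real.exp 1 ^ 2 := by nlinarith
      nlinarith
    nlinarith
  have hXpos : 0 < X := by linarith
  have hG1 := Real.Gamma_pos_of_pos (by positivity : 0 < r + 1 / 2)
  have hG2 := Real.Gamma_pos_of_pos (by positivity : 0 < (k : ℝ) / 2)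
  have h1 : 1 + 1 / X ≤ 1.28 := by
    have : 1 / X ≤ 1 / 3.6 := one_div_le_one_div_of_le (by norm_num) (by linarith)
    norm_num at this ⊢
    linarith
  have h2 : (1 + 2 * X) ^ (-r) ≤ (2 * X₀) ^ (-r) :=
    Real.rpow_le_rpow_of_nonpos (by linarith) (by linarith) (by linarith)
  have h3 : Real.Gamma ((k : ℝ) / 2 + r) / Real.Gamma ((k : ℝ) / 2) ≤ (((k : ℝ) + p) / 2) ^ r := by
    rw [div_le_iff₀ hG2, hr, show ((k : ℝ) + p) / 2 = k / 2 + p / 2 by ring]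
    exact Gamma_add_half_nat_le (by positivity) p
  have h4 : (2 * X₀) ^ (-r) * (((k : ℝ) + p) / 2) ^ r * Real.exp r =
      (r / Real.exp 1) ^ r * (δ / 2) := by
    have e1 : 2 * X₀ = (((k : ℝ) + p) / 2) * Real.exp 1 * (Real.exp 1 / r) *
        (2 / δ) ^ (2 / ((p : ℝ) + 1)) := by
      rw [hX₀, hr]; field_simp; try ring
    have e2 : ((2 / δ) ^ (2 / ((p : ℝ) + 1))) ^ r = 2 / δ := by
      rw [← Real.rpow_mul (by positivity), hr]
      have : 2 / ((p : ℝ) + 1) * (((p : ℝ) + 1) / 2) = 1 := by field_simp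
      rw [this, Real.rpow_one]
    have e3 : Real.exp r = Real.exp 1 ^ r := by rw [← Real.exp_mul, one_mul]
    have e4 : (2 * X₀) ^ r = (((k : ℝ) + p) / 2) ^ r * Real.exp 1 ^ r * (Real.exp 1 / r) ^ r *
        (2 / δ) := by
      rw [e1, Real.mul_rpow (by positivity) (by positivity), e2,
        Real.mul_rpow (by positivity) (by positivity), Real.mul_rpow (by positivity) (by positivity)]
    have e5 : (r / Real.exp 1) ^ r = ((Real.exp 1 / r) ^ r)⁻¹ := by
      rw [← Real.inv_rpow (by positivity), inv_div]
    rw [Real.rpow_neg (by positivity), e4, e3, e5]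
    have p1 : 0 < (((k : ℝ) + p) / 2) ^ r := by positivity
    have p2 : 0 < Real.exp 1 ^ r := by positivity
    have p3 : 0 < (Real.exp 1 / r) ^ r := by positivity
    field_simp
  have h5 := rpow_le_Gamma_add_half hp
  rw [← hr] at h5
  have h6 : √Real.pi ≤ 1.78 := by
    rw [Real.sqrt_le_left (by norm_num)]
    nlinarith [Real.pi_lt_d2]
  rw [tailT_eq hk, ← hr]
  have hq : 0 < (r / Real.exp 1) ^ r := by positivity
  calc Real.exp r * ((1 + 1 / X) * (1 + 2 * X) ^ (-r) * (√Real.pi / Real.Gamma (r + 1 / 2) *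
        (Real.Gamma ((k : ℝ) / 2 + r) / Real.Gamma ((k : ℝ) / 2))))
      ≤ Real.exp r * (1.28 * (2 * X₀) ^ (-r) * (1.78 / Real.Gamma (r + 1 / 2) *
        (((k : ℝ) + p) / 2) ^ r)) := by gcongr
    _ = 1.28 * 1.78 / Real.Gamma (r + 1 / 2) *
        ((2 * X₀) ^ (-r) * (((k : ℝ) + p) / 2) ^ r * Real.exp r) := by ring
    _ = 1.28 * 1.78 / 2 * ((r / Real.exp 1) ^ r) * δ / Real.Gamma (r + 1 / 2) := by rw [h4]; ring
    _ ≤ δ := by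
      rw [div_le_iff₀ hG1]
      nlinarith

theorem exists_scale_exp_mul_tailT_le {k p n₂ : ℕ} (hk : 1 ≤ k) (hp : 1 ≤ p) {δ : ℝ} (hδ0 : 0 < δ)
    (hδ1 : δ < 1) :
    ∃ X, 0 < X ∧ Real.exp (X * (1 / (1 + Cd k p n₂ δ ^ 2)) * ((k + n₂ : ℕ) : ℝ)) *
      tailT k p X ≤ δ := by
  have hk' : (1 : ℝ) ≤ k := by exact_mod_cast hk
  have hp' : (1 : ℝ) ≤ p := by exact_mod_cast hp
  have hn : (0 : ℝ) < ((k + n₂ : ℕ) : ℝ) := by exact_mod_cast (by omega : 0 < k + n₂)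
  set τ := Cd k p n₂ δ with hτ
  refine ⟨((p : ℝ) + 1) / 2 * (1 + τ ^ 2) / ((k + n₂ : ℕ) : ℝ), by positivity, ?_⟩
  rw [show ((p : ℝ) + 1) / 2 * (1 + τ ^ 2) / ((k + n₂ : ℕ) : ℝ) * (1 / (1 + τ ^ 2)) *
    ((k + n₂ : ℕ) : ℝ) = ((p : ℝ) + 1) / 2 by field_simp]
  refine exp_mul_tailT_le hk hp hδ0 hδ1 ?_
  rw [le_div_iff₀ hn]
  set D := (2 / δ) ^ (2 / ((p : ℝ) + 1)) with hD
  have hD0 : 0 < D := by positivity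
  set b := √(n₂ : ℝ) + √((k : ℝ) + p) + √(2 * Real.log (2 / δ)) with hb
  have hb2 : ((k + n₂ : ℕ) : ℝ) ≤ b ^ 2 := by
    have s1 := Real.sq_sqrt (Nat.cast_nonneg n₂ : (0 : ℝ) ≤ n₂)
    have s2 := Real.sq_sqrt (by positivity : (0 : ℝ) ≤ (k : ℝ) + p)
    have s3 := Real.sqrt_nonneg (n₂ : ℝ)
    have s4 := Real.sqrt_nonneg ((k : ℝ) + p)
    have s5 := Real.sqrt_nonneg (2 * Real.log (2 / δ))
    push_cast
    rw [hb]
    nlinarith [mul_nonneg s3 s4, mul_nonneg s3 s5, mul_nonneg s4 s5]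
  have hτ2 : τ ^ 2 = Real.exp 1 ^ 2 * (k + p) / (p + 1) ^ 2 * D * b ^ 2 := by
    have s2 := Real.sq_sqrt (by positivity : (0 : ℝ) ≤ (k : ℝ) + p)
    have sD : ((2 / δ) ^ ((1 : ℝ) / ((p : ℝ) + 1))) ^ 2 = D := by
      rw [← Real.rpow_natCast, ← Real.rpow_mul (by positivity), hD]
      congr 1
      push_cast
      ring
    rw [hτ, Cd, mul_pow, mul_pow, div_pow, mul_pow, s2, sD]
  calc Real.exp 1 ^ 2 * (k + p) / (2 * (p + 1)) * D * ((k + n₂ : ℕ) : ℝ)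
      ≤ Real.exp 1 ^ 2 * (k + p) / (2 * (p + 1)) * D * b ^ 2 := by gcongr
    _ = ((p : ℝ) + 1) / 2 * τ ^ 2 := by rw [hτ2]; field_simp
    _ ≤ _ := by gcongr; linarith

theorem lt_countP_of_lt_getElem {l : List ℝ} (hl : l.Pairwise (· ≥ ·)) {i : ℕ} (hi : i < l.length)
    {t : ℝ} (ht : t < l[i]) : i < l.countP (fun x => t < x) := by
  have h1 : (l.take (i + 1)).countP (fun x => t < x) = (l.take (i + 1)).length := by
    rw [List.countP_eq_length]
    intro a ha
    obtain ⟨j, hj, rfl⟩ := List.getElem_of_mem ha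
    rw [List.getElem_take]
    rw [List.length_take] at hj
    have hji : j ≤ i := by omega
    rcases hji.eq_or_lt with rfl | hlt
    · simpa using ht
    · simpa using ht.trans_le (List.pairwise_iff_getElem.mp hl j i (by omega) hi hlt)
  have h2 := (List.take_sublist (i + 1) l).countP_le (p := fun x => t < x)
  rw [h1, List.length_take] at h2
  omega

theorem lt_card_of_lt_getD_insertionSort {k : ℕ} (f : Fin k → ℝ) {i : ℕ} {t : ℝ} (ht0 : 0 ≤ t)
    (ht : t < (List.insertionSort (· ≥ ·) (List.ofFn f)).getD i 0) :
    i < (Finset.univ.filter fun a => t < f a).card := by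
  set l := List.insertionSort (· ≥ ·) (List.ofFn f) with hl
  have hi : i < l.length := by
    by_contra h
    rw [List.getD_eq_default _ _ (not_lt.mp h)] at ht
    linarith
  rw [List.getD_eq_getElem _ _ hi] at ht
  have h := lt_countP_of_lt_getElem (List.pairwise_insertionSort _ _) hi ht
  rw [(List.perm_insertionSort _ _).countP_eq, List.ofFn_eq_map, List.countP_map,
    List.countP_eq_length_filter] at h
  exact h

theorem exists_ne_zero_of_card_lt {k : ℕ} (U : Matrix (Fin k) (Fin k) ℂ) (S T : Finset (Fin k))
    (h : k < S.card + T.card) :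
    ∃ c : Fin k → ℂ, c ≠ 0 ∧ (∀ i ∉ S, c i = 0) ∧ ∀ i ∉ T, (U *ᵥ c) i = 0 := by
  let F : (Fin k → ℂ) →ₗ[ℂ] ({i // i ∉ S} → ℂ) × ({i // i ∉ T} → ℂ) :=
    (LinearMap.funLeft ℂ ℂ Subtype.val).prod ((LinearMap.funLeft ℂ ℂ Subtype.val).comp U.mulVecLin)
  have hF : LinearMap.ker F ≠ ⊥ := F.ker_ne_bot_of_finrank_lt (by
    have hS := S.card_le_univ
    have hT := T.card_le_univ
    simp only [Module.finrank_prod, Module.finrank_pi, Fintype.card_subtype_compl,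
      Fintype.card_fin, Fintype.card_coe] at hS hT ⊢
    omega)
  obtain ⟨c, hc, hc0⟩ := Submodule.exists_mem_ne_zero_of_ne_bot hF
  have hc' := Prod.ext_iff.mp (LinearMap.mem_ker.mp hc)
  exact ⟨c, hc0, fun i hi => congrFun hc'.1 ⟨i, hi⟩, fun i hi => congrFun hc'.2 ⟨i, hi⟩⟩

/-- One half of the Courant–Fischer principle: a bound on the span of the first `j + 1` coordinate
vectors bounds the `(j + 1)`-th smallest singular value. -/
theorem sval_le_of_sqn_mulVec_le {a k : ℕ} {M : Matrix (Fin a) (Fin k) ℂ} {t : ℝ} (ht : 0 ≤ t)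
    (j : Fin k) (h : ∀ w : Fin k → ℂ, (∀ i, j < i → w i = 0) → sqn (M *ᵥ w) ≤ t ^ 2 * sqn w) :
    sval M (k - 1 - j) ≤ t := by
  by_contra! hlt
  have hH := isHermitian_conjTranspose_mul_self M
  rw [sval, List.map_ofFn] at hlt
  have hcard := lt_card_of_lt_getD_insertionSort _ ht hlt
  set l := hH.eigenvalues with hl
  set U : Matrix (Fin k) (Fin k) ℂ := (hH.eigenvectorUnitary : Matrix (Fin k) (Fin k) ℂ)
  have hU : Uᴴ * U = 1 := by
    simpa [star_eq_conjTranspose] using Unitary.coe_star_mul_self hH.eigenvectorUnitary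
  have hS : Mᴴ * M = U * diagonal (fun i => (l i : ℂ)) * Uᴴ := by
    conv_lhs => rw [hH.spectral_theorem]
    rw [Unitary.conjStarAlgAut_apply]
    rfl
  obtain ⟨c, hc0, hcS, hcT⟩ := exists_ne_zero_of_card_lt U
    (Finset.univ.filter fun i => t < (Real.sqrt ∘ l) i) (Finset.Iic j) (by
      have := j.2
      rw [Fin.card_Iic]
      omega)
  have hw := h (U *ᵥ c) fun i hi => hcT i (by simpa using hi)
  have hquad : sqn (M *ᵥ (U *ᵥ c)) = ∑ i, l i * ‖c i‖ ^ 2 := by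
    have h1 : star (M *ᵥ (U *ᵥ c)) ⬝ᵥ (M *ᵥ (U *ᵥ c)) =
        star c ⬝ᵥ (diagonal (fun i => (l i : ℂ)) *ᵥ c) := by
      rw [star_mulVec, ← dotProduct_mulVec, mulVec_mulVec, hS, star_mulVec, ← dotProduct_mulVec,
        mulVec_mulVec, mulVec_mulVec]
      congr 2
      calc Uᴴ * (U * diagonal (fun i => (l i : ℂ)) * Uᴴ) * U
          = (Uᴴ * U) * diagonal (fun i => (l i : ℂ)) * (Uᴴ * U) := by
            simp only [Matrix.mul_assoc]
        _ = _ := by rw [hU, Matrix.one_mul, Matrix.mul_one]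
    rw [star_dotProduct_self_eq_sqn] at h1
    have h2 : star c ⬝ᵥ (diagonal (fun i => (l i : ℂ)) *ᵥ c) =
        ((∑ i, l i * ‖c i‖ ^ 2 : ℝ) : ℂ) := by
      simp only [dotProduct, mulVec_diagonal, Pi.star_apply, Complex.ofReal_sum]
      refine Finset.sum_congr rfl fun i _ => ?_
      push_cast
      rw [← Complex.conj_mul', Complex.star_def]
      ring
    exact_mod_cast h1.trans h2
  rw [hquad, sqn_mulVec hU, sqn, Finset.mul_sum] at hw
  refine absurd hw (not_le.mpr ?_)
  obtain ⟨i₀, hi₀⟩ := Function.ne_iff.mp hc0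
  have hle : ∀ i, c i ≠ 0 → t ^ 2 < l i := by
    intro i hi
    have : t < √(l i) := by
      by_contra hn
      exact hi (hcS i (by simpa using hn))
    exact (Real.lt_sqrt ht).mp this
  refine Finset.sum_lt_sum (fun i _ => ?_) ⟨i₀, Finset.mem_univ _, ?_⟩
  · by_cases hi : c i = 0
    · simp [hi]
    · exact mul_le_mul_of_nonneg_right (hle i hi).le (by positivity)
  · exact mul_lt_mul_of_pos_right (hle i₀ hi₀) (by
      have : 0 < ‖c i₀‖ := norm_pos_iff.mpr hi₀
      positivity)

theorem exists_adjoint_comp_eq {E F : Type*} [NormedAddCommGroup E] [InnerProductSpace ℂ E]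
    [FiniteDimensional ℂ E] [NormedAddCommGroup F] [InnerProductSpace ℂ F] [FiniteDimensional ℂ F]
    {S : E →ₗ[ℂ] F} {η : ℝ} (hη : 0 < η) (hS : ∀ v, η * ‖v‖ ^ 2 ≤ ‖S v‖ ^ 2) (x : E) :
    ∃ v, LinearMap.adjoint S (S v) = x ∧ η * ‖S v‖ ^ 2 ≤ ‖x‖ ^ 2 := by
  have hinner : ∀ v, inner ℂ v (LinearMap.adjoint S (S v)) = ((‖S v‖ ^ 2 : ℝ) : ℂ) := fun v => by
    rw [LinearMap.adjoint_inner_right, inner_self_eq_norm_sq_to_K]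
    norm_cast
  have hinj : Function.Injective (LinearMap.adjoint S ∘ₗ S) := by
    rw [injective_iff_map_eq_zero]
    intro v hv
    have h1 := hinner v
    rw [show LinearMap.adjoint S (S v) = 0 from hv, inner_zero_right] at h1
    have h2 : ‖S v‖ ^ 2 = 0 := by exact_mod_cast h1.symm
    have h3 := hS v
    rw [h2] at h3
    have h4 : ‖v‖ ^ 2 = 0 := le_antisymm (by nlinarith [sq_nonneg ‖v‖]) (sq_nonneg _)
    simpa using h4
  obtain ⟨v, hv⟩ := LinearMap.injective_iff_surjective.mp hinj x
  replace hv : LinearMap.adjoint S (S v) = x := hv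
  refine ⟨v, hv, ?_⟩
  have h1 : ‖S v‖ ^ 2 ≤ ‖v‖ * ‖x‖ := by
    have h := norm_inner_le_norm (𝕜 := ℂ) v x
    rw [← hv, hinner v, hv, Complex.norm_real, Real.norm_of_nonneg (sq_nonneg _)] at h
    exact h
  have h2 := hS v
  have h3 : (‖S v‖ ^ 2) ^ 2 ≤ ‖v‖ ^ 2 * ‖x‖ ^ 2 := by
    rw [← mul_pow]
    gcongr
  rcases (sq_nonneg ‖S v‖).eq_or_lt with h0 | h0
  · rw [← h0]; simp
  · refine le_of_mul_le_mul_right ?_ h0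
    calc η * ‖S v‖ ^ 2 * ‖S v‖ ^ 2 = η * (‖S v‖ ^ 2) ^ 2 := by ring
      _ ≤ η * (‖v‖ ^ 2 * ‖x‖ ^ 2) := by gcongr
      _ = η * ‖v‖ ^ 2 * ‖x‖ ^ 2 := by ring
      _ ≤ ‖S v‖ ^ 2 * ‖x‖ ^ 2 := by gcongr
      _ = _ := by ring

theorem exists_mem_adjoint_eq {E F : Type*} [NormedAddCommGroup E] [InnerProductSpace ℂ E]
    [FiniteDimensional ℂ E] [NormedAddCommGroup F] [InnerProductSpace ℂ F] [FiniteDimensional ℂ F]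
    (T : E →ₗ[ℂ] F) (K : Submodule ℂ F) {η : ℝ} (hη : 0 < η)
    (hT : ∀ v, ‖v‖ = 1 → ∃ f ∈ K, η * ‖f‖ ^ 2 < ‖inner ℂ (T v) f‖ ^ 2) (x : E) :
    ∃ f ∈ K, LinearMap.adjoint T f = x ∧ η * ‖f‖ ^ 2 ≤ ‖x‖ ^ 2 := by
  let P : F →ₗ[ℂ] K := K.orthogonalProjectionOnto.toLinearMap
  have hadj : ∀ f : K, LinearMap.adjoint (P ∘ₗ T) f = LinearMap.adjoint T (f : F) := fun f => by
    refine ext_inner_left ℂ fun v => ?_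
    rw [LinearMap.adjoint_inner_right, LinearMap.adjoint_inner_right]
    exact K.inner_orthogonalProjectionOnto_eq_of_mem_right f (T v)
  have hunit : ∀ v, ‖v‖ = 1 → η ≤ ‖(P ∘ₗ T) v‖ ^ 2 := by
    intro v hv
    obtain ⟨f, hf, hlt⟩ := hT v hv
    have h1 : inner ℂ (T v) f = inner ℂ ((P ∘ₗ T) v) (⟨f, hf⟩ : K) :=
      (K.inner_orthogonalProjectionOnto_eq_of_mem_right ⟨f, hf⟩ (T v)).symm
    have h2 : ‖inner ℂ (T v) f‖ ≤ ‖(P ∘ₗ T) v‖ * ‖f‖ := by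
      rw [h1]
      exact norm_inner_le_norm (𝕜 := ℂ) ((P ∘ₗ T) v) (⟨f, hf⟩ : K)
    have h3 : ‖inner ℂ (T v) f‖ ^ 2 ≤ ‖(P ∘ₗ T) v‖ ^ 2 * ‖f‖ ^ 2 := by
      rw [← mul_pow]
      gcongr
    by_contra! hn
    nlinarith [sq_nonneg ‖f‖]
  obtain ⟨v, hv, hle⟩ := exists_adjoint_comp_eq (S := P ∘ₗ T) hη (fun v => by
    by_cases hv : v = 0
    · simp [hv]
    have hv' : ‖v‖ ≠ 0 := norm_ne_zero_iff.mpr hv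
    have h := hunit (((‖v‖⁻¹ : ℝ) : ℂ) • v) (by
      rw [norm_smul, Complex.norm_real, norm_inv, norm_norm, inv_mul_cancel₀ hv'])
    rw [map_smul, norm_smul, Complex.norm_real, norm_inv, norm_norm, mul_pow, inv_pow] at h
    have := mul_le_mul_of_nonneg_right h (sq_nonneg ‖v‖)
    field_simp at this
    linarith) x
  exact ⟨(P ∘ₗ T) v, Submodule.coe_mem _, (hadj _).symm.trans hv, hle⟩

theorem exists_rowComb_of_not_nearMiss {m n k : ℕ} {η : ℝ} (hη : 0 < η)
    {V : Matrix (Fin n) (Fin k) ℂ} {H : Matrix (Fin m) (Fin n) ℝ} (h : ¬NearMiss η V H)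
    (x : Fin k → ℂ) : ∃ l, Vᴴ *ᵥ rowComb H l = x ∧ η * sqn (rowComb H l) ≤ sqn x := by
  have hrow : ∀ l, toEuclideanLin (H.map Complex.ofReal)ᵀ l = WithLp.toLp 2 (rowComb H l.ofLp) :=
    fun l => rfl
  obtain ⟨f, ⟨l, rfl⟩, hx, hle⟩ := exists_mem_adjoint_eq (toEuclideanLin V)
    (LinearMap.range (toEuclideanLin (H.map Complex.ofReal)ᵀ)) hη (fun v hv => by
      unfold NearMiss at h
      push Not at h
      obtain ⟨l, hl⟩ := h v.ofLp (by rw [sqn_eq_norm_toLp]; simp [hv])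
      refine ⟨_, ⟨WithLp.toLp 2 l, rfl⟩, ?_⟩
      rw [sqn_eq_norm_toLp] at hl
      refine hl.trans_eq ?_
      rw [hrow, EuclideanSpace.inner_eq_star_dotProduct, dotProduct_comm]
      rfl) (WithLp.toLp 2 x)
  refine ⟨l.ofLp, ?_, ?_⟩
  · rw [← toEuclideanLin_conjTranspose_eq_adjoint] at hx
    exact congrArg WithLp.ofLp hx
  · rw [sqn_eq_norm_toLp, sqn_eq_norm_toLp]
    exact hle

theorem sqn_one_sub_proj_mulVec_le {N m : ℕ} {Q : Matrix (Fin N) (Fin m) ℂ} (hQ : Qᴴ * Q = 1)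
    (g : Fin N → ℂ) : sqn ((1 - Q * Qᴴ) *ᵥ g) ≤ sqn g := by
  have h0 : Qᴴ * (1 - Q * Qᴴ) = 0 := by
    rw [Matrix.mul_sub, ← Matrix.mul_assoc, hQ]; simp
  have hg : g = (1 - Q * Qᴴ) *ᵥ g + (1 : ℝ) • (Q *ᵥ (Qᴴ *ᵥ g)) := by
    rw [one_smul, mulVec_mulVec, sub_mulVec, one_mulVec, sub_add_cancel]
  have h1 : star ((1 - Q * Qᴴ) *ᵥ g) ⬝ᵥ (Q *ᵥ (Qᴴ *ᵥ g)) = 0 := by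
    rw [dotProduct_mulVec, ← conjTranspose_conjTranspose Q, ← star_mulVec,
      conjTranspose_conjTranspose Q, mulVec_mulVec, h0]
    simp
  conv_rhs => rw [hg, sqn_add_smul, h1]
  rw [Complex.zero_re]
  linarith [sqn_nonneg (Q *ᵥ (Qᴴ *ᵥ g))]

theorem sqn_append {a b : ℕ} (y : Fin (a + b) → ℂ) :
    sqn y = sqn (fun i => y (Fin.castAdd b i)) + sqn (fun i => y (Fin.natAdd a i)) :=
  Fin.sum_univ_add _

theorem colsL_mulVec {N b c : ℕ} (Z : Matrix (Fin N) (Fin (b + c)) ℂ) (w : Fin b → ℂ) :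
    colsL Z *ᵥ w = Z *ᵥ Fin.append w 0 := by
  ext i
  simp [mulVec, dotProduct, Fin.sum_univ_add, colsL]

/-- If the range of `Q` contains a vector whose coordinates in the orthonormal basis `Z` extend `w`
by a tail of relative size at most `κ`, then the sine of the angle between `Z w` and the range of
`Q` is at most `κ / √(1 + κ²)`. -/
theorem sqn_one_sub_proj_colsL_le {k r m : ℕ} {Q : Matrix (Fin (k + r)) (Fin m) ℂ}
    (hQ : Qᴴ * Q = 1) {Z : Matrix (Fin (k + r)) (Fin (k + r)) ℂ} (hZ : Zᴴ * Z = 1)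
    {w : Fin k → ℂ} {y : Fin (k + r) → ℂ} (hyw : ∀ i, y (Fin.castAdd r i) = w i) {κ : ℝ}
    (hκ : sqn (fun i => y (Fin.natAdd k i)) ≤ κ ^ 2 * sqn w) {g : Fin m → ℂ}
    (hg : Z *ᵥ y = Q *ᵥ g) :
    sqn (((1 - Q * Qᴴ) * colsL Z) *ᵥ w) ≤ (κ / √(1 + κ ^ 2)) ^ 2 * sqn w := by
  rw [div_pow, Real.sq_sqrt (by positivity), ← mulVec_mulVec, colsL_mulVec]
  set z := sqn fun i => y (Fin.natAdd k i) with hz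
  set a := sqn w with ha
  have hz0 : 0 ≤ z := sqn_nonneg _
  rcases (sqn_nonneg w).eq_or_lt with h0 | hpos
  · have hw : w = 0 := by
      funext i
      have := (Finset.sum_eq_zero_iff_of_nonneg fun i _ => sq_nonneg ‖w i‖).mp h0.symm i
        (Finset.mem_univ i)
      simpa using this
    have h1 : Fin.append w (0 : Fin r → ℂ) = 0 := by
      rw [hw]; funext i; refine Fin.addCases (fun i => ?_) (fun i => ?_) i <;> simp
    rw [h1, ha, ← h0]
    simp [sqn]
  · set α := a / (a + z) with hα
    have hker : (1 - Q * Qᴴ) *ᵥ (Z *ᵥ y) = 0 := by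
      rw [hg, mulVec_mulVec, Matrix.sub_mul, Matrix.mul_assoc, hQ]
      simp
    have h1 : (1 - Q * Qᴴ) *ᵥ (Z *ᵥ Fin.append w 0) =
        (1 - Q * Qᴴ) *ᵥ (Z *ᵥ (Fin.append w 0 + (-α) • y)) := by
      rw [mulVec_add, mulVec_add, mulVec_smul, mulVec_smul, hker]
      simp
    have h2 : sqn (Fin.append w (0 : Fin r → ℂ) + (-α) • y) = (1 - α) ^ 2 * a + α ^ 2 * z := by
      rw [sqn_append]
      simp only [Pi.add_apply, Pi.smul_apply, Fin.append_left, Fin.append_right, hyw,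
        Pi.zero_apply, zero_add]
      rw [hz, ha, sqn, sqn, sqn, sqn, Finset.mul_sum, Finset.mul_sum]
      congr 1 <;> refine Finset.sum_congr rfl fun i _ => ?_
      · rw [show w i + -α • w i = ((1 - α : ℝ) : ℂ) * w i by simp; ring, norm_mul, mul_pow,
          Complex.norm_real, Real.norm_eq_abs, sq_abs]
      · rw [norm_smul, mul_pow, Real.norm_eq_abs, sq_abs, neg_sq]
    rw [h1]
    refine (sqn_one_sub_proj_mulVec_le hQ _).trans ?_
    rw [sqn_mulVec hZ, h2]
    have h3 : (1 - α) ^ 2 * a + α ^ 2 * z = a * z / (a + z) := by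
      have hpos' : 0 < a := hpos
      have hne : a + z ≠ 0 := by positivity
      rw [hα]
      field_simp
      ring
    rw [h3, div_mul_eq_mul_div, div_le_div_iff₀ (by positivity) (by positivity)]
    nlinarith

theorem diagRect_mulVec (σ : ℕ → ℝ) (a b : ℕ) (c : Fin b → ℂ) (i : Fin a) :
    (diagRect σ 0 a b *ᵥ c) i = if h : (i : ℕ) < b then (σ i : ℂ) * c ⟨i, h⟩ else 0 := by
  simp only [diagRect, mulVec, dotProduct, of_apply, zero_add, ite_mul, zero_mul]
  split_ifs with h
  · rw [Finset.sum_eq_single ⟨i, h⟩]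
    · simp
    · intro j _ hj
      rw [if_neg]
      exact fun h' => hj (Fin.ext h'.symm)
    · simp
  · refine Finset.sum_eq_zero fun j _ => if_neg fun h' => h ?_
    rw [h']
    exact j.2

theorem diagRect_conjTranspose (σ : ℕ → ℝ) (a b : ℕ) :
    (diagRect σ 0 a b)ᴴ = diagRect σ 0 b a := by
  ext i j
  simp only [diagRect, conjTranspose_apply, of_apply, zero_add]
  by_cases h : (j : ℕ) = i
  · rw [if_pos h, if_pos h.symm, h, Complex.star_def, Complex.conj_ofReal]
  · rw [if_neg h, if_neg (Ne.symm h), star_zero]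

theorem diagRect_power_mulVec (σ : ℕ → ℝ) (a b q : ℕ) (c : Fin b → ℂ) (i : Fin a) :
    (((diagRect σ 0 a b * (diagRect σ 0 a b)ᴴ) ^ q * diagRect σ 0 a b) *ᵥ c) i =
      if h : (i : ℕ) < b then ((σ i ^ (2 * q + 1) : ℝ) : ℂ) * c ⟨i, h⟩ else 0 := by
  rw [diagRect_conjTranspose]
  induction q generalizing i with
  | zero => simp [diagRect_mulVec]
  | succ q ih =>
    rw [pow_succ', Matrix.mul_assoc, Matrix.mul_assoc, ← mulVec_mulVec, ← mulVec_mulVec,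
      diagRect_mulVec]
    split_ifs with h
    · rw [diagRect_mulVec, dif_pos i.2, ih, dif_pos h]
      push_cast
      ring
    · rfl

theorem power_mul_eq {m n q : ℕ} {A D : Matrix (Fin m) (Fin n) ℂ} {U : Matrix (Fin m) (Fin m) ℂ}
    {V : Matrix (Fin n) (Fin n) ℂ} (hU : Uᴴ * U = 1) (hV : Vᴴ * V = 1) (hA : A = U * D * Vᴴ) :
    (A * Aᴴ) ^ q * A = U * ((D * Dᴴ) ^ q * D) * Vᴴ := by
  have hAA : A * Aᴴ = U * (D * Dᴴ) * Uᴴ := by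
    rw [hA, conjTranspose_mul, conjTranspose_mul, conjTranspose_conjTranspose]
    calc U * D * Vᴴ * (V * (Dᴴ * Uᴴ)) = U * D * (Vᴴ * V) * (Dᴴ * Uᴴ) := by
          simp only [Matrix.mul_assoc]
      _ = _ := by rw [hV, Matrix.mul_one]; simp only [Matrix.mul_assoc]
  induction q with
  | zero => simp [hA]
  | succ q ih =>
    rw [pow_succ', Matrix.mul_assoc, ih, hAA, pow_succ']
    calc U * (D * Dᴴ) * Uᴴ * (U * ((D * Dᴴ) ^ q * D) * Vᴴ)
        = U * (D * Dᴴ) * (Uᴴ * U) * ((D * Dᴴ) ^ q * D * Vᴴ) := by simp only [Matrix.mul_assoc]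
      _ = _ := by rw [hU, Matrix.mul_one]; simp only [Matrix.mul_assoc]

theorem sum_fin_dite_le {a b : ℕ} {g : Fin b → ℝ} (hg : ∀ i, 0 ≤ g i) :
    ∑ i : Fin a, (if h : (i : ℕ) < b then g ⟨i, h⟩ else 0) ≤ ∑ i, g i := by
  set G : ℕ → ℝ := fun i => if h : i < b then g ⟨i, h⟩ else 0 with hG
  have hG0 : ∀ i, 0 ≤ G i := fun i => by
    simp only [hG]
    split_ifs with h
    exacts [hg _, le_rfl]
  have h2 : ∑ i, g i = ∑ i ∈ Finset.range b, G i := by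
    rw [← Fin.sum_univ_eq_sum_range]
    exact Finset.sum_congr rfl fun i _ => by simp [hG]
  rw [h2, Fin.sum_univ_eq_sum_range G a]
  rcases le_total a b with h | h
  · exact Finset.sum_le_sum_of_subset_of_nonneg (Finset.range_mono h) fun i _ _ => hG0 i
  · refine (Finset.sum_subset (Finset.range_mono h) fun i _ hi => ?_).ge
    simp only [hG]
    rw [dif_neg (by simpa using hi)]

/-- Scaling coordinates by powers of a decreasing sequence and truncating shrinks the tail. -/
theorem sqn_tail_le {k r n₂ s : ℕ} {σ : ℕ → ℝ} (hσ0 : ∀ i, 0 ≤ σ i)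
    (hσm : ∀ i j, i ≤ j → σ j ≤ σ i) {c : Fin (k + n₂) → ℂ} {y : Fin (k + r) → ℂ}
    (hy : ∀ i, ‖y i‖ ≤ if h : (i : ℕ) < k + n₂ then σ i ^ s * ‖c ⟨i, h⟩‖ else 0) :
    sqn (fun i => y (Fin.natAdd k i)) ≤ (σ k ^ s) ^ 2 * sqn (fun i => c (Fin.natAdd k i)) := by
  rw [sqn, sqn, Finset.mul_sum]
  refine le_trans (Finset.sum_le_sum fun i _ => ?_)
    (sum_fin_dite_le (g := fun i => (σ k ^ s) ^ 2 * ‖c (Fin.natAdd k i)‖ ^ 2)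
      fun i => by positivity)
  have h := hy (Fin.natAdd k i)
  by_cases hi : (i : ℕ) < n₂
  · rw [dif_pos (by simpa using hi)] at h
    rw [dif_pos hi, ← mul_pow]
    have h1 := pow_le_pow_left₀ (hσ0 _) (hσm k (k + i) (by omega)) s
    refine pow_le_pow_left₀ (norm_nonneg _) (h.trans ?_) 2
    exact mul_le_mul_of_nonneg_right h1 (norm_nonneg _)
  · rw [dif_neg (by simpa using hi)] at h
    rw [dif_neg hi, le_antisymm h (norm_nonneg _)]
    simp

/-- A bound for the sine of the `j`-th canonical angle between the range of `Q` and the span of the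
first `k` columns of `Z`, when the range of `Q` contains sufficiently many vectors that are close
to that span. -/
theorem sval_one_sub_proj_colsL_le {k r m s : ℕ} {Q : Matrix (Fin (k + r)) (Fin m) ℂ}
    (hQ : Qᴴ * Q = 1) {Z : Matrix (Fin (k + r)) (Fin (k + r)) ℂ} (hZ : Zᴴ * Z = 1) {σ : ℕ → ℝ}
    (hσ0 : ∀ i, 0 ≤ σ i) (hσm : ∀ i j, i ≤ j → σ j ≤ σ i) (hrank : 0 < σ (k - 1)) {τ : ℝ}
    (hτ : 0 ≤ τ)
    (h : ∀ x : Fin k → ℂ, ∃ (y : Fin (k + r) → ℂ) (g : Fin m → ℂ), Z *ᵥ y = Q *ᵥ g ∧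
      (∀ i : Fin k, y (Fin.castAdd r i) = ((σ i ^ s : ℝ) : ℂ) * x i) ∧
      sqn (fun i => y (Fin.natAdd k i)) ≤ (σ k ^ s) ^ 2 * (τ ^ 2 * sqn x)) (j : Fin k) :
    sval ((1 - Q * Qᴴ) * colsL Z) (k - 1 - j) ≤
      (σ k / σ j) ^ s * τ / √(1 + (σ k / σ j) ^ (2 * s) * τ ^ 2) := by
  have hpos : ∀ i : Fin k, 0 < σ i := fun i => hrank.trans_le (hσm _ _ (by omega))
  have hj := hpos j
  have hk0 := hσ0 k
  rw [show (σ k / σ j) ^ (2 * s) * τ ^ 2 = ((σ k / σ j) ^ s * τ) ^ 2 by ring]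
  refine sval_le_of_sqn_mulVec_le (by positivity) j fun w hw => ?_
  obtain ⟨y, g, hyg, hyx, htail⟩ := h fun i => w i / ((σ i ^ s : ℝ) : ℂ)
  refine sqn_one_sub_proj_colsL_le hQ hZ (fun i => ?_) (htail.trans ?_) hyg
  · rw [hyx]
    have : ((σ i ^ s : ℝ) : ℂ) ≠ 0 := by
      have := hpos i
      exact_mod_cast (by positivity : (σ i ^ s : ℝ) ≠ 0)
    field_simp
  · have hx : sqn (fun i => w i / ((σ i ^ s : ℝ) : ℂ)) ≤ sqn w / (σ j ^ s) ^ 2 := by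
      rw [sqn, sqn, Finset.sum_div]
      refine Finset.sum_le_sum fun i _ => ?_
      by_cases hi : j < i
      · rw [hw i hi]; simp
      · have h1 := pow_le_pow_left₀ hj.le (hσm i j (not_lt.mp hi)) s
        have h2 := hpos i
        rw [norm_div, Complex.norm_real, Real.norm_of_nonneg (by positivity), div_pow]
        gcongr
    calc (σ k ^ s) ^ 2 * (τ ^ 2 * sqn fun i => w i / ((σ i ^ s : ℝ) : ℂ))
        ≤ (σ k ^ s) ^ 2 * (τ ^ 2 * (sqn w / (σ j ^ s) ^ 2)) := by gcongr
      _ = _ := by rw [div_pow]; field_simp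

/-- The deterministic part: the angle bounds hold when the range of the starting guess does not
nearly miss the dominant right singular space. -/
theorem angles_le_of_not_nearMiss {k m₂ n₂ m q : ℕ} {A : Matrix (Fin (k + m₂)) (Fin (k + n₂)) ℂ}
    {U : Matrix (Fin (k + m₂)) (Fin (k + m₂)) ℂ} {V : Matrix (Fin (k + n₂)) (Fin (k + n₂)) ℂ}
    {σ : ℕ → ℝ} (hU : Uᴴ * U = 1) (hV : Vᴴ * V = 1) (hV' : V * Vᴴ = 1)
    (hσ0 : ∀ i, 0 ≤ σ i) (hσm : ∀ i j, i ≤ j → σ j ≤ σ i)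
    (hA : A = U * diagRect σ 0 (k + m₂) (k + n₂) * Vᴴ) (hrank : 0 < σ (k - 1))
    {Q : Matrix (Fin (k + m₂)) (Fin m) ℂ} {R UB : Matrix (Fin m) (Fin m) ℂ}
    {Vh : Matrix (Fin (k + n₂)) (Fin m) ℂ} {D : Matrix (Fin m) (Fin m) ℂ} (hQ : Qᴴ * Q = 1)
    {Ω : Matrix (Fin (k + n₂)) (Fin m) ℝ}
    (hQR : (A * Aᴴ) ^ q * A * Ω.map Complex.ofReal = Q * R) (hUB' : UB * UBᴴ = 1)
    (hVh : Vhᴴ * Vh = 1) (hB : Qᴴ * A = UB * D * Vhᴴ) {τ : ℝ} (hτ : 0 ≤ τ)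
    (hΩ : ¬NearMiss (1 / (1 + τ ^ 2)) (colsL V) Ωᵀ) (j : Fin k) :
    sval ((1 - Q * UB * (Q * UB)ᴴ) * colsL U) (k - 1 - j) ≤
        (σ k / σ j) ^ (2 * q + 1) * τ / √(1 + (σ k / σ j) ^ (4 * q + 2) * τ ^ 2) ∧
      sval ((1 - Vh * Vhᴴ) * colsL V) (k - 1 - j) ≤
        (σ k / σ j) ^ (2 * q + 2) * τ / √(1 + (σ k / σ j) ^ (4 * q + 4) * τ ^ 2) := by
  have hVh' : Vᴴᴴ * Vᴴ = 1 := by rw [conjTranspose_conjTranspose, hV']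
  have hΩx : ∀ x : Fin k → ℂ, ∃ (l : Fin m → ℂ) (c : Fin (k + n₂) → ℂ),
      Vᴴ *ᵥ (Ω.map Complex.ofReal *ᵥ l) = c ∧ (∀ i, c (Fin.castAdd n₂ i) = x i) ∧
      sqn (fun i => c (Fin.natAdd k i)) ≤ τ ^ 2 * sqn x := by
    intro x
    obtain ⟨l, hl, hle⟩ := exists_rowComb_of_not_nearMiss (by positivity) hΩ x
    have hrow : rowComb Ωᵀ l = Ω.map Complex.ofReal *ᵥ l := rfl
    rw [hrow] at hl hle
    have hc : ∀ i, (Vᴴ *ᵥ (Ω.map Complex.ofReal *ᵥ l)) (Fin.castAdd n₂ i) = x i :=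
      fun i => congrFun hl i
    refine ⟨l, _, rfl, hc, ?_⟩
    rw [← sqn_mulVec hVh', sqn_append, funext hc, one_div, inv_mul_le_iff₀ (by positivity)] at hle
    linarith
  set S := diagRect σ 0 (k + m₂) (k + n₂) with hS
  have hY : ∀ (l : Fin m → ℂ) (c : Fin (k + n₂) → ℂ), Vᴴ *ᵥ (Ω.map Complex.ofReal *ᵥ l) = c →
      U *ᵥ (((S * Sᴴ) ^ q * S) *ᵥ c) = Q *ᵥ (R *ᵥ l) := by
    rintro l c rfl
    rw [mulVec_mulVec l Q R, ← hQR, power_mul_eq hU hV hA]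
    simp only [mulVec_mulVec, Matrix.mul_assoc]
  constructor
  · have hproj : Q * UB * (Q * UB)ᴴ = Q * Qᴴ := by
      rw [conjTranspose_mul]
      calc Q * UB * (UBᴴ * Qᴴ) = Q * (UB * UBᴴ) * Qᴴ := by simp only [Matrix.mul_assoc]
        _ = _ := by rw [hUB', Matrix.mul_one]
    rw [hproj, show 4 * q + 2 = 2 * (2 * q + 1) by ring]
    refine sval_one_sub_proj_colsL_le hQ hU hσ0 hσm hrank hτ (fun x => ?_) j
    obtain ⟨l, c, hl, hcx, htail⟩ := hΩx x
    refine ⟨_, _, hY l c hl, fun i => ?_, (sqn_tail_le (c := c) hσ0 hσm fun i => ?_).trans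
      (mul_le_mul_of_nonneg_left htail (sq_nonneg _))⟩
    · rw [diagRect_power_mulVec, dif_pos (by simp; omega), ← hcx]
      rfl
    · rw [diagRect_power_mulVec]
      split_ifs with h
      · rw [norm_mul, Complex.norm_real, Real.norm_of_nonneg (pow_nonneg (hσ0 _) _)]
      · simp
  · rw [show 4 * q + 4 = 2 * (2 * q + 2) by ring]
    refine sval_one_sub_proj_colsL_le hVh hV hσ0 hσm hrank hτ (fun x => ?_) j
    obtain ⟨l, c, hl, hcx, htail⟩ := hΩx x
    have hAQ : Aᴴ * Q = Vh * (Dᴴ * UBᴴ) := by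
      have := congrArg conjTranspose hB
      simpa [conjTranspose_mul, Matrix.mul_assoc] using this
    have hrange : V *ᵥ (Sᴴ *ᵥ (((S * Sᴴ) ^ q * S) *ᵥ c)) =
        Vh *ᵥ ((Dᴴ * UBᴴ) *ᵥ (R *ᵥ l)) := by
      rw [mulVec_mulVec (R *ᵥ l) Vh, ← hAQ, ← mulVec_mulVec (R *ᵥ l), ← hY l c hl, hA,
        conjTranspose_mul, conjTranspose_mul, conjTranspose_conjTranspose]
      simp only [mulVec_mulVec, Matrix.mul_assoc]
      rw [← Matrix.mul_assoc Uᴴ U, hU, Matrix.one_mul]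
    have hcoord : ∀ i, (Sᴴ *ᵥ (((S * Sᴴ) ^ q * S) *ᵥ c)) i =
        if (i : ℕ) < k + m₂ then ((σ i ^ (2 * q + 2) : ℝ) : ℂ) * c i else 0 := by
      intro i
      have hSt : ∀ z, (Sᴴ *ᵥ z) i = if h : (i : ℕ) < k + m₂ then (σ i : ℂ) * z ⟨i, h⟩ else 0 := by
        intro z
        rw [hS, diagRect_conjTranspose, diagRect_mulVec]
      rw [hSt]
      split_ifs with h
      · rw [diagRect_power_mulVec, dif_pos i.2]
        push_cast
        ring
      · rfl
    refine ⟨_, _, hrange, fun i => ?_, (sqn_tail_le (c := c) hσ0 hσm fun i => ?_).trans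
      (mul_le_mul_of_nonneg_left htail (sq_nonneg _))⟩
    · rw [hcoord, if_pos (by simp; omega), ← hcx]
      rfl
    · rw [hcoord, dif_pos i.2]
      split_ifs with h
      · rw [norm_mul, Complex.norm_real, Real.norm_of_nonneg (pow_nonneg (hσ0 _) _)]
      · rw [norm_zero]
        exact mul_nonneg (pow_nonneg (hσ0 _) _) (norm_nonneg _)

theorem map_uncurry_swap_gaussMat (m n : ℕ) :
    (gaussMat m n).map (fun (H : Fin m → Fin n → ℝ) (ij : Fin n × Fin m) => H ij.2 ij.1) =
      Measure.pi fun _ => gaussianReal 0 1 := by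
  have hmeas : Measurable fun (H : Fin m → Fin n → ℝ) (ij : Fin n × Fin m) => H ij.2 ij.1 := by
    fun_prop
  refine (Measure.pi_eq fun s hs => ?_).symm
  rw [Measure.map_apply hmeas (.univ_pi hs)]
  have h : (fun (H : Fin m → Fin n → ℝ) (ij : Fin n × Fin m) => H ij.2 ij.1) ⁻¹' Set.univ.pi s =
      Set.univ.pi fun j => Set.univ.pi fun i => s (i, j) := by
    ext H
    simp only [Set.mem_preimage, Set.mem_univ_pi, Prod.forall]
    exact forall_comm
  rw [h, gaussMat, Measure.pi_pi]
  simp only [stdG, Measure.pi_pi]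
  rw [Fintype.prod_prod_type_right]

/-- The transpose of a matrix with independent standard Gaussian entries has law `gaussMat`. -/
theorem map_swap_eq_gaussMat {m n : ℕ} {Ωs : Type} [MeasureSpace Ωs]
    [IsProbabilityMeasure (volume : Measure Ωs)] {W : Ωs → Matrix (Fin n) (Fin m) ℝ}
    (hmeas : ∀ i j, Measurable fun ω => W ω i j)
    (hdist : ∀ i j, Measure.map (fun ω => W ω i j) volume = gaussianReal 0 1)
    (hindep : iIndepFun (fun (ij : Fin n × Fin m) ω => W ω ij.1 ij.2) volume) :
    (volume : Measure Ωs).map (fun ω (j : Fin m) (i : Fin n) => W ω i j) = gaussMat m n := by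
  have h1 := hindep.map_fun_eq_pi_map fun ij : Fin n × Fin m => (hmeas ij.1 ij.2).aemeasurable
  simp only [hdist] at h1
  rw [← map_uncurry_swap_gaussMat] at h1
  have hΨ : Measurable fun (G : Fin n × Fin m → ℝ) (j : Fin m) (i : Fin n) => G (i, j) := by
    fun_prop
  have h2 := congrArg (Measure.map
    fun (G : Fin n × Fin m → ℝ) (j : Fin m) (i : Fin n) => G (i, j)) h1
  rw [Measure.map_map hΨ (measurable_pi_lambda _ fun ij => hmeas ij.1 ij.2),
    Measure.map_map hΨ (by fun_prop)] at h2
  exact h2.trans Measure.map_id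

theorem card_le_of_conjTranspose_mul_self {a b : ℕ} {Q : Matrix (Fin a) (Fin b) ℂ}
    (hQ : Qᴴ * Q = 1) : b ≤ a := by
  have h := rank_mul_le_right Qᴴ Q
  rw [hQ, rank_one, Fintype.card_fin] at h
  exact h.trans (by simpa using Q.rank_le_card_height)

theorem colsL_conjTranspose_mul_self {k r : ℕ} {V : Matrix (Fin (k + r)) (Fin (k + r)) ℂ}
    (hV : Vᴴ * V = 1) : (colsL V)ᴴ * colsL V = 1 := by
  have h : (colsL V)ᴴ * colsL V = (Vᴴ * V).submatrix (Fin.castAdd r) (Fin.castAdd r) := by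
    ext i j
    simp [colsL, Matrix.mul_apply]
  rw [h, hV, submatrix_one _ (Fin.castAdd_injective _ _)]

/-- Theorem 3.7 (tail bounds) for a standard Gaussian starting guess. -/
theorem canonical_angles_gaussian_tail
    {k m₂ n₂ ρ : ℕ} (q : ℕ) (hk : 1 ≤ k) (hρ : 2 ≤ ρ)
    (A : Matrix (Fin (k + m₂)) (Fin (k + n₂)) ℂ)
    (U : Matrix (Fin (k + m₂)) (Fin (k + m₂)) ℂ)
    (V : Matrix (Fin (k + n₂)) (Fin (k + n₂)) ℂ)
    (σ : ℕ → ℝ)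
    (hU : Uᴴ * U = 1) (hU' : U * Uᴴ = 1)
    (hV : Vᴴ * V = 1) (hV' : V * Vᴴ = 1)
    (hσ0 : ∀ i, 0 ≤ σ i) (hσm : ∀ i j, i ≤ j → σ j ≤ σ i)
    (hA : A = U * diagRect σ 0 (k + m₂) (k + n₂) * Vᴴ)
    (hrank : 0 < σ (k - 1)) (hgap : σ k < σ (k - 1))
    {Ωs : Type} [MeasureTheory.MeasureSpace Ωs]
    [MeasureTheory.IsProbabilityMeasure (MeasureTheory.volume : MeasureTheory.Measure Ωs)]
    (W : Ωs → Matrix (Fin (k + n₂)) (Fin (k + ρ)) ℝ)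
    (hmeas : ∀ i j, Measurable fun ω => W ω i j)
    (hdist : ∀ i j, MeasureTheory.Measure.map (fun ω => W ω i j) MeasureTheory.volume =
      ProbabilityTheory.gaussianReal 0 1)
    (hindep : ProbabilityTheory.iIndepFun
      (fun (ij : Fin (k + n₂) × Fin (k + ρ)) ω => W ω ij.1 ij.2) MeasureTheory.volume)
    (Q : Ωs → Matrix (Fin (k + m₂)) (Fin (k + ρ)) ℂ)
    (R : Ωs → Matrix (Fin (k + ρ)) (Fin (k + ρ)) ℂ)
    (hQ : ∀ ω, (Q ω)ᴴ * Q ω = 1) (hR : ∀ ω, (R ω).BlockTriangular id)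
    (hQR : ∀ ω, (A * Aᴴ) ^ q * A * (W ω).map (fun x => (x : ℂ)) = Q ω * R ω)
    (UB : Ωs → Matrix (Fin (k + ρ)) (Fin (k + ρ)) ℂ)
    (Vh : Ωs → Matrix (Fin (k + n₂)) (Fin (k + ρ)) ℂ)
    (σh : Ωs → ℕ → ℝ)
    (hUB : ∀ ω, (UB ω)ᴴ * UB ω = 1) (hUB' : ∀ ω, UB ω * (UB ω)ᴴ = 1)
    (hVh : ∀ ω, (Vh ω)ᴴ * Vh ω = 1)
    (hσh0 : ∀ ω i, 0 ≤ σh ω i) (hσhm : ∀ ω i j, i ≤ j → σh ω j ≤ σh ω i)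
    (hB : ∀ ω, (Q ω)ᴴ * A = UB ω * diagRect (σh ω) 0 (k + ρ) (k + ρ) * (Vh ω)ᴴ)
    (δ : ℝ) (hδ0 : 0 < δ) (hδ1 : δ < 1) :
    MeasureTheory.volume
        {ω : Ωs | ∀ j : Fin k,
          sval ((1 - Q ω * UB ω * (Q ω * UB ω)ᴴ) * colsL U) (k - 1 - (j : ℕ)) ≤
              (σ k / σ (j : ℕ)) ^ (2 * q + 1) * Cd k ρ n₂ δ /
                Real.sqrt (1 + (σ k / σ (j : ℕ)) ^ (4 * q + 2) * (Cd k ρ n₂ δ) ^ 2) ∧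
          sval ((1 - Vh ω * (Vh ω)ᴴ) * colsL V) (k - 1 - (j : ℕ)) ≤
              (σ k / σ (j : ℕ)) ^ (2 * q + 2) * Cd k ρ n₂ δ /
                Real.sqrt (1 + (σ k / σ (j : ℕ)) ^ (4 * q + 4) * (Cd k ρ n₂ δ) ^ 2)} ≥ ENNReal.ofReal (1 - δ) := by
  have hC : 0 ≤ Cd k ρ n₂ δ := by
    have : 0 < 2 / δ := by positivity
    unfold Cd
    positivity
  obtain ⟨ω₀⟩ : Nonempty Ωs := nonempty_of_isProbabilityMeasure (volume : Measure Ωs)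
  obtain ⟨X, hX, hXδ⟩ := exists_scale_exp_mul_tailT_le (n₂ := n₂) hk (by omega : 1 ≤ ρ) hδ0 hδ1
  set η := 1 / (1 + Cd k ρ n₂ δ ^ 2) with hη
  set S : Set (Fin (k + ρ) → Fin (k + n₂) → ℝ) :=
    {H | NearMiss η (colsL V) (of H : Matrix (Fin (k + ρ)) (Fin (k + n₂)) ℝ)} with hS
  have hSc : IsClosed S := isClosed_nearMiss η (colsL V)
  have hSm : MeasurableSet S := hSc.measurableSet
  have hWm : Measurable fun ω (j : Fin (k + ρ)) (i : Fin (k + n₂)) => W ω i j :=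
    measurable_pi_lambda _ fun j => measurable_pi_lambda _ fun i => hmeas i j
  have hbad : (volume : Measure Ωs) ((fun ω j i => W ω i j) ⁻¹' S) ≤ ENNReal.ofReal δ := by
    rw [← Measure.map_apply hWm hSm, map_swap_eq_gaussMat hmeas hdist hindep]
    exact (gaussMat_nearMiss_le hk (card_le_of_conjTranspose_mul_self (hVh ω₀))
      (colsL_conjTranspose_mul_self hV) hX (by positivity)).trans (ENNReal.ofReal_le_ofReal hXδ)
  calc ENNReal.ofReal (1 - δ) = 1 - ENNReal.ofReal δ := by
        rw [ENNReal.ofReal_sub _ hδ0.le, ENNReal.ofReal_one]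
    _ ≤ 1 - (volume : Measure Ωs) ((fun ω j i => W ω i j) ⁻¹' S) := tsub_le_tsub_left hbad 1
    _ = volume ((fun ω j i => W ω i j) ⁻¹' S)ᶜ := (prob_compl_eq_one_sub (hWm hSm)).symm
    _ ≤ _ := measure_mono fun ω hω j =>
      angles_le_of_not_nearMiss hU hV hV' hσ0 hσm hA hrank (hQ ω) (hQR ω) (hUB' ω) (hVh ω) (hB ω)
        hC hω j
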